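/- arXiv:2006.16213 — 3 statements merged into one kernel-verified Lean document; each statement's English description precedes it below -/
import Mathlib

section
/- Let X and Y be non-empty subsets of ℝ, let p be a positive integer, and let K : X × Y → ℝ be a bounded TN_p kernel. Then there exists a sequence (K_l)_{l≥1} of TP_p kernels on X × Y that converges to K locally uniformly on the set of points of the interior of X × Y (in ℝ²) at which K is continuous. Moreover, if X = Y and K is symmetric, then the kernels K_l may be chosen to be symmetric. -/
/-- A kernel is `TN_p` if all determinants of size at most `p` drawn from
increasing tuples are non-negative. -/
def IsTNKernelOfOrder (p : ℕ) {X Y : Type*} [LinearOrder X] [LinearOrder Y]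
    (K : X → Y → ℝ) : Prop :=
  ∀ n : ℕ, n ≤ p → ∀ (x : Fin n → X) (y : Fin n → Y), StrictMono x → StrictMono y →
    0 ≤ (Matrix.of fun i j : Fin n => K (x i) (y j)).det

/-- A kernel is `TP_p` if all determinants of size at most `p` drawn from
increasing tuples are positive. -/
def IsTPKernelOfOrder (p : ℕ) {X Y : Type*} [LinearOrder X] [LinearOrder Y]
    (K : X → Y → ℝ) : Prop :=
  ∀ n : ℕ, n ≤ p → ∀ (x : Fin n → X) (y : Fin n → Y), StrictMono x → StrictMono y →
    0 < (Matrix.of fun i j : Fin n => K (x i) (y j)).det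

open Matrix in
lemma cb_aux {n : ℕ} {ι : Type*} [Fintype ι] (P : Fin n → ι → ℝ) (Q : ι → Fin n → ℝ) :
    (Matrix.of fun i j => ∑ a, P i a * Q a j).det =
      ∑ f : Fin n → ι, (∏ i, P i (f i)) * (Matrix.of fun i j => Q (f i) j).det := by
  classical
  have h := (Matrix.detRowAlternating (R := ℝ) (n := Fin n)).toMultilinearMap.map_sum
    (fun i (a : ι) => P i a • Q a)
  have e : (Matrix.of fun i j => ∑ a, P i a * Q a j) = fun i => ∑ a, P i a • Q a := by
    ext i j
    simp
  rw [e]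
  refine h.trans (Finset.sum_congr rfl fun f _ => ?_)
  have h2 := (Matrix.detRowAlternating (R := ℝ) (n := Fin n)).toMultilinearMap.map_smul_univ
    (fun i => P i (f i)) (fun i => Q (f i))
  exact h2

lemma cauchy_binet {n : ℕ} {ι : Type*} [Fintype ι] (P : Fin n → ι → ℝ) (Q : ι → Fin n → ℝ) :
    (Fintype.card (Equiv.Perm (Fin n)) : ℝ) * (Matrix.of fun i j => ∑ a, P i a * Q a j).det =
      ∑ f : Fin n → ι, (Matrix.of fun i j => P i (f j)).det *
        (Matrix.of fun i j => Q (f i) j).det := by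
  classical
  have h1 : ∀ f : Fin n → ι, (Matrix.of fun i j => P i (f j)).det *
        (Matrix.of fun i j => Q (f i) j).det =
      ∑ σ : Equiv.Perm (Fin n), (∏ i, P i (f (σ i))) *
        (Matrix.of fun i j => Q (f (σ i)) j).det := by
    intro f
    rw [← Matrix.det_transpose, Matrix.det_apply', Finset.sum_mul]
    refine Finset.sum_congr rfl fun σ _ => ?_
    have := Matrix.det_permute σ (Matrix.of fun i j => Q (f i) j)
    have e : (Matrix.of fun i j => Q (f (σ i)) j) =
      (Matrix.of fun i j => Q (f i) j).submatrix σ id := by ext; simp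
    rw [e, this]
    simp
    ring
  simp_rw [h1]
  rw [Finset.sum_comm]
  have h2 : ∀ σ : Equiv.Perm (Fin n), ∑ f : Fin n → ι, (∏ i, P i (f (σ i))) *
        (Matrix.of fun i j => Q (f (σ i)) j).det =
        (Matrix.of fun i j => ∑ a, P i a * Q a j).det := by
    intro σ
    rw [cb_aux]
    exact Fintype.sum_equiv (Equiv.arrowCongr σ.symm (Equiv.refl ι)) _ _ (fun f => by simp)
  simp_rw [h2]
  simp

lemma cb_term_nonneg {n : ℕ} {ι : Type*} [LinearOrder ι]
    (P : Fin n → ι → ℝ) (Q : ι → Fin n → ℝ)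
    (hP : ∀ f : Fin n → ι, StrictMono f → 0 ≤ (Matrix.of fun i j => P i (f j)).det)
    (hQ : ∀ f : Fin n → ι, StrictMono f → 0 ≤ (Matrix.of fun i j => Q (f i) j).det)
    (f : Fin n → ι) : 0 ≤ (Matrix.of fun i j => P i (f j)).det *
        (Matrix.of fun i j => Q (f i) j).det := by
  by_cases hf : Function.Injective f
  · set σ := Tuple.sort f
    have hs : StrictMono (f ∘ σ) :=
      (Tuple.monotone_sort f).strictMono_of_injective (hf.comp σ.injective)
    have h1 := hP _ hs
    have h2 := hQ _ hs
    have e1 : (Matrix.of fun i j => P i ((f ∘ σ) j)) =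
      (Matrix.of fun i j => P i (f j)).submatrix id σ := by ext; simp
    have e2 : (Matrix.of fun i j => Q ((f ∘ σ) i) j) =
      (Matrix.of fun i j => Q (f i) j).submatrix σ id := by ext; simp
    rw [e1, Matrix.det_permute'] at h1
    rw [e2, Matrix.det_permute] at h2
    have h3 := mul_nonneg h1 h2
    have h4 : ((Equiv.Perm.sign σ : ℤ) : ℝ) * ((Equiv.Perm.sign σ : ℤ) : ℝ) = 1 := by
      rcases Int.units_eq_one_or (Equiv.Perm.sign σ) with h | h <;> simp [h]
    calc (0:ℝ) ≤ _ := h3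
      _ = (((Equiv.Perm.sign σ : ℤ) : ℝ) * ((Equiv.Perm.sign σ : ℤ) : ℝ)) *
        ((Matrix.of fun i j => P i (f j)).det * (Matrix.of fun i j => Q (f i) j).det) := by ring
      _ = _ := by rw [h4, one_mul]
  · rw [Function.Injective] at hf
    push Not at hf
    obtain ⟨i, j, hij, hne⟩ := hf
    have : (Matrix.of fun i j => Q (f i) j).det = 0 :=
      Matrix.det_zero_of_row_eq hne (by ext k; simp [hij])
    simp [this]

lemma cb_nonneg {n : ℕ} {ι : Type*} [Fintype ι] [LinearOrder ι]
    (P : Fin n → ι → ℝ) (Q : ι → Fin n → ℝ)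
    (hP : ∀ f : Fin n → ι, StrictMono f → 0 ≤ (Matrix.of fun i j => P i (f j)).det)
    (hQ : ∀ f : Fin n → ι, StrictMono f → 0 ≤ (Matrix.of fun i j => Q (f i) j).det) :
    0 ≤ (Matrix.of fun i j => ∑ a, P i a * Q a j).det := by
  have h := cauchy_binet P Q
  have hc : (0:ℝ) < Fintype.card (Equiv.Perm (Fin n)) := by
    exact_mod_cast Fintype.card_pos
  have : 0 ≤ ∑ f : Fin n → ι, (Matrix.of fun i j => P i (f j)).det *
        (Matrix.of fun i j => Q (f i) j).det :=
    Finset.sum_nonneg fun f _ => cb_term_nonneg P Q hP hQ f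
  rw [← h] at this
  exact nonneg_of_mul_nonneg_right this hc

lemma cb_pos {n : ℕ} {ι : Type*} [Fintype ι] [LinearOrder ι]
    (P : Fin n → ι → ℝ) (Q : ι → Fin n → ℝ)
    (hP : ∀ f : Fin n → ι, StrictMono f → 0 ≤ (Matrix.of fun i j => P i (f j)).det)
    (hQ : ∀ f : Fin n → ι, StrictMono f → 0 ≤ (Matrix.of fun i j => Q (f i) j).det)
    (f : Fin n → ι) (hPf : 0 < (Matrix.of fun i j => P i (f j)).det)
    (hQf : 0 < (Matrix.of fun i j => Q (f i) j).det) :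
    0 < (Matrix.of fun i j => ∑ a, P i a * Q a j).det := by
  have h := cauchy_binet P Q
  have hc : (0:ℝ) < Fintype.card (Equiv.Perm (Fin n)) := by
    exact_mod_cast Fintype.card_pos
  have : 0 < ∑ f : Fin n → ι, (Matrix.of fun i j => P i (f j)).det *
        (Matrix.of fun i j => Q (f i) j).det :=
    Finset.sum_pos' (fun f _ => cb_term_nonneg P Q hP hQ f)
      ⟨f, Finset.mem_univ _, mul_pos hPf hQf⟩
  rw [← h] at this
  exact pos_of_mul_pos_right this hc.le

/-- block-diagonal extension -/
def extK (p : ℕ) {α β : Type*} (A : α → β → ℝ) : (α ⊕ₗ Fin p) → (β ⊕ₗ Fin p) → ℝ :=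
  fun a b => match ofLex a, ofLex b with
    | Sum.inl a, Sum.inl b => A a b
    | Sum.inr i, Sum.inr j => if i = j then 1 else 0
    | _, _ => 0

lemma extK_tn (p : ℕ) {α β : Type*} [LinearOrder α] [LinearOrder β] (A : α → β → ℝ)
    (hA : IsTNKernelOfOrder p A) : IsTNKernelOfOrder p (extK p A) := by
  intro n
  induction n with
  | zero => intro _ x y _ _; simp
  | succ n ih =>
    intro hn x y hx hy
    have hxl : ∀ i, x i ≤ x (Fin.last n) := fun i => hx.monotone (Fin.le_last i)
    have hyl : ∀ i, y i ≤ y (Fin.last n) := fun i => hy.monotone (Fin.le_last i)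
    rcases hxe : x (Fin.last n) with (a | c) <;> rcases hye : y (Fin.last n) with (b | d)
    · have h1 : ∀ i, ∃ a', x i = Sum.inlₗ a' := by
        intro i
        have := hxl i
        rw [hxe] at this
        rcases hi : x i with (a' | c')
        · exact ⟨a', rfl⟩
        · rw [hi] at this; exact absurd this (Sum.Lex.not_inr_le_inl)
      have h2 : ∀ i, ∃ a', y i = Sum.inlₗ a' := by
        intro i
        have := hyl i
        rw [hye] at this
        rcases hi : y i with (a' | c')
        · exact ⟨a', rfl⟩
        · rw [hi] at this; exact absurd this (Sum.Lex.not_inr_le_inl)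
      choose x' hx' using h1
      choose y' hy' using h2
      have := hA (n+1) hn x' y' (fun i j hij => by
        have := hx hij; rw [hx', hx'] at this; exact Sum.Lex.inl_lt_inl_iff.1 this)
        (fun i j hij => by
        have := hy hij; rw [hy', hy'] at this; exact Sum.Lex.inl_lt_inl_iff.1 this)
      simpa [hx', hy', extK] using this
    · rw [Matrix.det_eq_zero_of_column_eq_zero (Fin.last n)]
      intro i
      have := hxl i
      rw [hxe] at this
      rcases hi : x i with (a' | c')
      · simp only [Matrix.of_apply, hye, hi]; rfl
      · rw [hi] at this; exact absurd this (Sum.Lex.not_inr_le_inl)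
    · rw [Matrix.det_eq_zero_of_row_eq_zero (Fin.last n)]
      intro i
      have := hyl i
      rw [hye] at this
      rcases hi : y i with (a' | c')
      · simp only [Matrix.of_apply, hxe, hi]; rfl
      · rw [hi] at this; exact absurd this (Sum.Lex.not_inr_le_inl)
    · rcases lt_trichotomy c d with hcd | hcd | hcd
      · rw [Matrix.det_eq_zero_of_column_eq_zero (Fin.last n)]
        intro i
        have := hxl i
        rw [hxe] at this
        rcases hi : x i with (a' | c')
        · simp only [Matrix.of_apply, hye, hi]; rfl
        · rw [hi] at this
          have h3 : c' ≤ c := Sum.Lex.inr_le_inr_iff.1 this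
          simp only [Matrix.of_apply, hye, hi]
          exact if_neg (h3.trans_lt hcd).ne
      · subst hcd
        have hrow : ∀ j : Fin n, extK p A (x (Fin.last n)) (y j.castSucc) = 0 := by
          intro j
          have := hy (Fin.castSucc_lt_last j)
          rw [hye] at this
          rcases hi : y j.castSucc with (a' | c')
          · simp only [hxe]; rfl
          · rw [hi] at this
            have h3 : c' < c := Sum.Lex.inr_lt_inr_iff.1 this
            simp only [hxe]
            exact if_neg h3.ne'
        have hone : extK p A (x (Fin.last n)) (y (Fin.last n)) = 1 := by
          rw [hxe, hye]; exact if_pos rfl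
        rw [Matrix.det_succ_row _ (Fin.last n), Fin.sum_univ_castSucc]
        have := ih (by omega) (x ∘ Fin.castSucc) (y ∘ Fin.castSucc)
          (hx.comp Fin.strictMono_castSucc) (hy.comp Fin.strictMono_castSucc)
        simp only [Matrix.of_apply, hrow, hone]
        simp only [mul_zero, zero_mul, Finset.sum_const_zero, zero_add, mul_one]
        rw [Even.neg_one_pow ⟨_, rfl⟩, one_mul]
        convert this using 2
        ext i j
        simp [Matrix.submatrix]
      · rw [Matrix.det_eq_zero_of_row_eq_zero (Fin.last n)]
        intro i
        have := hyl i
        rw [hye] at this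
        rcases hi : y i with (a' | c')
        · simp only [Matrix.of_apply, hxe, hi]; rfl
        · rw [hi] at this
          have h3 : c' ≤ d := Sum.Lex.inr_le_inr_iff.1 this
          simp only [Matrix.of_apply, hxe, hi]
          exact if_neg (h3.trans_lt hcd).ne'

lemma extK_id (p : ℕ) {α β : Type*} (A : α → β → ℝ) (n : ℕ) (h : n ≤ p) :
    0 < (Matrix.of fun i j : Fin n => extK p A (Sum.inrₗ (Fin.castLE h i))
      (Sum.inrₗ (Fin.castLE h j))).det := by
  have : (Matrix.of fun i j : Fin n => extK p A (Sum.inrₗ (Fin.castLE h i))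
      (Sum.inrₗ (Fin.castLE h j))) = 1 := by
    ext i j
    simp [extK, Matrix.one_apply]
  rw [this]; simp

/-- composition -/
lemma comp_tp (p : ℕ) {X Y α β : Type*} [LinearOrder X] [LinearOrder Y] [LinearOrder α]
    [LinearOrder β] [Fintype α] [Fintype β] (A : α → β → ℝ) (hA : IsTNKernelOfOrder p A)
    (P : X → (α ⊕ₗ Fin p) → ℝ) (Q : Y → (β ⊕ₗ Fin p) → ℝ)
    (hP : IsTPKernelOfOrder p P) (hQ : IsTPKernelOfOrder p Q) :
    IsTPKernelOfOrder p (fun x y => ∑ a, P x a * ∑ b, extK p A a b * Q y b) := by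
  intro n hn x y hx hy
  have hQ' : ∀ f : Fin n → (β ⊕ₗ Fin p), StrictMono f →
      0 < (Matrix.of fun i j => Q (y j) (f i)).det := by
    intro f hf
    have := hQ n hn y f hy hf
    rw [← Matrix.det_transpose] at this
    exact this
  have hs : StrictMono fun i : Fin n => (Sum.inrₗ (Fin.castLE hn i) : α ⊕ₗ Fin p) := by
    intro i j hij
    exact Sum.Lex.inr_lt_inr_iff.2 hij
  have hs' : StrictMono fun i : Fin n => (Sum.inrₗ (Fin.castLE hn i) : β ⊕ₗ Fin p) := by
    intro i j hij
    exact Sum.Lex.inr_lt_inr_iff.2 hij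
  refine cb_pos (fun i a => P (x i) a) (fun a j => ∑ b, extK p A a b * Q (y j) b)
    (fun f hf => (hP n hn x f hx hf).le) (fun f hf => ?_)
    (fun i => Sum.inrₗ (Fin.castLE hn i)) (hP n hn x _ hx hs) ?_
  · exact cb_nonneg (fun i b => extK p A (f i) b) (fun b j => Q (y j) b)
      (fun g hg => extK_tn p A hA n hn f g hf hg) (fun g hg => (hQ' g hg).le)
  · exact cb_pos (fun i b => extK p A (Sum.inrₗ (Fin.castLE hn i)) b) (fun b j => Q (y j) b)
      (fun g hg => extK_tn p A hA n hn _ g hs hg) (fun g hg => (hQ' g hg).le)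
      (fun i => Sum.inrₗ (Fin.castLE hn i)) (extK_id p A n hn) (hQ' _ hs')

lemma mvt_det {n : ℕ} (z : Fin n → ℝ) (a b : Fin n → ℝ) (hab : ∀ i, a i < b i)
    (s : Finset (Fin n)) :
    ∃ t : Fin n → ℝ, (∀ i, a i < t i ∧ t i < b i) ∧ ∃ c : ℝ, 0 < c ∧
      (Matrix.of fun i j : Fin n => Real.exp (b i * z j) - Real.exp (a i * z j)).det =
      c * (Matrix.of fun i j : Fin n => if i ∈ s then z j * Real.exp (t i * z j) else
        Real.exp (b i * z j) - Real.exp (a i * z j)).det := by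
  classical
  induction s using Finset.induction_on with
  | empty =>
    refine ⟨fun i => (a i + b i) / 2, fun i => ⟨by linarith [hab i], by linarith [hab i]⟩,
      1, one_pos, by simp⟩
  | insert k s hk ih =>
    obtain ⟨t, ht, c, hc, h⟩ := ih
    set M : Matrix (Fin n) (Fin n) ℝ := Matrix.of fun i j : Fin n =>
      if i ∈ s then z j * Real.exp (t i * z j) else
        Real.exp (b i * z j) - Real.exp (a i * z j) with hM
    set L : (Fin n → ℝ) →ₗ[ℝ] ℝ :=
      (Matrix.detRowAlternating (R := ℝ) (n := Fin n)).toMultilinearMap.toLinearMap M k with hL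
    have hLe : ∀ v, L v = (M.updateRow k v).det := fun v => rfl
    have hder : ∀ u : ℝ, HasDerivAt (fun u : ℝ => L (fun j => Real.exp (u * z j)))
        (L (fun j => z j * Real.exp (u * z j))) u := by
      intro u
      have h1 : HasDerivAt (fun u : ℝ => (fun j => Real.exp (u * z j)))
          (fun j => z j * Real.exp (u * z j)) u := by
        rw [hasDerivAt_pi]
        intro j
        have := ((hasDerivAt_id u).mul_const (z j)).exp
        simpa [mul_comm] using this
      have := (LinearMap.toContinuousLinearMap L).hasFDerivAt.comp_hasDerivAt u h1
      exact this
    obtain ⟨w, hw, hw2⟩ := exists_hasDerivAt_eq_slope _ _ (hab k)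
      (fun u _ => (hder u).continuousAt.continuousWithinAt) (fun u _ => hder u)
    refine ⟨Function.update t k w, ?_, c * (b k - a k), mul_pos hc (sub_pos.2 (hab k)), ?_⟩
    · intro i
      by_cases hi : i = k
      · subst hi; simpa using hw
      · simpa [hi] using ht i
    · rw [h, mul_assoc]
      congr 1
      have e1 : (Matrix.of fun i j : Fin n => if i ∈ insert k s then
          z j * Real.exp (Function.update t k w i * z j) else
          Real.exp (b i * z j) - Real.exp (a i * z j)) =
          M.updateRow k (fun j => z j * Real.exp (w * z j)) := by
        ext i j
        by_cases hi : i = k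
        · subst hi; simp
        · simp [hi, hM]
      have e2 : M = M.updateRow k
          ((fun j => Real.exp (b k * z j)) - (fun j => Real.exp (a k * z j))) := by
        ext i j
        by_cases hi : i = k
        · subst hi; simp [hM, hk]
        · simp [hi]
      rw [e1, ← hLe, hw2, mul_div_cancel₀ _ (sub_pos.2 (hab k)).ne', ← map_sub, hLe, ← e2]

lemma exp_det_pos (n : ℕ) : ∀ (x y : Fin n → ℝ), StrictMono x → StrictMono y →
    0 < (Matrix.of fun i j : Fin n => Real.exp (x i * y j)).det := by
  induction n with
  | zero => intro x y _ _; simp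
  | succ n ih =>
    intro x y hx hy
    set z : Fin n → ℝ := fun j => y j.succ - y 0
    have hz : StrictMono z := fun i j hij => by
      have := hy (Fin.succ_lt_succ_iff.2 hij)
      simp only [z]; linarith
    have hz0 : ∀ j, 0 < z j := fun j => sub_pos.2 (hy (Fin.succ_pos j))
    have e1 : (Matrix.of fun i j : Fin (n+1) => Real.exp (x i * y j)) =
        Matrix.of fun i j : Fin (n+1) => Real.exp (x i * y 0) *
          (Matrix.of fun i j : Fin (n+1) => Real.exp (x i * (y j - y 0))) i j := by
      ext i j
      simp only [Matrix.of_apply, ← Real.exp_add]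
      ring_nf
    rw [e1, Matrix.det_mul_column]
    refine mul_pos (Finset.prod_pos fun _ _ => Real.exp_pos _) ?_
    rw [Matrix.det_eq_of_forall_row_eq_smul_add_pred (B := Matrix.of fun i j : Fin (n+1) =>
      Fin.cases (Real.exp (x 0 * (y j - y 0)))
        (fun i' => Real.exp (x i'.succ * (y j - y 0)) - Real.exp (x i'.castSucc * (y j - y 0))) i)
      (c := fun _ => 1) (by simp) (by simp)]
    rw [Matrix.det_succ_column_zero, Fin.sum_univ_succ]
    simp only [Matrix.of_apply, Fin.cases_zero, Fin.cases_succ, sub_self, mul_zero, zero_mul,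
      Finset.sum_const_zero, add_zero, Real.exp_zero]
    simp only [Fin.val_zero, pow_zero, one_mul]
    obtain ⟨t, ht, c, hc, h⟩ := mvt_det z (fun i => x i.castSucc) (fun i => x i.succ)
      (fun i => hx (Fin.castSucc_lt_succ)) Finset.univ
    have e2 : (Matrix.submatrix (Matrix.of fun i j : Fin (n+1) =>
      (Fin.cases (Real.exp (x 0 * (y j - y 0)))
        (fun i' => Real.exp (x i'.succ * (y j - y 0)) -
          Real.exp (x i'.castSucc * (y j - y 0))) i : ℝ)) (Fin.succAbove 0) Fin.succ) =
       (Matrix.of fun i j : Fin n => Real.exp (x i.succ * z j) - Real.exp (x i.castSucc * z j)) := by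
      ext i j
      simp [z]
    rw [e2, h]
    refine mul_pos hc ?_
    have e3 : (Matrix.of fun i j : Fin n => if i ∈ Finset.univ then z j * Real.exp (t i * z j) else
        Real.exp (x i.succ * z j) - Real.exp (x i.castSucc * z j)) =
        Matrix.of fun i j : Fin n => z j * (Matrix.of fun i j => Real.exp (t i * z j)) i j := by
      ext i j; simp
    rw [e3, Matrix.det_mul_row]
    refine mul_pos (Finset.prod_pos fun j _ => hz0 j) (ih t z ?_ hz)
    intro i j hij
    have h1 := (ht i).2
    have h2 := (ht j).1
    have h3 : x i.succ ≤ x j.castSucc := hx.monotone (by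
      rw [Fin.le_def]; simp; omega)
    linarith

/-- normalised Gaussian weights -/
noncomputable def gw {ι : Type*} [Fintype ι] (N : ℝ) (u : ι → ℝ) (x : ℝ) (a : ι) : ℝ :=
  Real.exp (-N * (x - u a) ^ 2) / ∑ b, Real.exp (-N * (x - u b) ^ 2)

lemma gw_nonneg {ι : Type*} [Fintype ι] (N : ℝ) (u : ι → ℝ) (x : ℝ) (a : ι) : 0 ≤ gw N u x a :=
  div_nonneg (Real.exp_pos _).le (Finset.sum_nonneg fun _ _ => (Real.exp_pos _).le)

lemma gw_den_pos {ι : Type*} [Fintype ι] [Nonempty ι] (N : ℝ) (u : ι → ℝ) (x : ℝ) :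
    0 < ∑ b, Real.exp (-N * (x - u b) ^ 2) :=
  Finset.sum_pos (fun _ _ => Real.exp_pos _) Finset.univ_nonempty

lemma gw_sum {ι : Type*} [Fintype ι] [Nonempty ι] (N : ℝ) (u : ι → ℝ) (x : ℝ) :
    ∑ a, gw N u x a = 1 := by
  unfold gw
  rw [← Finset.sum_div, div_self (gw_den_pos N u x).ne']

lemma gw_tp (p : ℕ) (X : Set ℝ) {ι : Type*} [Fintype ι] [LinearOrder ι] [Nonempty ι] (N : ℝ)
    (hN : 0 < N) (u : ι → ℝ) (hu : StrictMono u) :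
    IsTPKernelOfOrder p (fun (x : X) a => gw N u x a) := by
  intro n _ x y hx hy
  have h := exp_det_pos n (fun i => 2 * N * (x i : ℝ)) (fun j => u (y j))
    (fun i j hij => by
      have : (x i : ℝ) < x j := hx hij
      simp only; gcongr) (hu.comp hy)
  have e : (Matrix.of fun i j : Fin n => gw N u (x i) (y j)) =
      Matrix.of fun i j => (Real.exp (-N * (x i : ℝ)^2) / ∑ b, Real.exp (-N * ((x i : ℝ) - u b) ^ 2)) *
        (Matrix.of fun i j => Real.exp (-N * (u (y j))^2) *
          (Matrix.of fun i j : Fin n => Real.exp (2 * N * (x i : ℝ) * u (y j))) i j) i j := by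
    ext i j
    simp only [Matrix.of_apply, gw]
    rw [div_mul_eq_mul_div, ← Real.exp_add, ← Real.exp_add]
    congr 2
    ring
  rw [e, Matrix.det_mul_column, Matrix.det_mul_row]
  exact mul_pos (Finset.prod_pos fun i _ => div_pos (Real.exp_pos _) (gw_den_pos N u _))
    (mul_pos (Finset.prod_pos fun i _ => Real.exp_pos _) h)

lemma gw_far {ι : Type*} [Fintype ι] (N : ℝ) (hN : 0 < N) (u : ι → ℝ) (x η : ℝ)
    (hη : 0 < η) (a₀ : ι) (h0 : |x - u a₀| ≤ η) (a : ι) (ha : 2 * η ≤ |x - u a|) :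
    gw N u x a ≤ Real.exp (-(3 * η ^ 2) * N) := by
  have hd : Real.exp (-N * η ^ 2) ≤ ∑ b, Real.exp (-N * (x - u b) ^ 2) := by
    refine le_trans ?_ (Finset.single_le_sum (fun b _ => (Real.exp_pos _).le) (Finset.mem_univ a₀))
    apply Real.exp_le_exp.2
    have : (x - u a₀) ^ 2 ≤ η ^ 2 := sq_le_sq' (by linarith [neg_le_of_abs_le h0]) (le_of_abs_le h0)
    nlinarith
  have hn : Real.exp (-N * (x - u a) ^ 2) ≤ Real.exp (-N * (2 * η) ^ 2) := by
    apply Real.exp_le_exp.2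
    have : (2 * η) ^ 2 ≤ (x - u a) ^ 2 := by
      rw [← sq_abs (x - u a)]; gcongr
    nlinarith
  unfold gw
  rw [div_le_iff₀ ((Real.exp_pos _).trans_le hd)]
  refine hn.trans (le_trans ?_ (mul_le_mul_of_nonneg_left hd (Real.exp_pos _).le))
  rw [← Real.exp_add]
  apply Real.exp_le_exp.2
  nlinarith

lemma avg_est {α β : Type*} [Fintype α] [Fintype β] (w : α → ℝ) (w' : β → ℝ)
    (hw : ∀ a, 0 ≤ w a) (hw' : ∀ b, 0 ≤ w' b) (sw : ∑ a, w a = 1) (sw' : ∑ b, w' b = 1)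
    (A : α → β → ℝ) (k ε C δ : ℝ) (hε : 0 ≤ ε) (hC : 0 ≤ C) (hδ : 0 ≤ δ)
    (na : α → Prop) (nb : β → Prop)
    (h1 : ∀ a b, na a → nb b → |A a b - k| ≤ ε) (h2 : ∀ a b, |A a b - k| ≤ C)
    (h3 : ∀ a, ¬ na a → w a ≤ δ) (h4 : ∀ b, ¬ nb b → w' b ≤ δ) :
    |∑ a, w a * ∑ b, A a b * w' b - k| ≤ ε + C * (Fintype.card α * δ + Fintype.card β * δ) := by
  classical
  have e : ∑ a, w a * ∑ b, A a b * w' b - k = ∑ a, ∑ b, w a * w' b * (A a b - k) := by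
    have : ∑ a, ∑ b, w a * w' b * k = k := by
      simp_rw [← Finset.sum_mul, ← Finset.mul_sum, sw', mul_one, sw, one_mul]
    calc _ = ∑ a, w a * ∑ b, A a b * w' b - ∑ a, ∑ b, w a * w' b * k := by rw [this]
      _ = _ := by
        rw [← Finset.sum_sub_distrib]
        refine Finset.sum_congr rfl fun a _ => ?_
        rw [Finset.mul_sum, ← Finset.sum_sub_distrib]
        refine Finset.sum_congr rfl fun b _ => ?_
        ring
  have hb : ∀ a b, |w a * w' b * (A a b - k)| ≤ ε * (w a * w' b) + C * (δ * w' b) +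
      C * (w a * δ) := by
    intro a b
    rw [abs_mul, abs_of_nonneg (mul_nonneg (hw a) (hw' b))]
    have p0 := mul_nonneg (hw a) (hw' b)
    have p1 : 0 ≤ C * (δ * w' b) := mul_nonneg hC (mul_nonneg hδ (hw' b))
    have p2 : 0 ≤ C * (w a * δ) := mul_nonneg hC (mul_nonneg (hw a) hδ)
    have p3 : 0 ≤ ε * (w a * w' b) := mul_nonneg hε p0
    have p4 : w a * w' b * |A a b - k| ≤ C * (w a * w' b) := by
      rw [mul_comm]; exact mul_le_mul_of_nonneg_right (h2 a b) p0
    by_cases ha : na a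
    · by_cases hb : nb b
      · have := mul_le_mul_of_nonneg_right (h1 a b ha hb) p0
        linarith
      · have : C * (w a * w' b) ≤ C * (w a * δ) :=
          mul_le_mul_of_nonneg_left (mul_le_mul_of_nonneg_left (h4 b hb) (hw a)) hC
        linarith
    · have : C * (w a * w' b) ≤ C * (δ * w' b) :=
        mul_le_mul_of_nonneg_left (mul_le_mul_of_nonneg_right (h3 a ha) (hw' b)) hC
      linarith
  rw [e]
  calc _ ≤ ∑ a, ∑ b, |w a * w' b * (A a b - k)| :=
        (Finset.abs_sum_le_sum_abs _ _).trans
          (Finset.sum_le_sum fun a _ => Finset.abs_sum_le_sum_abs _ _)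
    _ ≤ ∑ a, ∑ b, (ε * (w a * w' b) + C * (δ * w' b) + C * (w a * δ)) :=
        Finset.sum_le_sum fun a _ => Finset.sum_le_sum fun b _ => hb a b
    _ = _ := by
        simp only [Finset.sum_add_distrib, ← Finset.mul_sum, ← Finset.sum_mul, sw, sw',
          Finset.sum_const, Finset.card_univ, nsmul_eq_mul, mul_one, one_mul]
        ring

/-- node positions -/
noncomputable def node {X : Set ℝ} (S : Finset X) (p : ℕ) : (S ⊕ₗ Fin p) → ℝ :=
  fun a => match ofLex a with
    | Sum.inl s => ((s : X) : ℝ)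
    | Sum.inr i => 1 + (i : ℕ) + ∑ s ∈ S, |(s : ℝ)|

lemma node_inr_ge {X : Set ℝ} (S : Finset X) (p : ℕ) (i : Fin p) (s : S) :
    ((s : X) : ℝ) + 1 ≤ node S p (Sum.inrₗ i) := by
  have h : |((s : X) : ℝ)| ≤ ∑ s ∈ S, |(s : ℝ)| :=
    Finset.single_le_sum (f := fun s : X => |(s : ℝ)|) (fun _ _ => abs_nonneg _) s.2
  have h2 := le_abs_self ((s : X) : ℝ)
  have h3 : (0 : ℝ) ≤ (i : ℕ) := Nat.cast_nonneg _
  have h4 : node S p (Sum.inrₗ i) = 1 + (i : ℕ) + ∑ s ∈ S, |(s : ℝ)| := rfl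
  rw [h4]; linarith

lemma node_mono {X : Set ℝ} (S : Finset X) (p : ℕ) : StrictMono (node S p) := by
  intro a b hab
  rcases a with (a | a) <;> rcases b with (b | b)
  · have h : a < b := Sum.Lex.inl_lt_inl_iff.1 hab
    exact h
  · have := node_inr_ge S p b a
    have h2 : node S p (Sum.inlₗ a) = ((a : X) : ℝ) := rfl
    change node S p (Sum.inlₗ a) < node S p (Sum.inrₗ b)
    linarith
  · exact absurd hab Sum.Lex.not_inr_lt_inl
  · have h : a < b := Sum.Lex.inr_lt_inr_iff.1 hab
    have h2 : ((a : ℕ) : ℝ) < (b : ℕ) := by exact_mod_cast h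
    change 1 + ((a : ℕ) : ℝ) + ∑ s ∈ S, |(s : ℝ)| < 1 + ((b : ℕ) : ℝ) + ∑ s ∈ S, |(s : ℝ)|
    linarith

/-- the first nodes of a sequence -/
noncomputable def nset {X : Set ℝ} (d : ℕ → X) (l : ℕ) : Finset X :=
  (Finset.range (l + 1)).image d

instance nset_nonempty {X : Set ℝ} (d : ℕ → X) (l p : ℕ) : Nonempty (nset d l ⊕ₗ Fin p) :=
  ⟨Sum.inlₗ ⟨d 0, Finset.mem_image_of_mem _ (by simp)⟩⟩

lemma nset_card {X : Set ℝ} (d : ℕ → X) (l p : ℕ) :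
    (Fintype.card (nset d l ⊕ₗ Fin p) : ℝ) ≤ (p + 1) * ((l : ℝ) + 1) := by
  have h : Fintype.card (nset d l ⊕ₗ Fin p) = (nset d l).card + p := by
    have : Fintype.card (nset d l ⊕ₗ Fin p) = Fintype.card (nset d l ⊕ Fin p) :=
      Fintype.card_congr ofLex
    rw [this]; simp
  have h2 : (nset d l).card ≤ l + 1 := Finset.card_image_le.trans (by simp)
  rw [h]
  have h3 : (nset d l).card + p ≤ (p + 1) * (l + 1) := by nlinarith [Nat.zero_le (p * l)]
  exact_mod_cast h3

/-- the approximating kernels -/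
noncomputable def KL {X Y : Set ℝ} (K : X → Y → ℝ) (p : ℕ) (d : ℕ → X) (e : ℕ → Y) (l : ℕ) :
    X → Y → ℝ := fun x y =>
  ∑ a, gw ((l : ℝ) + 1) (node (nset d l) p) x a *
    ∑ b, extK p (fun (s : nset d l) (t : nset e l) => K s t) a b *
      gw ((l : ℝ) + 1) (node (nset e l) p) y b

lemma KL_tp {X Y : Set ℝ} (K : X → Y → ℝ) (p : ℕ) (hK : IsTNKernelOfOrder p K)
    (d : ℕ → X) (e : ℕ → Y) (l : ℕ) : IsTPKernelOfOrder p (KL K p d e l) := by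
  have hl : (0 : ℝ) < (l : ℝ) + 1 := by positivity
  refine comp_tp p (fun (s : nset d l) (t : nset e l) => K s t) ?_ _ _
    (gw_tp p X _ hl _ (node_mono _ p)) (gw_tp p Y _ hl _ (node_mono _ p))
  intro n hn x y hx hy
  exact hK n hn (fun i => x i) (fun i => y i) (fun i j h => hx h) (fun i j h => hy h)

lemma KL_symm {X : Set ℝ} (K : X → X → ℝ) (p : ℕ) (hK : ∀ a b, K a b = K b a)
    (d : ℕ → X) (l : ℕ) (x y : X) : KL K p d d l x y = KL K p d d l y x := by
  unfold KL
  simp_rw [Finset.mul_sum]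
  rw [Finset.sum_comm]
  refine Finset.sum_congr rfl fun a _ => Finset.sum_congr rfl fun b _ => ?_
  have : extK p (fun (s : nset d l) (t : nset d l) => K s t) b a =
      extK p (fun (s : nset d l) (t : nset d l) => K s t) a b := by
    rcases a with (a | a) <;> rcases b with (b | b)
    · exact hK _ _
    · rfl
    · rfl
    · change (if b = a then (1:ℝ) else 0) = if a = b then 1 else 0
      simp [eq_comm]
  rw [this]; ring

lemma near_inl {X : Set ℝ} (S : Finset X) (p : ℕ) (x η : ℝ) (hη : η ≤ 1 / 4) (s₀ : S)
    (h0 : |x - ((s₀ : X) : ℝ)| ≤ η) (a : S ⊕ₗ Fin p) (ha : |x - node S p a| < 2 * η) :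
    ∃ s : S, a = Sum.inlₗ s ∧ |x - ((s : X) : ℝ)| < 2 * η := by
  rcases a with (s | i)
  · exact ⟨s, rfl, ha⟩
  · exfalso
    have h1 := node_inr_ge S p i s₀
    have h2 : |x - node S p (Sum.inrₗ i)| < 2 * η := ha
    rw [abs_lt] at h2
    rw [abs_le] at h0
    linarith [h2.1, h0.2]

lemma KL_conv {X Y : Set ℝ} (K : X → Y → ℝ) (p : ℕ) (M : ℝ) (hM : ∀ a b, |K a b| ≤ M)
    (d : ℕ → X) (e : ℕ → Y) (hd : DenseRange d) (he : DenseRange e) (q : X × Y)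
    (hq : ContinuousAt (fun r : X × Y => K r.1 r.2) q) (ε : ℝ) (hε : 0 < ε) :
    ∃ t ∈ nhds q, ∀ᶠ l in Filter.atTop, ∀ r ∈ t, |KL K p d e l r.1 r.2 - K r.1 r.2| < ε := by
  have hM0 : 0 ≤ M := (abs_nonneg _).trans (hM q.1 q.2)
  rw [Metric.continuousAt_iff] at hq
  obtain ⟨δ, hδ, hq⟩ := hq (ε / 4) (by linarith)
  set η := min (δ / 4) (1 / 4) with hη
  have hη0 : 0 < η := by positivity
  have hη1 : η ≤ 1 / 4 := min_le_right _ _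
  have hη2 : 4 * η ≤ δ := by linarith [min_le_left (δ / 4) (1 / 4)]
  obtain ⟨k₁, hk₁⟩ := hd.exists_dist_lt q.1 (half_pos hη0)
  obtain ⟨k₂, hk₂⟩ := he.exists_dist_lt q.2 (half_pos hη0)
  set C := 2 * M + 1
  have hC : 0 < C := by positivity
  have hlim : Filter.Tendsto (fun l : ℕ => C * (2 * (p + 1)) *
      ((((l : ℝ) + 1) ^ (1 : ℝ)) * Real.exp (-(3 * η ^ 2) * ((l : ℝ) + 1))))
      Filter.atTop (nhds 0) := by
    have h1 := tendsto_rpow_mul_exp_neg_mul_atTop_nhds_zero 1 (3 * η ^ 2) (by positivity)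
    have h2 : Filter.Tendsto (fun l : ℕ => (l : ℝ) + 1) Filter.atTop Filter.atTop :=
      Filter.tendsto_atTop_add_const_right _ _ tendsto_natCast_atTop_atTop
    simpa using (h1.comp h2).const_mul (C * (2 * (p + 1)))
  have hev := hlim.eventually (gt_mem_nhds (show (0:ℝ) < ε / 4 by linarith))
  refine ⟨Metric.ball q (η / 2), Metric.ball_mem_nhds _ (half_pos hη0), ?_⟩
  filter_upwards [hev, Filter.eventually_ge_atTop k₁, Filter.eventually_ge_atTop k₂]
    with l hl hl1 hl2 r hr
  have hr1 : |(r.1 : ℝ) - q.1| < η / 2 := by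
    have := (le_max_left _ _).trans_lt (Metric.mem_ball.1 hr)
    exact this
  have hr2 : |(r.2 : ℝ) - q.2| < η / 2 := by
    have := (le_max_right _ _).trans_lt (Metric.mem_ball.1 hr)
    exact this
  have hk₁' : |(q.1 : ℝ) - d k₁| < η / 2 := hk₁
  have hk₂' : |(q.2 : ℝ) - e k₂| < η / 2 := hk₂
  let s₀ : nset d l := ⟨d k₁, Finset.mem_image_of_mem _ (by simp; omega)⟩
  let t₀ : nset e l := ⟨e k₂, Finset.mem_image_of_mem _ (by simp; omega)⟩
  have hs₀ : |(r.1 : ℝ) - ((s₀ : X) : ℝ)| ≤ η := by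
    have := abs_sub_le (r.1 : ℝ) q.1 (d k₁)
    change |(r.1 : ℝ) - (d k₁ : ℝ)| ≤ η
    linarith
  have ht₀ : |(r.2 : ℝ) - ((t₀ : Y) : ℝ)| ≤ η := by
    have := abs_sub_le (r.2 : ℝ) q.2 (e k₂)
    change |(r.2 : ℝ) - (e k₂ : ℝ)| ≤ η
    linarith
  have hqr : |K r.1 r.2 - K q.1 q.2| < ε / 4 := hq (x := r) (by
    have := Metric.mem_ball.1 hr; linarith)
  have hl0 : (0 : ℝ) < (l : ℝ) + 1 := by positivity
  have hmain := avg_est (fun a => gw ((l : ℝ) + 1) (node (nset d l) p) r.1 a)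
    (fun b => gw ((l : ℝ) + 1) (node (nset e l) p) r.2 b)
    (fun a => gw_nonneg _ _ _ _) (fun a => gw_nonneg _ _ _ _) (gw_sum _ _ _) (gw_sum _ _ _)
    (extK p (fun (s : nset d l) (t : nset e l) => K s t)) (K r.1 r.2) (ε / 2) C
    (Real.exp (-(3 * η ^ 2) * ((l : ℝ) + 1))) (by linarith) hC.le (Real.exp_pos _).le
    (fun a => |(r.1 : ℝ) - node (nset d l) p a| < 2 * η)
    (fun b => |(r.2 : ℝ) - node (nset e l) p b| < 2 * η)
    (by
      intro a b ha hb
      obtain ⟨s, rfl, hs⟩ := near_inl _ p _ η hη1 s₀ hs₀ a ha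
      obtain ⟨t, rfl, ht⟩ := near_inl _ p _ η hη1 t₀ ht₀ b hb
      change |K s t - K r.1 r.2| ≤ ε / 2
      have h1 : |K s t - K q.1 q.2| < ε / 4 := hq (x := ((s : X), (t : Y))) (by
        refine max_lt ?_ ?_
        · change |((s : X) : ℝ) - q.1| < δ
          have := abs_sub_le ((s : X) : ℝ) r.1 q.1
          rw [abs_sub_comm ((s : X) : ℝ) r.1] at this
          linarith
        · change |((t : Y) : ℝ) - q.2| < δ
          have := abs_sub_le ((t : Y) : ℝ) r.2 q.2
          rw [abs_sub_comm ((t : Y) : ℝ) r.2] at this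
          linarith)
      have h2 := abs_sub_le (K s t) (K q.1 q.2) (K r.1 r.2)
      rw [abs_sub_comm (K q.1 q.2)] at h2
      linarith)
    (by
      intro a b
      have h1 : |extK p (fun (s : nset d l) (t : nset e l) => K s t) a b| ≤ M + 1 := by
        rcases a with (a | a) <;> rcases b with (b | b)
        · exact (hM _ _).trans (by linarith)
        · change |(0:ℝ)| ≤ _; rw [abs_zero]; linarith
        · change |(0:ℝ)| ≤ _; rw [abs_zero]; linarith
        · change |if a = b then (1:ℝ) else 0| ≤ _
          split_ifs
          · rw [abs_one]; linarith
          · rw [abs_zero]; linarith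
      refine (abs_sub _ _).trans ?_
      have := hM r.1 r.2
      simp only [C]; linarith)
    (fun a ha => gw_far _ hl0 _ _ η hη0 (Sum.inlₗ s₀) hs₀ a (not_lt.1 ha))
    (fun b hb => gw_far _ hl0 _ _ η hη0 (Sum.inlₗ t₀) ht₀ b (not_lt.1 hb))
  refine lt_of_le_of_lt hmain ?_
  have c1 := mul_le_mul_of_nonneg_right (nset_card d l p)
    (Real.exp_pos (-(3 * η ^ 2) * ((l : ℝ) + 1))).le
  have c2 := mul_le_mul_of_nonneg_right (nset_card e l p)
    (Real.exp_pos (-(3 * η ^ 2) * ((l : ℝ) + 1))).le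
  have c3 := mul_le_mul_of_nonneg_left (add_le_add c1 c2) hC.le
  rw [Real.rpow_one] at hl
  have c4 : C * (((p : ℝ) + 1) * ((l : ℝ) + 1) * Real.exp (-(3 * η ^ 2) * ((l : ℝ) + 1)) +
      ((p : ℝ) + 1) * ((l : ℝ) + 1) * Real.exp (-(3 * η ^ 2) * ((l : ℝ) + 1))) =
      C * (2 * (p + 1)) * (((l : ℝ) + 1) * Real.exp (-(3 * η ^ 2) * ((l : ℝ) + 1))) := by ring
  rw [c4] at c3
  linarith

lemma KL_loc {X Y : Set ℝ} (K : X → Y → ℝ) (p : ℕ) (M : ℝ) (hM : ∀ a b, |K a b| ≤ M)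
    (d : ℕ → X) (e : ℕ → Y) (hd : DenseRange d) (he : DenseRange e) :
    TendstoLocallyUniformlyOn (fun l (q : X × Y) => KL K p d e l q.1 q.2)
          (fun q : X × Y => K q.1 q.2) Filter.atTop
          {q : X × Y | ((q.1 : ℝ), (q.2 : ℝ)) ∈ interior (X ×ˢ Y) ∧
            ContinuousAt (fun r : X × Y => K r.1 r.2) q} := by
  rw [Metric.tendstoLocallyUniformlyOn_iff]
  intro ε hε q hq
  obtain ⟨t, ht, h⟩ := KL_conv K p M hM d e hd he q hq.2 ε hε
  refine ⟨t, mem_nhdsWithin_of_mem_nhds ht, h.mono fun l hl r hr => ?_⟩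
  rw [dist_comm, Real.dist_eq]
  exact hl r hr

theorem stmt_6 :
    (∀ (X Y : Set ℝ), X.Nonempty → Y.Nonempty → ∀ p : ℕ, 0 < p →
      ∀ K : X → Y → ℝ, IsTNKernelOfOrder p K → (∃ M : ℝ, ∀ a b, |K a b| ≤ M) →
      ∃ Kl : ℕ → X → Y → ℝ, (∀ l, IsTPKernelOfOrder p (Kl l)) ∧
        TendstoLocallyUniformlyOn (fun l (q : X × Y) => Kl l q.1 q.2)
          (fun q : X × Y => K q.1 q.2) Filter.atTop
          {q : X × Y | ((q.1 : ℝ), (q.2 : ℝ)) ∈ interior (X ×ˢ Y) ∧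
            ContinuousAt (fun r : X × Y => K r.1 r.2) q}) ∧
    (∀ X : Set ℝ, X.Nonempty → ∀ p : ℕ, 0 < p →
      ∀ K : X → X → ℝ, (∀ a b, K a b = K b a) → IsTNKernelOfOrder p K →
      (∃ M : ℝ, ∀ a b, |K a b| ≤ M) →
      ∃ Kl : ℕ → X → X → ℝ,
        (∀ l, (∀ a b, Kl l a b = Kl l b a) ∧ IsTPKernelOfOrder p (Kl l)) ∧
        TendstoLocallyUniformlyOn (fun l (q : X × X) => Kl l q.1 q.2)
          (fun q : X × X => K q.1 q.2) Filter.atTop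
          {q : X × X | ((q.1 : ℝ), (q.2 : ℝ)) ∈ interior (X ×ˢ X) ∧
            ContinuousAt (fun r : X × X => K r.1 r.2) q}) := by
  refine ⟨?_, ?_⟩
  · rintro X Y hX hY p - K hK ⟨M, hM⟩
    have := hX.to_subtype
    have := hY.to_subtype
    exact ⟨KL K p (TopologicalSpace.denseSeq X) (TopologicalSpace.denseSeq Y),
      fun l => KL_tp K p hK _ _ l,
      KL_loc K p M hM _ _ (TopologicalSpace.denseRange_denseSeq X)
        (TopologicalSpace.denseRange_denseSeq Y)⟩
  · rintro X hX p - K hs hK ⟨M, hM⟩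
    have := hX.to_subtype
    exact ⟨KL K p (TopologicalSpace.denseSeq X) (TopologicalSpace.denseSeq X),
      fun l => ⟨fun a b => KL_symm K p hs _ l a b, KL_tp K p hK _ _ l⟩,
      KL_loc K p M hM _ _ (TopologicalSpace.denseRange_denseSeq X)
        (TopologicalSpace.denseRange_denseSeq X)⟩
end

section
/- Let F : (0,∞) → ℝ and let d be a positive integer. Then F[A] is totally positive for every symmetric totally positive d × d matrix A if and only if: (a) d = 1: F(x) > 0 for all x > 0; (b) d = 2: F is positive, strictly increasing, and multiplicatively mid-convex, i.e., F(√(xy))² ≤ F(x)F(y) for all x, y ∈ (0,∞); (c) d = 3: F(x) = c·x^α for some c > 0 and some α ≥ 1; (d) d = 4: F(x) = c·x^α for some c > 0 and some α ∈ {1} ∪ [2,∞); (e) d ≥ 5: F(x) = c·x for some c > 0. -/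
/-- An `m × n` real matrix is totally positive if all of its minors are positive. -/
def IsTPMat {m n : ℕ} (A : Matrix (Fin m) (Fin n) ℝ) : Prop :=
  ∀ (k : ℕ) (r : Fin k → Fin m) (c : Fin k → Fin n),
    StrictMono r → StrictMono c → 0 < (A.submatrix r c).det

namespace TPaux
open Matrix Filter Topology

theorem card_le_of_sm {k n : ℕ} {r : Fin k → Fin n} (hr : StrictMono r) : k ≤ n := by
  simpa using Fintype.card_le_of_injective r hr.injective

theorem sm_id {n : ℕ} {r : Fin n → Fin n} (hr : StrictMono r) : r = id := by
  have hb : Function.Bijective r := Finite.injective_iff_bijective.mp hr.injective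
  have h2 : Set.range r = Set.range (id : Fin n → Fin n) := by
    rw [hb.surjective.range_eq, Set.range_id]
  exact StrictMono.range_inj hr strictMono_id |>.mp h2

theorem entry_pos {m n : ℕ} {A : Matrix (Fin m) (Fin n) ℝ} (h : IsTPMat A) (i : Fin m)
    (j : Fin n) : 0 < A i j := by
  have := h 1 (fun _ => i) (fun _ => j) (Subsingleton.strictMono _) (Subsingleton.strictMono _)
  simpa using this

theorem tp_submatrix {m n m' n' : ℕ} {A : Matrix (Fin m) (Fin n) ℝ} (h : IsTPMat A)
    {r : Fin m' → Fin m} {c : Fin n' → Fin n} (hr : StrictMono r) (hc : StrictMono c) :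
    IsTPMat (A.submatrix r c) := by
  intro k r' c' hr' hc'
  simpa using h k (r ∘ r') (c ∘ c') (hr.comp hr') (hc.comp hc')

theorem tp_transpose {m n : ℕ} {A : Matrix (Fin m) (Fin n) ℝ} (h : IsTPMat A) : IsTPMat Aᵀ := by
  intro k r c hr hc
  have := h k c r hc hr
  rwa [← det_transpose, transpose_submatrix] at this

theorem sm_cases {k m : ℕ} {r : Fin k → Fin (m+1)} (hr : StrictMono r) :
    (∃ r' : Fin k → Fin m, StrictMono r' ∧ r = Fin.castSucc ∘ r') ∨
    (∃ (k' : ℕ) (hk : k = k' + 1) (r' : Fin k' → Fin m), StrictMono r' ∧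
      r ∘ Fin.cast hk.symm = Fin.snoc (α := fun _ => Fin (m+1)) (Fin.castSucc ∘ r') (Fin.last m)) := by
  have aux : (∀ i, r i ≠ Fin.last m) → ∃ r' : Fin k → Fin m, StrictMono r' ∧ r = Fin.castSucc ∘ r' := by
    intro h
    refine ⟨fun i => (r i).castPred (h i), ?_, ?_⟩
    · intro a b hab
      exact Fin.castPred_lt_castPred_iff.mpr (hr hab)
    · funext i; simp
  by_cases h : ∀ i, r i ≠ Fin.last m
  · exact Or.inl (aux h)
  · right
    push Not at h
    obtain ⟨i, hi⟩ := h
    cases k with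
    | zero => exact i.elim0
    | succ k' =>
      have hl : r (Fin.last k') = Fin.last m := by
        apply le_antisymm (Fin.le_last _)
        rw [← hi]; exact hr.monotone (Fin.le_last _)
      have hne : ∀ j : Fin k', r j.castSucc ≠ Fin.last m := by
        intro j
        have := hr (Fin.castSucc_lt_last j)
        rw [hl] at this; exact this.ne
      refine ⟨k', rfl, fun j => (r j.castSucc).castPred (hne j), ?_, ?_⟩
      · intro a b hab
        exact Fin.castPred_lt_castPred_iff.mpr (hr (Fin.castSucc_lt_castSucc_iff.mpr hab))
      · funext j
        refine Fin.lastCases ?_ (fun j => ?_) j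
        · simp [hl]
        · simp

/-- append a column -/
def addCol {m n : ℕ} (A : Matrix (Fin m) (Fin n) ℝ) (v : Fin m → ℝ) : Matrix (Fin m) (Fin (n+1)) ℝ :=
  Matrix.of fun i j => Fin.lastCases (motive := fun _ => ℝ) (v i) (fun j => A i j) j

def addRow {m n : ℕ} (A : Matrix (Fin m) (Fin n) ℝ) (v : Fin n → ℝ) : Matrix (Fin (m+1)) (Fin n) ℝ :=
  Matrix.of fun i j => Fin.lastCases (motive := fun _ => ℝ) (v j) (fun i => A i j) i

@[simp] theorem addCol_last {m n : ℕ} (A : Matrix (Fin m) (Fin n) ℝ) (v : Fin m → ℝ) (i) :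
    addCol A v i (Fin.last n) = v i := by simp [addCol]
@[simp] theorem addCol_cs {m n : ℕ} (A : Matrix (Fin m) (Fin n) ℝ) (v : Fin m → ℝ) (i) (j : Fin n) :
    addCol A v i j.castSucc = A i j := by simp [addCol]
@[simp] theorem addRow_last {m n : ℕ} (A : Matrix (Fin m) (Fin n) ℝ) (v : Fin n → ℝ) (i) :
    addRow A v (Fin.last m) i = v i := by simp [addRow]
@[simp] theorem addRow_cs {m n : ℕ} (A : Matrix (Fin m) (Fin n) ℝ) (v : Fin n → ℝ) (j : Fin n) (i : Fin m) :
    addRow A v i.castSucc j = A i j := by simp [addRow]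

theorem minor_last_col {m n : ℕ} {A : Matrix (Fin m) (Fin n) ℝ} (hA : IsTPMat A) (k : ℕ)
    (r : Fin (k+1) → Fin m) (c : Fin k → Fin n) (hr : StrictMono r) (hc : StrictMono c) :
    ∀ᶠ u : ℝ in 𝓝[>] 0, 0 < ((addCol A (fun i => u ^ (m - 1 - i.val))).submatrix r
      (Fin.snoc (α := fun _ => Fin (n+1)) (Fin.castSucc ∘ c) (Fin.last n))).det := by
  set D : Fin (k+1) → ℝ := fun i => (-1) ^ (i.val + k) * (A.submatrix (r ∘ i.succAbove) c).det with hD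
  set g : ℝ → ℝ := fun u => ∑ i, u ^ ((r (Fin.last k)).val - (r i).val) * D i with hg
  have hg0 : 0 < g 0 := by
    have : g 0 = D (Fin.last k) := by
      simp only [hg]
      rw [Finset.sum_eq_single (Fin.last k)]
      · simp
      · intro i _ hi
        have : r i < r (Fin.last k) := hr (Fin.lt_last_iff_ne_last.mpr hi)
        have h2 : (r (Fin.last k)).val - (r i).val ≠ 0 := by
          have := Fin.lt_def.mp this; omega
        simp [h2]
      · simp
    rw [this]; simp only [hD]
    have : (-1:ℝ) ^ ((Fin.last k).val + k) = 1 := by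
      rw [Fin.val_last, ← two_mul, pow_mul]; simp
    rw [this, one_mul]
    exact hA _ _ _ (hr.comp (Fin.strictMono_succAbove _)) hc
  have hgc : Continuous g := by
    simp only [hg]; fun_prop
  have hev : ∀ᶠ u in 𝓝[>] (0:ℝ), 0 < g u :=
    nhdsWithin_le_nhds (hgc.continuousAt.eventually (lt_mem_nhds hg0))
  filter_upwards [hev, self_mem_nhdsWithin] with u hu hu0
  have hu0 : 0 < u := hu0
  have : ((addCol A (fun i => u ^ (m - 1 - i.val))).submatrix r
      (Fin.snoc (α := fun _ => Fin (n+1)) (Fin.castSucc ∘ c) (Fin.last n))).det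
      = u ^ (m - 1 - (r (Fin.last k)).val) * g u := by
    rw [det_succ_column _ (Fin.last k)]
    simp only [hg, Finset.mul_sum]
    refine Finset.sum_congr rfl fun i _ => ?_
    have h1 : r i ≤ r (Fin.last k) := hr.monotone (Fin.le_last _)
    have h2 : m - 1 - (r i).val = (m - 1 - (r (Fin.last k)).val) + ((r (Fin.last k)).val - (r i).val) := by
      have := Fin.le_def.mp h1
      have := (r (Fin.last k)).isLt
      omega
    have h3 : (((addCol A (fun i => u ^ (m - 1 - i.val))).submatrix r
      (Fin.snoc (α := fun _ => Fin (n+1)) (Fin.castSucc ∘ c) (Fin.last n))).submatrix i.succAbove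
        (Fin.last k).succAbove) = A.submatrix (r ∘ i.succAbove) c := by
      ext a b
      simp
    rw [h3]
    simp only [submatrix_apply, Fin.snoc_last, addCol_last, hD, Fin.val_last]
    rw [h2, pow_add]; ring
  rw [this]; positivity

theorem exists_addCol {m n : ℕ} {A : Matrix (Fin m) (Fin n) ℝ} (hA : IsTPMat A) :
    ∃ v : Fin m → ℝ, (∀ i, 0 < v i) ∧ IsTPMat (addCol A v) := by
  have h : ∀ᶠ u : ℝ in 𝓝[>] 0, ∀ k : Fin m, ∀ r : Fin (k.val+1) → Fin m, ∀ c : Fin k.val → Fin n,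
      StrictMono r → StrictMono c → 0 < ((addCol A (fun i => u ^ (m - 1 - i.val))).submatrix r
      (Fin.snoc (α := fun _ => Fin (n+1)) (Fin.castSucc ∘ c) (Fin.last n))).det := by
    rw [eventually_all]; intro k
    rw [eventually_all]; intro r
    rw [eventually_all]; intro c
    by_cases hr : StrictMono r
    · by_cases hc : StrictMono c
      · filter_upwards [minor_last_col hA k r c hr hc] with u hu _ _ using hu
      · simp [hc]
    · simp [hr]
  obtain ⟨u, hu, hu0⟩ := (h.and self_mem_nhdsWithin).exists
  have hu0 : 0 < u := hu0
  refine ⟨fun i => u ^ (m - 1 - i.val), fun i => by positivity, ?_⟩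
  intro k r c hr hc
  rcases sm_cases hc with ⟨c', hc', rfl⟩ | ⟨k', rfl, c', hc', h⟩
  · have := hA k r c' hr hc'
    convert this using 2
    ext a b; simp
  · have h' : c = Fin.snoc (α := fun _ => Fin (n+1)) (Fin.castSucc ∘ c') (Fin.last n) := by
      rw [← h]; rfl
    rw [h']
    have := card_le_of_sm hr
    exact hu ⟨k', this⟩ r c' hr hc'

theorem tp_scale_col {m n : ℕ} {A : Matrix (Fin m) (Fin n) ℝ} {x : Fin n → ℝ} (hA : IsTPMat A)
    (hx : ∀ i, 0 < x i) : IsTPMat (Matrix.of fun i j => x j * A i j) := by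
  intro k r c hr hc
  have : ((Matrix.of fun i j => x j * A i j).submatrix r c).det
     = (∏ j, x (c j)) * (A.submatrix r c).det := by
    rw [← det_mul_row]; rfl
  rw [this]
  exact mul_pos (Finset.prod_pos fun i _ => hx _) (hA k r c hr hc)

theorem tp_scale_row {m n : ℕ} {A : Matrix (Fin m) (Fin n) ℝ} {x : Fin m → ℝ} (hA : IsTPMat A)
    (hx : ∀ i, 0 < x i) : IsTPMat (Matrix.of fun i j => x i * A i j) := by
  intro k r c hr hc
  have : ((Matrix.of fun i j => x i * A i j).submatrix r c).det
     = (∏ j, x (r j)) * (A.submatrix r c).det := by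
    rw [← det_mul_column]; rfl
  rw [this]
  exact mul_pos (Finset.prod_pos fun i _ => hx _) (hA k r c hr hc)

theorem addCol_smul {m n : ℕ} {A : Matrix (Fin m) (Fin n) ℝ} {v : Fin m → ℝ} (h : IsTPMat (addCol A v))
    {s : ℝ} (hs : 0 < s) : IsTPMat (addCol A (fun i => s * v i)) := by
  have := tp_scale_col h (x := Fin.snoc (α := fun _ => ℝ) (fun _ => 1) s)
    (fun i => by refine Fin.lastCases ?_ (fun j => ?_) i <;> simp [hs])
  convert this using 1
  ext i j
  refine Fin.lastCases ?_ (fun j => ?_) j <;> simp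

/-- bordered matrix -/
def border {d : ℕ} (A : Matrix (Fin d) (Fin d) ℝ) (v : Fin d → ℝ) : Matrix (Fin (d+1)) (Fin (d+1)) ℝ :=
  addRow (addCol A v) (Fin.snoc (α := fun _ => ℝ) v 1)

theorem minor_corner {d : ℕ} {A : Matrix (Fin d) (Fin d) ℝ} (hA : IsTPMat A) (v : Fin d → ℝ) (k : ℕ)
    (r c : Fin k → Fin d) (hr : StrictMono r) (hc : StrictMono c) :
    ∀ᶠ s : ℝ in 𝓝[>] 0, 0 < ((border A (fun i => s * v i)).submatrix
      (Fin.snoc (α := fun _ => Fin (d+1)) (Fin.castSucc ∘ r) (Fin.last d))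
      (Fin.snoc (α := fun _ => Fin (d+1)) (Fin.castSucc ∘ c) (Fin.last d))).det := by
  apply nhdsWithin_le_nhds
  have hcont : Continuous fun s : ℝ => ((border A (fun i => s * v i)).submatrix
      (Fin.snoc (α := fun _ => Fin (d+1)) (Fin.castSucc ∘ r) (Fin.last d))
      (Fin.snoc (α := fun _ => Fin (d+1)) (Fin.castSucc ∘ c) (Fin.last d))).det := by
    apply Continuous.matrix_det
    refine continuous_matrix fun i j => ?_
    refine Fin.lastCases ?_ (fun i => ?_) i <;> refine Fin.lastCases ?_ (fun j => ?_) j <;>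
      simp [border] <;> fun_prop
  refine hcont.continuousAt.eventually (lt_mem_nhds ?_)
  beta_reduce
  rw [det_succ_column _ (Fin.last k), Finset.sum_eq_single (Fin.last k)]
  · have : (-1:ℝ) ^ (k + k) = 1 := by
      rw [← two_mul, pow_mul]; simp
    have h3 : (((border A (fun i => 0 * v i)).submatrix
      (Fin.snoc (α := fun _ => Fin (d+1)) (Fin.castSucc ∘ r) (Fin.last d))
      (Fin.snoc (α := fun _ => Fin (d+1)) (Fin.castSucc ∘ c) (Fin.last d))).submatrix (Fin.last k).succAbove
        (Fin.last k).succAbove) = A.submatrix r c := by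
      ext a b; simp [border]
    rw [h3]
    simp [border, this]
    exact hA k r c hr hc
  · intro i _ hi
    obtain ⟨j, rfl⟩ := Fin.exists_castSucc_eq.mpr hi
    simp [border]
  · simp

theorem exists_border {d : ℕ} {A : Matrix (Fin d) (Fin d) ℝ} (hs : A.IsSymm) (hA : IsTPMat A)
    {δ : ℝ} (hδ : 0 < δ) :
    ∃ v : Fin d → ℝ, (∀ i, 0 < v i ∧ v i < δ) ∧ (border A v).IsSymm ∧ IsTPMat (border A v) := by
  obtain ⟨v, hv, hvA⟩ := exists_addCol hA
  have h : ∀ᶠ s : ℝ in 𝓝[>] 0, ∀ k : Fin (d+1), ∀ r c : Fin k.val → Fin d,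
      StrictMono r → StrictMono c → 0 < ((border A (fun i => s * v i)).submatrix
      (Fin.snoc (α := fun _ => Fin (d+1)) (Fin.castSucc ∘ r) (Fin.last d))
      (Fin.snoc (α := fun _ => Fin (d+1)) (Fin.castSucc ∘ c) (Fin.last d))).det := by
    rw [eventually_all]; intro k
    rw [eventually_all]; intro r
    rw [eventually_all]; intro c
    by_cases hr : StrictMono r
    · by_cases hc : StrictMono c
      · filter_upwards [minor_corner hA v k r c hr hc] with u hu _ _ using hu
      · simp [hc]
    · simp [hr]
  have h2 : ∀ᶠ s : ℝ in 𝓝[>] 0, ∀ i, s * v i < δ := by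
    rw [eventually_all]; intro i
    apply nhdsWithin_le_nhds
    have : Continuous fun s : ℝ => s * v i := by fun_prop
    exact this.continuousAt.eventually (gt_mem_nhds (by simpa using hδ))
  obtain ⟨s, ⟨hu, hu2⟩, hu0⟩ := ((h.and h2).and self_mem_nhdsWithin).exists
  have hu0 : 0 < s := hu0
  have hC : IsTPMat (addCol A (fun i => s * v i)) := addCol_smul hvA hu0
  have hsym : (border A (fun i => s * v i)).IsSymm := by
    ext i j
    refine Fin.lastCases ?_ (fun i => ?_) i <;> refine Fin.lastCases ?_ (fun j => ?_) j <;>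
      simp [border]
    exact hs.apply _ _
  refine ⟨fun i => s * v i, fun i => ⟨mul_pos hu0 (hv i), hu2 i⟩, hsym, ?_⟩
  have key : ∀ (k : ℕ) (r : Fin k → Fin d) (c : Fin k → Fin (d+1)), StrictMono r → StrictMono c →
      0 < ((border A (fun i => s * v i)).submatrix (Fin.castSucc ∘ r) c).det := by
    intro k r c hr hc
    have := hC k r c hr hc
    convert this using 2
    ext a b; simp [border]
  intro k r c hr hc
  rcases sm_cases hr with ⟨r', hr', rfl⟩ | ⟨k', rfl, r', hr', h⟩
  · exact key k r' c hr' hc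
  · rcases sm_cases hc with ⟨c', hc', rfl⟩ | ⟨k'', hk, c', hc', h'⟩
    · have := key _ c' r hc' hr
      rw [← det_transpose, transpose_submatrix, hsym.eq] at this
      exact this
    · obtain rfl : k' = k'' := by omega
      have h1 : r = Fin.snoc (α := fun _ => Fin (d+1)) (Fin.castSucc ∘ r') (Fin.last d) := by
        rw [← h]; rfl
      have h2 : c = Fin.snoc (α := fun _ => Fin (d+1)) (Fin.castSucc ∘ c') (Fin.last d) := by
        rw [← h']; rfl
      rw [h1, h2]
      exact hu ⟨k', Nat.lt_succ_of_le (card_le_of_sm hr')⟩ r' c' hr' hc'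

end TPaux

namespace TPaux
open Matrix Filter Topology
set_option linter.unusedSimpArgs false

/-- symmetric TP matrices -/
def S (d : ℕ) : Set (Matrix (Fin d) (Fin d) ℝ) := {A | A.IsSymm ∧ IsTPMat A}

/-- preserver property -/
def Pres (F : ℝ → ℝ) (d : ℕ) : Prop :=
  ∀ A : Matrix (Fin d) (Fin d) ℝ, A.IsSymm → IsTPMat A → IsTPMat (A.map F)

theorem pres_succ {F : ℝ → ℝ} {d : ℕ} (h : Pres F (d+1)) : Pres F d := by
  intro A hs hA
  obtain ⟨v, -, h1, h2⟩ := exists_border hs hA one_pos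
  have := tp_submatrix (h _ h1 h2) (Fin.strictMono_castSucc (n := d)) (Fin.strictMono_castSucc (n := d))
  convert this using 1
  ext i j; simp [border]

theorem pres_le {F : ℝ → ℝ} {d e : ℕ} (hde : d ≤ e) (h : Pres F e) : Pres F d := by
  induction e, hde using Nat.le_induction with
  | base => exact h
  | succ n _ ih => exact ih (pres_succ h)

theorem pres_congr {F G : ℝ → ℝ} {d : ℕ} (h : Pres F d) (hFG : ∀ x, 0 < x → F x = G x) :
    Pres G d := by
  intro A hs hA
  have := h A hs hA
  convert this using 1
  ext i j
  simp [hFG _ (entry_pos hA i j)]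

theorem near_one (d : ℕ) : ∀ δ > 0, ∃ A ∈ S d, ∀ i j, |A i j - (1 : Matrix (Fin d) (Fin d) ℝ) i j| < δ := by
  induction d with
  | zero =>
    intro δ hδ
    refine ⟨1, ⟨by ext i; exact i.elim0, ?_⟩, fun i => i.elim0⟩
    intro k r c hr hc
    have := card_le_of_sm hr
    obtain rfl : k = 0 := by omega
    simp
  | succ d ih =>
    intro δ hδ
    obtain ⟨A, ⟨hs, hA⟩, hd⟩ := ih δ hδ
    obtain ⟨v, hv, h1, h2⟩ := exists_border hs hA hδ
    refine ⟨_, ⟨h1, h2⟩, fun i j => ?_⟩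
    refine Fin.lastCases ?_ (fun i => ?_) i <;> refine Fin.lastCases ?_ (fun j => ?_) j
    · simp [border, hδ]
    · simp [border, Matrix.one_apply, (Fin.castSucc_lt_last j).ne', abs_of_pos (hv j).1, (hv j).2]
    · simp [border, Matrix.one_apply, (Fin.castSucc_lt_last i).ne, abs_of_pos (hv i).1, (hv i).2]
    · simpa [border, Matrix.one_apply] using hd i j

theorem one_mem (d : ℕ) : (1 : Matrix (Fin d) (Fin d) ℝ) ∈ closure (S d) := by
  have : ∀ n : ℕ, ∃ A ∈ S d, ∀ i j, |A i j - (1 : Matrix (Fin d) (Fin d) ℝ) i j| < 1 / ((n:ℝ) + 1) :=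
    fun n => near_one d _ (by positivity)
  choose A hA hd using this
  refine mem_closure_of_tendsto (f := A) (b := atTop) ?_ (Eventually.of_forall hA)
  refine tendsto_pi_nhds.mpr fun i => tendsto_pi_nhds.mpr fun j => ?_
  rw [tendsto_iff_dist_tendsto_zero]
  refine squeeze_zero (fun _ => dist_nonneg) (fun n => ?_) tendsto_one_div_add_atTop_nhds_zero_nat
  rw [Real.dist_eq]; exact (hd n i j).le

theorem tp_addcol {m n : ℕ} {A : Matrix (Fin m) (Fin n) ℝ} (hA : IsTPMat A) {t : ℝ} (ht : 0 ≤ t)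
    {j j' : Fin n} (hj : j'.val = j.val + 1) :
    IsTPMat (A.updateCol j' (fun i => A i j' + t * A i j)) := by
  intro k r c hr hc
  by_cases hp : ∃ p, c p = j'
  · obtain ⟨p, rfl⟩ := hp
    have e1 : (A.updateCol (c p) (fun i => A i (c p) + t * A i j)).submatrix r c =
      (A.submatrix r c).updateCol p ((fun i => A (r i) (c p)) + t • (fun i => A (r i) j)) := by
      ext a b
      by_cases hb : b = p
      · subst hb; simp
      · have : c b ≠ c p := fun h => hb (hc.injective h)
        simp [updateCol_apply, hb, this]
    have e2 : (A.submatrix r c).updateCol p (fun i => A (r i) (c p)) = A.submatrix r c := by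
      ext a b
      by_cases hb : b = p
      · subst hb; simp
      · simp [updateCol_apply, hb]
    have e3 : (A.submatrix r c).updateCol p (fun i => A (r i) j) = A.submatrix r (Function.update c p j) := by
      ext a b
      by_cases hb : b = p
      · subst hb; simp
      · simp [updateCol_apply, hb]
    rw [e1, det_updateCol_add, det_updateCol_smul, e2, e3]
    have h1 := hA k r c hr hc
    have h2 : 0 ≤ (A.submatrix r (Function.update c p j)).det := by
      by_cases hq : ∃ q, c q = j
      · obtain ⟨q, rfl⟩ := hq
        have hqp : q ≠ p := by rintro rfl; omega
        rw [det_zero_of_column_eq hqp]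
        intro i; simp [hqp]
      · push Not at hq
        refine (hA k r _ hr ?_).le
        intro a b hab
        have := Fin.lt_def.mp (hc hab)
        have hqa := hq a
        by_cases ha : a = p
        · subst ha
          rw [Function.update_self, Function.update_of_ne hab.ne', Fin.lt_def]; omega
        · by_cases hb : b = p
          · subst hb
            rw [Function.update_self, Function.update_of_ne ha, Fin.lt_def]
            have : (c a).val ≠ j.val := fun h => hqa (Fin.ext h)
            omega
          · rw [Function.update_of_ne ha, Function.update_of_ne hb]; exact hc hab
    have := mul_nonneg ht h2
    linarith
  · push Not at hp
    have := hA k r c hr hc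
    convert this using 2
    ext a b
    simp [updateCol_apply, hp b]

theorem transv_mem {d : ℕ} {A : Matrix (Fin d) (Fin d) ℝ} (hA : A ∈ S d) {t : ℝ} (ht : 0 ≤ t)
    {j j' : Fin d} (hj : j'.val = j.val + 1) :
    transvection j' j t * A * (transvection j' j t)ᵀ ∈ S d := by
  have hne : j' ≠ j := by rintro rfl; omega
  obtain ⟨hs, hA⟩ := hA
  refine ⟨?_, ?_⟩
  · rw [Matrix.IsSymm, transpose_mul, transpose_mul, transpose_transpose, hs.eq, Matrix.mul_assoc]
  · have gen : ∀ M : Matrix (Fin d) (Fin d) ℝ, M * (transvection j' j t)ᵀ =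
        M.updateCol j' (fun i => M i j' + t * M i j) := by
      intro M
      have : M * (transvection j' j t)ᵀ = (transvection j' j t * Mᵀ)ᵀ := by
        rw [transpose_mul, transpose_transpose]
      rw [this]
      ext a b
      rw [transpose_apply]
      by_cases hb : b = j'
      · subst hb; simp
      · simp [hb]
    have h1 := tp_transpose (tp_addcol (tp_transpose hA) ht hj)
    rw [← gen, transpose_mul, transpose_transpose, transpose_transpose] at h1
    rw [gen]
    exact tp_addcol h1 ht hj

/-- `W Wᵀ` is a limit of symmetric TP matrices -/
def Cl {d e : ℕ} (W : Matrix (Fin d) (Fin e) ℝ) : Prop := W * Wᵀ ∈ closure (S d)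

theorem Cl.op {d e : ℕ} {W W' : Matrix (Fin d) (Fin e) ℝ} (h : Cl W) (j j' : Fin d)
    (hj : j'.val = j.val + 1) (t : ℝ) (ht : 0 ≤ t)
    (h1 : ∀ a, a ≠ j' → W' a = W a) (h2 : ∀ b, W' j' b = W j' b + t * W j b) : Cl W' := by
  have : W' = transvection j' j t * W := by
    ext a b
    by_cases ha : a = j'
    · subst ha; simp [h2]
    · simp [ha, h1 a ha]
  unfold Cl
  rw [this, transpose_mul]
  have e : transvection j' j t * W * (Wᵀ * (transvection j' j t)ᵀ) =
    transvection j' j t * (W * Wᵀ) * (transvection j' j t)ᵀ := by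
    simp only [Matrix.mul_assoc]
  rw [e]
  exact map_mem_closure (f := fun A => transvection j' j t * A * (transvection j' j t)ᵀ)
    (by fun_prop) h (fun A hA => transv_mem hA ht hj)

theorem Cl.diag {d : ℕ} (x : Fin d → ℝ) (hx : ∀ i, 0 ≤ x i) : Cl (diagonal x) := by
  have pos : ∀ y : Fin d → ℝ, (∀ i, 0 < y i) → diagonal y * (diagonal y)ᵀ ∈ closure (S d) := by
    intro y hy
    have : diagonal y * 1 * (diagonal y)ᵀ ∈ closure (S d) := by
      refine map_mem_closure (f := fun A => diagonal y * A * (diagonal y)ᵀ)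
        (by fun_prop) (one_mem d) (fun A hA => ⟨?_, ?_⟩)
      · beta_reduce
        rw [Matrix.IsSymm, transpose_mul, transpose_mul, transpose_transpose, hA.1.eq, Matrix.mul_assoc]
      · have := tp_scale_col (tp_scale_row hA.2 hy) hy
        convert this using 1
        ext i j
        simp [mul_comm]
    simpa using this
  unfold Cl
  rw [← closure_closure]
  refine mem_closure_of_tendsto (f := fun s : ℝ => diagonal (fun i => x i + s) * (diagonal (fun i => x i + s))ᵀ)
    (b := 𝓝[>] 0) ?_ ?_
  · apply tendsto_nhdsWithin_of_tendsto_nhds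
    have : Continuous fun s : ℝ => diagonal (fun i => x i + s) * (diagonal (fun i => x i + s))ᵀ := by
      have : Continuous fun s : ℝ => diagonal (fun i => x i + s) :=
        Continuous.matrix_diagonal (by fun_prop)
      fun_prop
    simpa using this.tendsto 0
  · filter_upwards [self_mem_nhdsWithin] with s hs
    exact pos _ fun i => add_pos_of_nonneg_of_pos (hx i) hs

theorem minor_nonneg {F : ℝ → ℝ} {d : ℕ} (h : Pres F d) {B : Matrix (Fin d) (Fin d) ℝ}
    (hB : B ∈ closure (S d)) (hF : ∀ i j, ContinuousAt F (B i j)) (k : ℕ) (r c : Fin k → Fin d)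
    (hr : StrictMono r) (hc : StrictMono c) : 0 ≤ ((B.map F).submatrix r c).det := by
  have hne := mem_closure_iff_nhdsWithin_neBot.mp hB
  have hcont : ContinuousAt (fun A : Matrix (Fin d) (Fin d) ℝ => ((A.map F).submatrix r c).det) B := by
    have h1 : ContinuousAt (fun A : Matrix (Fin d) (Fin d) ℝ => (A.map F).submatrix r c) B := by
      refine tendsto_pi_nhds.mpr fun i => tendsto_pi_nhds.mpr fun j => ?_
      have : ContinuousAt (fun A : Matrix (Fin d) (Fin d) ℝ => A (r i) (c j)) B :=
        (continuous_id.matrix_elem _ _).continuousAt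
      exact ContinuousAt.comp (g := F) (hF _ _) this
    have h2 : ContinuousAt (fun M : Matrix (Fin k) (Fin k) ℝ => M.det) ((B.map F).submatrix r c) :=
      (continuous_id.matrix_det).continuousAt
    exact ContinuousAt.comp (g := fun M : Matrix (Fin k) (Fin k) ℝ => M.det)
      (f := fun A : Matrix (Fin d) (Fin d) ℝ => (A.map F).submatrix r c) h2 h1
  refine ge_of_tendsto (hcont.mono_left nhdsWithin_le_nhds : Tendsto _ (𝓝[S d] B) _) ?_
  filter_upwards [self_mem_nhdsWithin] with A hA
  exact (h A hA.1 hA.2 k r c hr hc).le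

end TPaux

namespace TPaux
open Matrix Filter Topology
set_option linter.unusedSimpArgs false

theorem tp_two {M : Matrix (Fin 2) (Fin 2) ℝ} (hp : ∀ i j, 0 < M i j)
    (hd : M 0 1 * M 1 0 < M 0 0 * M 1 1) : IsTPMat M := by
  intro k r c hr hc
  have := card_le_of_sm hr
  interval_cases k
  · simp
  · simpa using hp _ _
  · rw [sm_id hr, sm_id hc, submatrix_id_id, det_fin_two]; linarith

theorem pres_pos {F : ℝ → ℝ} {d : ℕ} (hd : 1 ≤ d) (h : Pres F d) {x : ℝ} (hx : 0 < x) : 0 < F x := by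
  have h1 : Pres F 1 := pres_le hd h
  have := h1 (Matrix.of fun _ _ => x) (by ext i j; rfl) ?_
  · simpa using entry_pos this 0 0
  · intro k r c hr hc
    have := card_le_of_sm hr
    interval_cases k
    · simp
    · simpa using hx

theorem pres_two {F : ℝ → ℝ} {d : ℕ} (hd : 2 ≤ d) (h : Pres F d) {a b c : ℝ} (ha : 0 < a) (hb : 0 < b)
    (hc : 0 < c) (habc : b ^ 2 < a * c) : F b ^ 2 < F a * F c := by
  have h2 : Pres F 2 := pres_le hd h
  have := h2 !![a, b; b, c] (by ext i j; fin_cases i <;> fin_cases j <;> rfl) ?_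
  · have := this 2 id id strictMono_id strictMono_id
    rw [submatrix_id_id, det_fin_two] at this
    simp at this
    nlinarith
  · apply tp_two
    · intro i j; fin_cases i <;> fin_cases j <;> simp [ha, hb, hc]
    · simp; nlinarith

theorem pres_strictMono {F : ℝ → ℝ} {d : ℕ} (hd : 2 ≤ d) (h : Pres F d) :
    StrictMonoOn F (Set.Ioi 0) := by
  intro x hx y hy hxy
  have hx : 0 < x := hx
  have hy : 0 < y := hy
  have := pres_two hd h hy hx hy (by nlinarith)
  have h1 := pres_pos (by omega) h hx
  have h2 := pres_pos (by omega) h hy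
  nlinarith

theorem pres_cont {F : ℝ → ℝ} {d : ℕ} (hd : 2 ≤ d) (h : Pres F d) {t : ℝ} (ht : 0 < t) :
    ContinuousAt F t := by
  have hpos : ∀ x, 0 < x → 0 < F x := fun x hx => pres_pos (by omega) h hx
  have hmono := pres_strictMono hd h
  set L := sInf (F '' Set.Ioi t) with hL
  have hbdd : BddBelow (F '' Set.Ioi t) := ⟨F t, by
    rintro _ ⟨x, hx, rfl⟩
    exact (hmono ht (lt_trans ht hx) hx).le⟩
  have hne : (F '' Set.Ioi t).Nonempty := ⟨_, t + 1, by simp, rfl⟩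
  have hLt : F t ≤ L := le_csInf hne (by
    rintro _ ⟨x, hx, rfl⟩
    exact (hmono ht (lt_trans ht hx) hx).le)
  have hFt := hpos t ht
  have key : ∀ η > 0, ∃ q : ℝ, 1 < q ∧ L - η < F (t / q) ∧ F (t * q) < L + η := by
    intro η hη
    obtain ⟨_, ⟨y, hy, rfl⟩, hyL⟩ := exists_lt_of_csInf_lt hne (show L < L + η by linarith)
    have hy : t < y := hy
    have hq : ∃ q : ℝ, 1 < q ∧ t * q ^ 4 < y := by
      have hc : Continuous fun q : ℝ => t * q ^ 4 := by fun_prop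
      have h1 : ∀ᶠ q in 𝓝[>] (1:ℝ), t * q ^ 4 < y :=
        nhdsWithin_le_nhds (hc.continuousAt.eventually (gt_mem_nhds (by simpa using hy)))
      obtain ⟨q, h1, h2⟩ := (h1.and self_mem_nhdsWithin).exists
      exact ⟨q, h2, h1⟩
    obtain ⟨q, hq1, hqy⟩ := hq
    have hq0 : 0 < q := by linarith
    have hq4 : q < q ^ 4 := by
      have : 1 < q ^ 3 := one_lt_pow₀ hq1 (by norm_num)
      nlinarith
    have h4 : F (t * q ^ 4) < L + η := lt_trans (hmono (Set.mem_Ioi.mpr (by positivity)) (lt_trans ht hy) hqy) hyL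
    have h1 : F (t * q) < F (t * q ^ 4) :=
      hmono (Set.mem_Ioi.mpr (by positivity)) (Set.mem_Ioi.mpr (by positivity)) (by nlinarith)
    have h0 : L ≤ F (t * q) := csInf_le hbdd ⟨_, by simp; nlinarith, rfl⟩
    have h2 := pres_two hd h (a := t / q) (b := t * q) (c := t * q ^ 4) (by positivity) (by positivity)
      (by positivity) (by
        have : t / q * (t * q ^ 4) = t ^ 2 * q ^ 3 := by field_simp
        rw [this, mul_pow]
        have : q ^ 2 < q ^ 3 := pow_lt_pow_right₀ hq1 (by norm_num)
        have := pow_pos ht 2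
        nlinarith)
    have h3 := hpos (t / q) (by positivity)
    refine ⟨q, hq1, ?_, by linarith⟩
    by_contra hcon
    push Not at hcon
    have h5 : F (t / q) * F (t * q ^ 4) ≤ (L - η) * (L + η) :=
      mul_le_mul hcon h4.le (hpos _ (by positivity)).le (by linarith)
    nlinarith
  have hLeq : L = F t := by
    apply le_antisymm _ hLt
    apply le_of_forall_pos_le_add
    intro η hη
    obtain ⟨q, hq, h1, -⟩ := key η hη
    have hq0 : 0 < q := by linarith
    have : F (t / q) < F t := hmono (Set.mem_Ioi.mpr (by positivity)) ht (div_lt_self ht hq)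
    linarith
  rw [Metric.continuousAt_iff']
  intro η hη
  obtain ⟨q, hq, h1, h2⟩ := key η hη
  have hq0 : 0 < q := by linarith
  have e1 : t / q < t := div_lt_self ht hq
  have e2 : t < t * q := by nlinarith
  filter_upwards [Ioo_mem_nhds e1 e2] with x hx
  have hx0 : 0 < x := lt_trans (by positivity) hx.1
  have e3 := hmono (Set.mem_Ioi.mpr (by positivity)) hx0 hx.1
  have e4 := hmono hx0 (Set.mem_Ioi.mpr (by positivity)) hx.2
  rw [Real.dist_eq, abs_lt]
  constructor <;> linarith

theorem pres_mid {F : ℝ → ℝ} {d : ℕ} (hd : 2 ≤ d) (h : Pres F d) {x y : ℝ} (hx : 0 < x) (hy : 0 < y) :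
    F (Real.sqrt (x * y)) ^ 2 ≤ F x * F y := by
  have hs : 0 < Real.sqrt (x * y) := Real.sqrt_pos.mpr (by positivity)
  have hc := (pres_cont hd h hs).pow 2
  refine le_of_tendsto (hc.mono_left nhdsWithin_le_nhds : Tendsto _ (𝓝[<] (Real.sqrt (x * y))) _) ?_
  filter_upwards [Ioo_mem_nhdsLT hs] with b hb
  refine (pres_two hd h hx hb.1 hy ?_).le
  rw [← Real.sq_sqrt (show 0 ≤ x * y by positivity)]
  exact pow_lt_pow_left₀ hb.2 hb.1.le (by norm_num)

theorem rank_one_mem {u v w : ℝ} (hu : 0 < u) (hv : 0 < v) (hw : 0 < w) :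
    Cl (!![u, 0, 0; v, 0, 0; w, 0, 0] : Matrix (Fin 3) (Fin 3) ℝ) := by
  have h0 : Cl (!![u, 0, 0; 0, 0, 0; 0, 0, 0] : Matrix (Fin 3) (Fin 3) ℝ) := by
    convert Cl.diag (d := 3) ![u, 0, 0] (by intro i; fin_cases i <;> simp [hu.le]) using 1
    ext i j; fin_cases i <;> fin_cases j <;> rfl
  have h1 : Cl (!![u, 0, 0; v, 0, 0; 0, 0, 0] : Matrix (Fin 3) (Fin 3) ℝ) := by
    refine h0.op 0 1 rfl (v / u) (by positivity) ?_ ?_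
    · intro a ha; fin_cases a <;> first | rfl | exact absurd rfl ha
    · intro b; fin_cases b <;> simp <;> field_simp
  refine h1.op 1 2 rfl (w / v) (by positivity) ?_ ?_
  · intro a ha; fin_cases a <;> first | rfl | exact absurd rfl ha
  · intro b; fin_cases b <;> simp <;> field_simp

theorem pres_mul_le {F : ℝ → ℝ} {d : ℕ} (hd : 3 ≤ d) (h : Pres F d) {p q s t : ℝ} (hp : 0 < p)
    (hq : 0 < q) (hs : 0 < s) (ht : 0 < t) (e : p * q = s * t) : F s * F t ≤ F p * F q := by
  have h3 : Pres F 3 := pres_le hd h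
  set v := Real.sqrt s with hv
  have hv0 : 0 < v := Real.sqrt_pos.mpr hs
  have hvv : v * v = s := Real.mul_self_sqrt hs.le
  have hm := rank_one_mem (u := p / v) (v := v) (w := q / v) (by positivity) hv0 (by positivity)
  have e1 : (!![p / v, 0, 0; v, 0, 0; q / v, 0, 0] : Matrix (Fin 3) (Fin 3) ℝ) *
      (!![p / v, 0, 0; v, 0, 0; q / v, 0, 0] : Matrix (Fin 3) (Fin 3) ℝ)ᵀ =
      !![p / v * (p / v), p, t; p, s, q; t, q, q / v * (q / v)] := by
    have e2 : p / v * (q / v) = t := by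
      rw [div_mul_div_comm, hvv, e]; field_simp
    have e3 : p / v * v = p := by field_simp
    have e4 : q / v * v = q := by field_simp
    have e5 : v * (p / v) = p := by field_simp
    have e6 : v * (q / v) = q := by field_simp
    have e7 : q / v * (p / v) = t := by rw [mul_comm, e2]
    ext i j; fin_cases i <;> fin_cases j <;>
      simp [Matrix.mul_apply, Fin.sum_univ_three, e2, e3, e4, e5, e6, e7, hvv]
  unfold Cl at hm
  rw [e1] at hm
  have hs1 : StrictMono (![0, 1] : Fin 2 → Fin 3) := by decide
  have hs2 : StrictMono (![1, 2] : Fin 2 → Fin 3) := by decide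
  have := minor_nonneg h3 hm (by
    intro i j
    apply pres_cont (d := 3) (by norm_num) h3
    fin_cases i <;> fin_cases j <;> first | exact hp | exact hq | exact hs | exact ht |
      exact mul_pos (div_pos hp hv0) (div_pos hp hv0) |
      exact mul_pos (div_pos hq hv0) (div_pos hq hv0)) 2 ![0, 1] ![1, 2] hs1 hs2
  rw [det_fin_two] at this
  simp at this
  linarith

theorem pres_power {F : ℝ → ℝ} {d : ℕ} (hd : 3 ≤ d) (h : Pres F d) :
    ∃ c : ℝ, 0 < c ∧ ∃ α : ℝ, 0 < α ∧ ∀ x : ℝ, 0 < x → F x = c * x ^ α := by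
  have hpos : ∀ x, 0 < x → 0 < F x := fun x hx => pres_pos (by omega) h hx
  have hmul : ∀ x y, 0 < x → 0 < y → F x * F y = F 1 * F (x * y) := by
    intro x y hx hy
    have hxy : 0 < x * y := by positivity
    exact le_antisymm (pres_mul_le hd h one_pos hxy hx hy (by ring))
      (pres_mul_le hd h hx hy one_pos hxy (by ring))
  have h1 := hpos 1 one_pos
  let G : ℝ →+ ℝ := AddMonoidHom.mk' (fun t => Real.log (F (Real.exp t)) - Real.log (F 1)) (by
    intro a b
    have := hmul _ _ (Real.exp_pos a) (Real.exp_pos b)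
    have h2 := congrArg Real.log this
    rw [Real.log_mul (hpos _ (Real.exp_pos a)).ne' (hpos _ (Real.exp_pos b)).ne', ← Real.exp_add,
      Real.log_mul h1.ne' (hpos _ (Real.exp_pos _)).ne'] at h2
    linarith)
  have hG : Continuous G := by
    rw [continuous_iff_continuousAt]
    intro t
    have c1 : ContinuousAt (fun t => F (Real.exp t)) t :=
      ContinuousAt.comp (g := F) (pres_cont (by omega) h (Real.exp_pos t)) Real.continuous_exp.continuousAt
    exact (c1.log (hpos _ (Real.exp_pos t)).ne').sub continuousAt_const
  have hlin : ∀ t, G t = t * G 1 := by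
    intro t
    have := map_real_smul G hG t 1
    simpa using this
  have hF : ∀ x, 0 < x → F x = F 1 * x ^ (G 1) := by
    intro x hx
    have := hlin (Real.log x)
    have e : G (Real.log x) = Real.log (F x) - Real.log (F 1) := by
      show Real.log (F (Real.exp (Real.log x))) - _ = _
      rw [Real.exp_log hx]
    rw [e] at this
    rw [Real.rpow_def_of_pos hx, ← this, Real.exp_sub, Real.exp_log (hpos x hx), Real.exp_log h1]
    field_simp
  refine ⟨F 1, h1, G 1, ?_, hF⟩
  have hm := pres_strictMono (by omega) h (show (1:ℝ) ∈ Set.Ioi 0 by simp) (show (2:ℝ) ∈ Set.Ioi 0 by simp) (by norm_num)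
  rw [hF 2 (by norm_num)] at hm
  by_contra hc
  push Not at hc
  have : (2:ℝ) ^ (G 1) ≤ 1 := Real.rpow_le_one_of_one_le_of_nonpos (by norm_num) hc
  nlinarith

theorem pres_pow_of {F : ℝ → ℝ} {d : ℕ} (h : Pres F d) {c α : ℝ} (hc : 0 < c)
    (hF : ∀ x : ℝ, 0 < x → F x = c * x ^ α) : Pres (fun x => x ^ α) d := by
  intro A hs hA k r cc hr hcc
  have := h A hs hA k r cc hr hcc
  have e : (A.map F).submatrix r cc = c • (A.map fun x => x ^ α).submatrix r cc := by
    ext i j; simp [hF _ (entry_pos hA _ _)]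
  rw [e, det_smul] at this
  exact pos_of_mul_pos_right this (by positivity)

theorem pow_three {α : ℝ} (h : Pres (fun x => x ^ α) 3) (hα : 0 < α) : 1 ≤ α := by
  have h0 : Cl (!![1, 0, 0; 0, 1, 0; 0, 0, 0] : Matrix (Fin 3) (Fin 3) ℝ) := by
    convert Cl.diag (d := 3) ![1, 1, 0] (by intro i; fin_cases i <;> simp) using 1
    ext i j; fin_cases i <;> fin_cases j <;> rfl
  have h1 : Cl (!![1, 0, 0; 0, 1, 0; 0, 1, 0] : Matrix (Fin 3) (Fin 3) ℝ) := by
    refine h0.op 1 2 rfl 1 (by positivity) ?_ ?_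
    · intro a ha; fin_cases a <;> first | rfl | exact absurd rfl ha
    · intro b; fin_cases b <;> simp
  have h2 : Cl (!![1, 0, 0; 1, 1, 0; 0, 1, 0] : Matrix (Fin 3) (Fin 3) ℝ) := by
    refine h1.op 0 1 rfl 1 (by positivity) ?_ ?_
    · intro a ha; fin_cases a <;> first | rfl | exact absurd rfl ha
    · intro b; fin_cases b <;> simp
  have e1 : (!![1, 0, 0; 1, 1, 0; 0, 1, 0] : Matrix (Fin 3) (Fin 3) ℝ) *
      (!![1, 0, 0; 1, 1, 0; 0, 1, 0] : Matrix (Fin 3) (Fin 3) ℝ)ᵀ =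
      !![1, 1, 0; 1, 2, 1; 0, 1, 1] := by
    ext i j; fin_cases i <;> fin_cases j <;>
      simp [Matrix.mul_apply, Fin.sum_univ_three]
    norm_num
  unfold Cl at h2
  rw [e1] at h2
  have := minor_nonneg h h2 (fun i j => (Real.continuous_rpow_const hα.le).continuousAt)
    3 id id strictMono_id strictMono_id
  rw [submatrix_id_id, det_fin_three] at this
  simp [Real.zero_rpow hα.ne'] at this
  by_contra hcon
  push Not at hcon
  have : (2:ℝ) ^ α < 2 ^ (1:ℝ) := Real.rpow_lt_rpow_of_exponent_lt (by norm_num) hcon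
  norm_num at this
  linarith

end TPaux

namespace TPaux
open Matrix Filter Topology
set_option linter.unusedSimpArgs false

theorem lim1 (α s : ℝ) :
    Tendsto (fun ε : ℝ => ((1 + s * ε) ^ α - 1) / ε) (𝓝[>] 0) (𝓝 (α * s)) := by
  have hd : HasDerivAt (fun ε : ℝ => (1 + s * ε) ^ α) (s * α * (1 + s * 0) ^ (α - 1)) 0 := by
    have h1 : HasDerivAt (fun ε : ℝ => 1 + s * ε) s 0 := by
      simpa using ((hasDerivAt_id (0:ℝ)).const_mul s).const_add 1
    exact h1.rpow_const (Or.inl (by norm_num))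
  have := hd.tendsto_slope_zero_right
  simp at this
  refine (this.congr' ?_).trans (by rw [mul_comm])
  filter_upwards with ε
  rw [div_eq_inv_mul]

theorem lim2 (α s : ℝ) (hs : 0 ≤ s) :
    Tendsto (fun ε : ℝ => ((1 + 2 * s * ε) ^ α - 2 * (1 + s * ε) ^ α + 1) / ε ^ 2) (𝓝[>] 0)
      (𝓝 (α * (α - 1) * s ^ 2)) := by
  have hd : ∀ u : ℝ, 0 ≤ u → ∀ ε : ℝ, 0 ≤ ε → HasDerivAt (fun ε : ℝ => (1 + u * ε) ^ α)
      (u * α * (1 + u * ε) ^ (α - 1)) ε := by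
    intro u hu ε hε
    have h1 : HasDerivAt (fun ε : ℝ => 1 + u * ε) u ε := by
      simpa using ((hasDerivAt_id (ε:ℝ)).const_mul u).const_add 1
    exact h1.rpow_const (Or.inl (by positivity))
  have hf : ∀ ε : ℝ, 0 ≤ ε → HasDerivAt (fun ε : ℝ => (1 + 2 * s * ε) ^ α - 2 * (1 + s * ε) ^ α + 1)
      (2 * s * α * (1 + 2 * s * ε) ^ (α - 1) - 2 * (s * α * (1 + s * ε) ^ (α - 1))) ε := by
    intro ε hε
    exact ((hd (2 * s) (by positivity) ε hε).sub ((hd s hs ε hε).const_mul 2)).add_const 1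
  have hg : ∀ ε : ℝ, HasDerivAt (fun ε : ℝ => ε ^ 2) (2 * ε) ε := by
    intro ε; simpa using hasDerivAt_pow 2 ε
  refine HasDerivAt.lhopital_zero_nhdsGT (f' := fun ε => 2 * s * α * (1 + 2 * s * ε) ^ (α - 1) - 2 * (s * α * (1 + s * ε) ^ (α - 1)))
    (g' := fun ε => 2 * ε) ?_ ?_ ?_ ?_ ?_ ?_
  · filter_upwards [self_mem_nhdsWithin] with ε hε using hf ε (le_of_lt hε)
  · filter_upwards with ε using hg ε
  · filter_upwards [self_mem_nhdsWithin] with ε hε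
    have : 0 < ε := hε
    positivity
  · have := (hf 0 le_rfl).continuousAt.tendsto
    norm_num at this
    exact this.mono_left nhdsWithin_le_nhds
  · have := (hg 0).continuousAt.tendsto
    norm_num at this
    exact this.mono_left nhdsWithin_le_nhds
  · have := ((lim1 (α - 1) (2 * s)).sub (lim1 (α - 1) s)).const_mul (α * s)
    have e : α * s * ((α - 1) * (2 * s) - (α - 1) * s) = α * (α - 1) * s ^ 2 := by ring
    rw [e] at this
    refine this.congr' ?_
    filter_upwards [self_mem_nhdsWithin] with ε hε
    have : 0 < ε := hε
    field_simp
    ring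

theorem det4 (x y z w : ℝ) : (!![1,1,1,0;1,x,y,w;1,y,z,1;0,w,1,1] : Matrix (Fin 4) (Fin 4) ℝ).det =
    (x-1-w^2)*(z-2)-(y-1-w)^2 := by
  rw [det_succ_row_zero]
  simp [Fin.sum_univ_succ, det_fin_three, Fin.succAbove]
  ring

theorem det5 (ε a1 a2 a3 a4 q1 q2 q3 q4 c1 c2 c3 c4 : ℝ) :
    (!![1,1,1,1;1+ε*a1,1+ε*a2,1+ε*a3,1+ε*a4;
      1+2*ε*a1+ε^2*q1,1+2*ε*a2+ε^2*q2,1+2*ε*a3+ε^2*q3,1+2*ε*a4+ε^2*q4;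
      1+ε*c1,1+ε*c2,1+ε*c3,1+ε*c4] : Matrix (Fin 4) (Fin 4) ℝ).det =
    ε^4 * (!![1,1,1,1;a1,a2,a3,a4;q1,q2,q3,q4;c1,c2,c3,c4] : Matrix (Fin 4) (Fin 4) ℝ).det := by
  rw [det_succ_row_zero, det_succ_row_zero]
  simp [Fin.sum_univ_succ, det_fin_three, Fin.succAbove]
  ring

theorem det5_exp (a1 a2 a3 a4 q1 q2 q3 q4 c1 c2 c3 c4 : ℝ) :
    (!![1,1,1,1;a1,a2,a3,a4;q1,q2,q3,q4;c1,c2,c3,c4] : Matrix (Fin 4) (Fin 4) ℝ).det =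
    (a2-a1)*((q3-q1)*(c4-c1)-(q4-q1)*(c3-c1)) - (a3-a1)*((q2-q1)*(c4-c1)-(q4-q1)*(c2-c1))
     + (a4-a1)*((q2-q1)*(c3-c1)-(q3-q1)*(c2-c1)) := by
  rw [det_succ_row_zero]
  simp [Fin.sum_univ_succ, det_fin_three, Fin.succAbove]
  ring

theorem det5_lim {l : Filter ℝ} {a1 a2 a3 a4 q1 q2 q3 q4 c1 c2 c3 c4 : ℝ → ℝ}
    {A1 A2 A3 A4 Q1 Q2 Q3 Q4 C1 C2 C3 C4 : ℝ}
    (ha1 : Tendsto a1 l (𝓝 A1)) (ha2 : Tendsto a2 l (𝓝 A2)) (ha3 : Tendsto a3 l (𝓝 A3))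
    (ha4 : Tendsto a4 l (𝓝 A4))
    (hq1 : Tendsto q1 l (𝓝 Q1)) (hq2 : Tendsto q2 l (𝓝 Q2)) (hq3 : Tendsto q3 l (𝓝 Q3))
    (hq4 : Tendsto q4 l (𝓝 Q4))
    (hc1 : Tendsto c1 l (𝓝 C1)) (hc2 : Tendsto c2 l (𝓝 C2)) (hc3 : Tendsto c3 l (𝓝 C3))
    (hc4 : Tendsto c4 l (𝓝 C4)) :
    Tendsto (fun e => (!![1,1,1,1;a1 e,a2 e,a3 e,a4 e;q1 e,q2 e,q3 e,q4 e;c1 e,c2 e,c3 e,c4 e] :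
      Matrix (Fin 4) (Fin 4) ℝ).det) l
    (𝓝 ((A2-A1)*((Q3-Q1)*(C4-C1)-(Q4-Q1)*(C3-C1)) - (A3-A1)*((Q2-Q1)*(C4-C1)-(Q4-Q1)*(C2-C1))
     + (A4-A1)*((Q2-Q1)*(C3-C1)-(Q3-Q1)*(C2-C1)))) := by
  simp only [det5_exp]
  exact ((((ha2.sub ha1).mul (((hq3.sub hq1).mul (hc4.sub hc1)).sub ((hq4.sub hq1).mul (hc3.sub hc1)))).sub
    ((ha3.sub ha1).mul (((hq2.sub hq1).mul (hc4.sub hc1)).sub ((hq4.sub hq1).mul (hc2.sub hc1)))))).add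
    ((ha4.sub ha1).mul (((hq2.sub hq1).mul (hc3.sub hc1)).sub ((hq3.sub hq1).mul (hc2.sub hc1))))

theorem four_alg (s q r p v : ℝ) (hs : 0 < s)
    (h : 0 ≤ (q - 1 - (p * s)^2) * v - (r - 1 - p * s)^2) :
    0 ≤ ((q - 1) / s^2 - p^2) * v - ((r - 1)/s - p)^2 := by
  have : ((q - 1) / s^2 - p^2) * v - ((r - 1)/s - p)^2 =
    ((q - 1 - (p * s)^2) * v - (r - 1 - p * s)^2) / s^2 := by
    field_simp
  rw [this]; positivity

theorem pow_four {α : ℝ} (h : Pres (fun x => x ^ α) 4) (h1 : 1 < α) (h2 : α < 2) : False := by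
  have key : ∀ s : ℝ, 0 < s → s < 1 →
      0 ≤ ((1 + s^2)^α - 1 - (s^α)^2) * (2^α - 2) - ((1+s)^α - 1 - s^α)^2 := by
    intro s hs hs1
    have hs2 : 0 < 1 - s := by linarith
    have c0 : Cl (!![1, 0, 0, 0; 0, s, 0, 0; 0, 0, 0, 0; 0, 0, 0, 0] : Matrix (Fin 4) (Fin 4) ℝ) := by
      convert Cl.diag (d := 4) ![1, s, 0, 0] (by intro i; fin_cases i <;> simp [hs.le]) using 1
      ext i j; fin_cases i <;> fin_cases j <;> rfl
    have c1 : Cl (!![1, 0, 0, 0; 0, s, 0, 0; 0, 1-s, 0, 0; 0, 0, 0, 0] : Matrix (Fin 4) (Fin 4) ℝ) := by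
      refine c0.op 1 2 rfl ((1-s)/s) (by positivity) ?_ ?_
      · intro a ha; fin_cases a <;> first | exact absurd rfl ha | (ext b; fin_cases b <;> simp)
      · intro b; fin_cases b <;> simp; field_simp
    have c2 : Cl (!![1, 0, 0, 0; 0, s, 0, 0; 0, 1-s, 0, 0; 0, 1, 0, 0] : Matrix (Fin 4) (Fin 4) ℝ) := by
      refine c1.op 2 3 rfl (1/(1-s)) (by positivity) ?_ ?_
      · intro a ha; fin_cases a <;> first | exact absurd rfl ha | (ext b; fin_cases b <;> simp)
      · intro b; fin_cases b <;> simp; field_simp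
    have c3 : Cl (!![1, 0, 0, 0; 1, s, 0, 0; 0, 1-s, 0, 0; 0, 1, 0, 0] : Matrix (Fin 4) (Fin 4) ℝ) := by
      refine c2.op 0 1 rfl 1 (by positivity) ?_ ?_
      · intro a ha; fin_cases a <;> first | exact absurd rfl ha | (ext b; fin_cases b <;> simp)
      · intro b; fin_cases b <;> simp
    have c4 : Cl (!![1, 0, 0, 0; 1, s, 0, 0; 1, 1, 0, 0; 0, 1, 0, 0] : Matrix (Fin 4) (Fin 4) ℝ) := by
      refine c3.op 1 2 rfl 1 (by positivity) ?_ ?_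
      · intro a ha; fin_cases a <;> first | exact absurd rfl ha | (ext b; fin_cases b <;> simp)
      · intro b; fin_cases b <;> simp
    have e1 : (!![1, 0, 0, 0; 1, s, 0, 0; 1, 1, 0, 0; 0, 1, 0, 0] : Matrix (Fin 4) (Fin 4) ℝ) *
        (!![1, 0, 0, 0; 1, s, 0, 0; 1, 1, 0, 0; 0, 1, 0, 0] : Matrix (Fin 4) (Fin 4) ℝ)ᵀ =
        !![1,1,1,0; 1,1+s^2,1+s,s; 1,1+s,2,1; 0,s,1,1] := by
      ext i j; fin_cases i <;> fin_cases j <;>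
        simp [Matrix.mul_apply, Fin.sum_univ_four] <;> norm_num <;> ring
    unfold Cl at c4
    rw [e1] at c4
    have := minor_nonneg h c4 (fun i j => (Real.continuous_rpow_const (by linarith)).continuousAt)
      4 id id strictMono_id strictMono_id
    have e2 : (!![1,1,1,0; 1,1+s^2,1+s,s; 1,1+s,2,1; 0,s,1,1] : Matrix (Fin 4) (Fin 4) ℝ).map (fun x => x ^ α)
       = !![1,1,1,0;1,(1+s^2)^α,(1+s)^α,s^α;1,(1+s)^α,2^α,1;0,s^α,1,1] := by
      have h0 : α ≠ 0 := by linarith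
      ext i j; fin_cases i <;> fin_cases j <;> simp [Real.zero_rpow h0]
    rw [submatrix_id_id, e2, det4] at this
    exact this
  have hsq : Tendsto (fun s : ℝ => s ^ 2) (𝓝[>] 0) (𝓝[>] 0) := by
    apply tendsto_nhdsWithin_of_tendsto_nhds_of_eventually_within
    · have : Tendsto (fun s : ℝ => s ^ 2) (𝓝 0) (𝓝 (0 ^ 2)) := (continuous_pow 2).tendsto 0
      norm_num at this
      exact this.mono_left nhdsWithin_le_nhds
    · filter_upwards [self_mem_nhdsWithin] with s hs
      have : 0 < s := hs
      exact Set.mem_Ioi.mpr (by positivity)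
  have l1 := (lim1 α 1)
  have l2 := l1.comp hsq
  have l3 : Tendsto (fun s : ℝ => s ^ (α - 1)) (𝓝[>] 0) (𝓝 0) := by
    have := (Real.continuous_rpow_const (show 0 ≤ α - 1 by linarith)).tendsto 0
    rw [Real.zero_rpow (by linarith)] at this
    exact this.mono_left nhdsWithin_le_nhds
  have L := ((l2.sub (l3.pow 2)).mul_const (2^α - 2)).sub ((l1.sub l3).pow 2)
  have hge := ge_of_tendsto (b := 0) L ?_
  · have hb : (2:ℝ) ^ α < 2 + α := by
      have := rpow_one_add_le_one_add_mul_self (s := 1) (p := α - 1) (by norm_num) (by linarith) (by linarith)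
      have e : (2:ℝ) ^ α = 2 * 2 ^ (α - 1) := by
        rw [Real.rpow_sub_one (by norm_num)]; ring
      norm_num at this
      rw [e]; linarith
    nlinarith
  · filter_upwards [Ioo_mem_nhdsGT (show (0:ℝ) < 1 by norm_num)] with s hs
    obtain ⟨hs0, hs1⟩ := hs
    have hk := key s hs0 hs1
    have e : s ^ α = s ^ (α - 1) * s := by
      rw [Real.rpow_sub_one hs0.ne']; field_simp
    rw [e] at hk
    have h4 := four_alg s ((1 + s^2)^α) ((1+s)^α) (s ^ (α - 1)) (2^α - 2) hs0 hk
    simpa only [Function.comp_def, one_mul] using h4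

end TPaux

namespace TPaux
open Matrix Filter Topology
set_option linter.unusedSimpArgs false

theorem five_key {α : ℝ} (h : Pres (fun x => x ^ α) 5) (h1 : 1 < α) : ∀ e : ℝ, 0 < e →
      0 ≤ (!![1,1,1,1; (1+1*e)^α, (1+2*e)^α, (1+3*e)^α, (1+4*e)^α;
        (1+2*1*e)^α, (1+2*2*e)^α, (1+2*3*e)^α, (1+2*4*e)^α;
        (1+3*e)^α, (1+6*e)^α, (1+10*e)^α, (1+14*e)^α] : Matrix (Fin 4) (Fin 4) ℝ).det := by
  intro e' he'
  set e := Real.sqrt e' with hee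
  have he : 0 < e := Real.sqrt_pos.mpr he'
  have hesq : e ^ 2 = e' := Real.sq_sqrt he'.le
  have c0 : Cl (!![1,0,0,0,0; 0,e,0,0,0; 0,0,0,0,0; 0,0,0,e,0; 0,0,0,0,0] : Matrix (Fin 5) (Fin 5) ℝ) := by
    convert Cl.diag (d := 5) ![1, e, 0, e, 0] (by intro i; fin_cases i <;> simp [he.le]) using 1
    ext i j; fin_cases i <;> fin_cases j <;> rfl
  have c1 : Cl (!![1,0,0,0,0; 0,e,0,0,0; 0,e,0,0,0; 0,0,0,e,0; 0,0,0,0,0] : Matrix (Fin 5) (Fin 5) ℝ) := by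
    refine c0.op 1 2 rfl 1 zero_le_one ?_ ?_
    · intro a ha; fin_cases a <;> first | exact absurd rfl ha | (ext b; fin_cases b <;> simp)
    · intro b; fin_cases b <;> simp
  have c2 : Cl (!![1,0,0,0,0; 0,e,0,0,0; 0,e,0,0,0; 0,e,0,e,0; 0,0,0,0,0] : Matrix (Fin 5) (Fin 5) ℝ) := by
    refine c1.op 2 3 rfl 1 zero_le_one ?_ ?_
    · intro a ha; fin_cases a <;> first | exact absurd rfl ha | (ext b; fin_cases b <;> simp)
    · intro b; fin_cases b <;> simp
  have c3 : Cl (!![1,0,0,0,0; 0,e,0,0,0; 0,e,0,0,0; 0,e,0,e,0; 0,e,0,e,0] : Matrix (Fin 5) (Fin 5) ℝ) := by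
    refine c2.op 3 4 rfl 1 zero_le_one ?_ ?_
    · intro a ha; fin_cases a <;> first | exact absurd rfl ha | (ext b; fin_cases b <;> simp)
    · intro b; fin_cases b <;> simp
  have c4 : Cl (!![1,0,0,0,0; 1,e,0,0,0; 0,e,0,0,0; 0,e,0,e,0; 0,e,0,e,0] : Matrix (Fin 5) (Fin 5) ℝ) := by
    refine c3.op 0 1 rfl 1 zero_le_one ?_ ?_
    · intro a ha; fin_cases a <;> first | exact absurd rfl ha | (ext b; fin_cases b <;> simp)
    · intro b; fin_cases b <;> simp
  have c5 : Cl (!![1,0,0,0,0; 1,e,0,0,0; 1,2*e,0,0,0; 0,e,0,e,0; 0,e,0,e,0] : Matrix (Fin 5) (Fin 5) ℝ) := by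
    refine c4.op 1 2 rfl 1 zero_le_one ?_ ?_
    · intro a ha; fin_cases a <;> first | exact absurd rfl ha | (ext b; fin_cases b <;> simp)
    · intro b; fin_cases b <;> simp; ring
  have c6 : Cl (!![1,0,0,0,0; 1,e,0,0,0; 1,2*e,0,0,0; 1,3*e,0,e,0; 0,e,0,e,0] : Matrix (Fin 5) (Fin 5) ℝ) := by
    refine c5.op 2 3 rfl 1 zero_le_one ?_ ?_
    · intro a ha; fin_cases a <;> first | exact absurd rfl ha | (ext b; fin_cases b <;> simp)
    · intro b; fin_cases b <;> simp; ring
  have c7 : Cl (!![1,0,0,0,0; 1,e,0,0,0; 1,2*e,0,0,0; 1,3*e,0,e,0; 1,4*e,0,2*e,0] : Matrix (Fin 5) (Fin 5) ℝ) := by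
    refine c6.op 3 4 rfl 1 zero_le_one ?_ ?_
    · intro a ha; fin_cases a <;> first | exact absurd rfl ha | (ext b; fin_cases b <;> simp)
    · intro b; fin_cases b <;> simp <;> ring
  have hs1 : StrictMono (![0, 1, 2, 3] : Fin 4 → Fin 5) := by decide
  have hs2 : StrictMono (![1, 2, 3, 4] : Fin 4 → Fin 5) := by decide
  have e1 : (!![1,0,0,0,0; 1,e,0,0,0; 1,2*e,0,0,0; 1,3*e,0,e,0; 1,4*e,0,2*e,0] : Matrix (Fin 5) (Fin 5) ℝ) *
      (!![1,0,0,0,0; 1,e,0,0,0; 1,2*e,0,0,0; 1,3*e,0,e,0; 1,4*e,0,2*e,0] : Matrix (Fin 5) (Fin 5) ℝ)ᵀ =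
      !![1,1,1,1,1; 1,1+1*e',1+2*e',1+3*e',1+4*e'; 1,1+2*1*e',1+2*2*e',1+2*3*e',1+2*4*e';
        1,1+3*e',1+6*e',1+10*e',1+14*e'; 1,1+4*e',1+8*e',1+14*e',1+20*e'] := by
    rw [← hesq]
    ext i j; fin_cases i <;> fin_cases j <;>
      simp [Matrix.mul_apply, Fin.sum_univ_five] <;> ring
  unfold Cl at c7
  rw [e1] at c7
  have := minor_nonneg h c7 (fun i j => (Real.continuous_rpow_const (by linarith)).continuousAt)
    4 _ _ hs1 hs2
  convert this using 2
  ext i j; fin_cases i <;> fin_cases j <;> simp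

end TPaux

namespace TPaux
open Matrix Filter Topology
set_option linter.unusedSimpArgs false

theorem pow_five {α : ℝ} (h : Pres (fun x => x ^ α) 5) (h1 : 1 < α) : False := by
  have key := five_key h h1
  have hdet := det5_lim (lim1 α 1) (lim1 α 2) (lim1 α 3) (lim1 α 4)
    (lim2 α 1 (by norm_num)) (lim2 α 2 (by norm_num)) (lim2 α 3 (by norm_num)) (lim2 α 4 (by norm_num))
    (lim1 α 3) (lim1 α 6) (lim1 α 10) (lim1 α 14)
  have hge := ge_of_tendsto (b := 0) hdet ?_
  · have : 0 < α^3 * (α - 1) := mul_pos (by positivity) (by linarith)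
    nlinarith
  · filter_upwards [self_mem_nhdsWithin] with e he
    have he : 0 < e := he
    have hk := key e he
    have h5 := det5 e (((1+1*e)^α-1)/e) (((1+2*e)^α-1)/e) (((1+3*e)^α-1)/e) (((1+4*e)^α-1)/e)
      (((1+2*1*e)^α-2*(1+1*e)^α+1)/e^2) (((1+2*2*e)^α-2*(1+2*e)^α+1)/e^2)
      (((1+2*3*e)^α-2*(1+3*e)^α+1)/e^2) (((1+2*4*e)^α-2*(1+4*e)^α+1)/e^2)
      (((1+3*e)^α-1)/e) (((1+6*e)^α-1)/e) (((1+10*e)^α-1)/e) (((1+14*e)^α-1)/e)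
    have t1 : ∀ x : ℝ, 1 + e * ((x - 1) / e) = x := by intro x; field_simp; ring
    have t2 : ∀ x y : ℝ, 1 + 2 * e * ((x - 1) / e) + e ^ 2 * ((y - 2 * x + 1) / e ^ 2) = y := by
      intro x y; field_simp; ring
    simp only [t1, t2] at h5
    rw [h5] at hk
    exact nonneg_of_mul_nonneg_right hk (by positivity)

end TPaux

namespace TPaux
open Matrix Filter Topology
set_option linter.unusedSimpArgs false

theorem slope_aux {α : ℝ} (hα : 1 ≤ α) {w z : ℝ} (hw : 0 < w) (hwz : w ≤ z) (hz : z < 1) :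
    (1 - z) * (1 - w ^ α) ≤ (1 - w) * (1 - z ^ α) := by
  have h := (convexOn_rpow hα).secant_mono (a := 1) (x := w) (y := z) (by simp) hw.le
    (show (0:ℝ) ≤ z by linarith) (by linarith) (by linarith) hwz
  simp only [Real.one_rpow] at h
  have e1 : (w ^ α - 1) / (w - 1) = (1 - w ^ α) / (1 - w) := by
    rw [← neg_sub, ← neg_sub 1 w, neg_div_neg_eq]
  have e2 : (z ^ α - 1) / (z - 1) = (1 - z ^ α) / (1 - z) := by
    rw [← neg_sub, ← neg_sub 1 z, neg_div_neg_eq]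
  rw [e1, e2, div_le_div_iff₀ (by linarith) (by linarith)] at h
  linarith

theorem slope_aux2 {α : ℝ} (hα : 1 ≤ α) {X Y : ℝ} (hX : 1 < X) (hXY : X ≤ Y) :
    (X - 1) * X ^ (α - 1) * (Y ^ α - 1) ≤ (Y - 1) * Y ^ (α - 1) * (X ^ α - 1) := by
  have hX0 : 0 < X := by linarith
  have hY0 : 0 < Y := by linarith
  have h := slope_aux hα (w := Y⁻¹) (z := X⁻¹) (by positivity) (by gcongr) (inv_lt_one_of_one_lt₀ hX)
  rw [Real.inv_rpow hX0.le, Real.inv_rpow hY0.le] at h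
  rw [Real.rpow_sub_one hX0.ne', Real.rpow_sub_one hY0.ne']
  have hp : 0 < X ^ α := by positivity
  have hq : 0 < Y ^ α := by positivity
  generalize X ^ α = p at *
  generalize Y ^ α = q at *
  have e1 : (X - 1) * (p / X) * (q - 1) = p * q * ((1 - X⁻¹) * (1 - q⁻¹)) := by field_simp
  have e2 : (Y - 1) * (q / Y) * (p - 1) = p * q * ((1 - Y⁻¹) * (1 - p⁻¹)) := by field_simp
  rw [e1, e2]
  exact mul_le_mul_of_nonneg_left h (by positivity)

theorem ratio_mono {α ρ : ℝ} (hα : 1 ≤ α) (hρ : 1 ≤ ρ) :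
    MonotoneOn (fun u : ℝ => ((1 + ρ * u) ^ α - 1) / ((1 + 1 * u) ^ α - 1)) (Set.Ioi 0) := by
  have hd : ∀ r : ℝ, 0 < r → ∀ u : ℝ, 0 < u → HasDerivAt (fun u : ℝ => (1 + r * u) ^ α - 1)
      (r * α * (1 + r * u) ^ (α - 1)) u := by
    intro r hr u hu
    have h1 : HasDerivAt (fun ε : ℝ => 1 + r * ε) r u := by
      simpa using ((hasDerivAt_id (u:ℝ)).const_mul r).const_add 1
    exact (h1.rpow_const (Or.inl (by positivity))).sub_const 1
  have hne : ∀ u : ℝ, 0 < u → 0 < (1 + 1 * u) ^ α - 1 := by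
    intro u hu
    have := Real.one_lt_rpow (show 1 < 1 + 1 * u by linarith) (show 0 < α by linarith)
    linarith
  have hD : ∀ u : ℝ, 0 < u → HasDerivAt (fun u : ℝ => ((1 + ρ * u) ^ α - 1) / ((1 + 1 * u) ^ α - 1))
      _ u := fun u hu => (hd ρ (by linarith) u hu).div (hd 1 one_pos u hu) (hne u hu).ne'
  apply monotoneOn_of_deriv_nonneg (convex_Ioi 0)
  · intro u hu; exact (hD u hu).continuousAt.continuousWithinAt
  · intro u hu; rw [interior_Ioi] at hu; exact (hD u hu).differentiableAt.differentiableWithinAt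
  · intro u hu
    rw [interior_Ioi] at hu
    have hu : 0 < u := hu
    rw [(hD u hu).deriv]
    apply div_nonneg _ (by positivity)
    have hρu : u ≤ ρ * u := by nlinarith
    have := slope_aux2 hα (X := 1 + 1 * u) (Y := 1 + ρ * u) (by linarith) (by linarith)
    have h2 : 0 ≤ u * (ρ * α * (1 + ρ * u) ^ (α - 1) * ((1 + 1 * u) ^ α - 1) -
      ((1 + ρ * u) ^ α - 1) * (1 * α * (1 + 1 * u) ^ (α - 1))) := by
      have e : u * (ρ * α * (1 + ρ * u) ^ (α - 1) * ((1 + 1 * u) ^ α - 1) -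
        ((1 + ρ * u) ^ α - 1) * (1 * α * (1 + 1 * u) ^ (α - 1))) =
        α * ((1 + ρ * u - 1) * (1 + ρ * u) ^ (α - 1) * ((1 + 1 * u) ^ α - 1) -
          (1 + 1 * u - 1) * (1 + 1 * u) ^ (α - 1) * ((1 + ρ * u) ^ α - 1)) := by ring
      rw [e]
      exact mul_nonneg (by linarith) (by linarith)
    exact nonneg_of_mul_nonneg_right h2 hu

theorem three_core {α : ℝ} (hα : 1 ≤ α) {a b c d : ℝ} (ha : 1 < a) (hab : a < b) (hac : a < c)
    (h : (b - 1) * (c - 1) < (a - 1) * (d - 1)) :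
    (b ^ α - 1) * (c ^ α - 1) < (a ^ α - 1) * (d ^ α - 1) := by
  have ha1 : 0 < a - 1 := by linarith
  have hρ : 1 ≤ (b - 1) / (a - 1) := by rw [le_div_iff₀ ha1]; linarith
  have hm := ratio_mono hα hρ (a := a - 1) (b := c - 1) ha1 (show 0 < c - 1 by linarith) (by linarith)
  set ρ := (b - 1) / (a - 1) with hρd
  have e1 : 1 + ρ * (a - 1) = b := by rw [hρd]; field_simp; ring
  have e2 : 1 + 1 * (a - 1) = a := by ring
  have e3 : 1 + 1 * (c - 1) = c := by ring
  simp only [e1, e2, e3] at hm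
  have pa : 0 < a ^ α - 1 := by
    have := Real.one_lt_rpow ha (show 0 < α by linarith); linarith
  have pc : 0 < c ^ α - 1 := by
    have := Real.one_lt_rpow (show 1 < c by linarith) (show 0 < α by linarith); linarith
  rw [div_le_div_iff₀ pa pc] at hm
  have hdl : 1 + ρ * (c - 1) < d := by
    have : ρ * (c - 1) * (a - 1) < (d - 1) * (a - 1) := by
      have e : ρ * (a - 1) = b - 1 := by linarith
      calc ρ * (c - 1) * (a - 1) = (ρ * (a - 1)) * (c - 1) := by ring
        _ = (b - 1) * (c - 1) := by rw [e]
        _ < _ := by linarith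
    have := lt_of_mul_lt_mul_right this ha1.le
    linarith
  have h0 : 0 ≤ 1 + ρ * (c - 1) := by
    have := mul_nonneg (show 0 ≤ ρ by linarith) (show 0 ≤ c - 1 by linarith); linarith
  have := Real.rpow_lt_rpow h0 hdl (show 0 < α by linarith)
  nlinarith

theorem three_id {p00 p01 p02 p10 p11 p12 p20 p21 p22 : ℝ} (h00 : 0 < p00) (h01 : 0 < p01)
    (h02 : 0 < p02) (h10 : 0 < p10) (h20 : 0 < p20) :
    p00 * p11 * p22 - p00 * p12 * p21 - p01 * p10 * p22 + p01 * p12 * p20 + p02 * p10 * p21 -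
      p02 * p11 * p20 = p10 * p20 * p01 * p02 / p00 *
      ((p11 * p00 / (p01 * p10) - 1) * (p22 * p00 / (p02 * p20) - 1) -
       (p12 * p00 / (p02 * p10) - 1) * (p21 * p00 / (p01 * p20) - 1)) := by
  field_simp
  ring

theorem pow_det_two {α : ℝ} (hα : 0 < α) {A : Matrix (Fin 2) (Fin 2) ℝ} (hA : IsTPMat A) :
    0 < (A.map (fun x => x ^ α)).det := by
  have hd := hA 2 id id strictMono_id strictMono_id
  rw [submatrix_id_id, det_fin_two] at hd
  rw [det_fin_two]
  simp only [map_apply]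
  have p := fun i j => entry_pos hA i j
  rw [← Real.mul_rpow (p _ _).le (p _ _).le, ← Real.mul_rpow (p _ _).le (p _ _).le]
  have := Real.rpow_lt_rpow (mul_pos (p 0 1) (p 1 0)).le (sub_pos.mp hd) hα
  linarith

theorem pow_det_three {α : ℝ} (hα : 1 ≤ α) {A : Matrix (Fin 3) (Fin 3) ℝ} (hA : IsTPMat A) :
    0 < (A.map (fun x => x ^ α)).det := by
  have hd := hA 3 id id strictMono_id strictMono_id
  rw [submatrix_id_id, det_fin_three] at hd
  rw [det_fin_three]
  simp only [map_apply]
  have p := fun i j => entry_pos hA i j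
  have pp := fun i j => Real.rpow_pos_of_pos (p i j) α
  have s1 : StrictMono (![0, 1] : Fin 2 → Fin 3) := by decide
  have s2 : StrictMono (![1, 2] : Fin 2 → Fin 3) := by decide
  have m1 := hA 2 _ _ s1 s1
  have m2 := hA 2 _ _ s1 s2
  have m3 := hA 2 _ _ s2 s1
  rw [det_fin_two] at m1 m2 m3
  simp at m1 m2 m3
  rw [three_id (p 0 0) (p 0 1) (p 0 2) (p 1 0) (p 2 0)] at hd
  have hd2 := pos_of_mul_pos_right hd (by have := p 0 0; have := p 0 1; have := p 0 2; have := p 1 0; have := p 2 0; positivity)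
  rw [three_id (pp 0 0) (pp 0 1) (pp 0 2) (pp 1 0) (pp 2 0)]
  have q : ∀ i j k l m n o q, (A i j)^α * (A k l)^α / ((A m n)^α * (A o q)^α) =
      (A i j * A k l / (A m n * A o q))^α := by
    intro i j k l m n o q
    rw [Real.div_rpow (mul_pos (p _ _) (p _ _)).le (mul_pos (p _ _) (p _ _)).le,
      Real.mul_rpow (p _ _).le (p _ _).le, Real.mul_rpow (p _ _).le (p _ _).le]
  rw [q, q, q, q]
  apply mul_pos
  · have := pp 0 0; have := pp 0 1; have := pp 0 2; have := pp 1 0; have := pp 2 0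
    positivity
  · rw [sub_pos]
    have := p 0 0; have := p 0 1; have := p 0 2; have := p 1 0; have := p 2 0
    apply three_core hα
    · rw [one_lt_div (by positivity)]; linarith
    · rw [div_lt_div_iff₀ (by positivity) (by positivity)]
      have : 0 < A 0 0 * A 1 0 * (A 0 1 * A 1 2 - A 0 2 * A 1 1) := by
        apply mul_pos (by positivity) (by linarith)
      nlinarith
    · rw [div_lt_div_iff₀ (by positivity) (by positivity)]
      have : 0 < A 0 0 * A 0 1 * (A 1 0 * A 2 1 - A 1 1 * A 2 0) := by
        apply mul_pos (by positivity) (by linarith)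
      nlinarith
    · linarith

end TPaux

namespace TPaux
open Matrix Filter Topology
set_option linter.unusedSimpArgs false

def Qf {n : ℕ} (M : Matrix (Fin n) (Fin n) ℝ) (x : Fin n → ℝ) : ℝ := ∑ i, ∑ j, x i * x j * M i j

def PD {n : ℕ} (M : Matrix (Fin n) (Fin n) ℝ) : Prop := M.IsSymm ∧ ∀ x, x ≠ 0 → 0 < Qf M x

theorem Qf_eq {n : ℕ} (M : Matrix (Fin n) (Fin n) ℝ) (x : Fin n → ℝ) :
    star x ⬝ᵥ (M *ᵥ x) = Qf M x := by
  unfold Qf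
  simp only [dotProduct, mulVec, Finset.mul_sum, Pi.star_apply, star_trivial]
  exact Finset.sum_congr rfl fun i _ => Finset.sum_congr rfl fun j _ => by ring

theorem pd_iff {n : ℕ} {M : Matrix (Fin n) (Fin n) ℝ} : PD M ↔ M.PosDef := by
  rw [posDef_iff_dotProduct_mulVec]
  simp only [Qf_eq, PD]
  rw [IsHermitian, conjTranspose_eq_transpose_of_trivial, IsSymm]

noncomputable def sch {n : ℕ} (A : Matrix (Fin (n+1)) (Fin (n+1)) ℝ) : Matrix (Fin n) (Fin n) ℝ :=
  of fun i j => A i.castSucc j.castSucc -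
    A i.castSucc (Fin.last n) * A (Fin.last n) j.castSucc / A (Fin.last n) (Fin.last n)

theorem schur_det {k : ℕ} (B : Matrix (Fin (k+1)) (Fin (k+1)) ℝ)
    (ha : B (Fin.last k) (Fin.last k) ≠ 0) :
    det B = B (Fin.last k) (Fin.last k) * det (sch B) := by
  set a := B (Fin.last k) (Fin.last k) with haa
  let c : Fin (k+1) → ℝ := Fin.lastCases 0 (fun i => - B i.castSucc (Fin.last k) / a)
  let B' : Matrix (Fin (k+1)) (Fin (k+1)) ℝ := of fun i j => B i j + c i * B (Fin.last k) j
  have h := det_eq_of_forall_row_eq_smul_add_const (A := B') (B := B) c (Fin.last k)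
    (by simp [c]) (by intro i j; rfl)
  rw [← h, det_succ_column B' (Fin.last k), Fin.sum_univ_castSucc]
  have h0 : ∀ i : Fin k, B' i.castSucc (Fin.last k) = 0 := by
    intro i
    simp only [B', c, of_apply, Fin.lastCases_castSucc, ← haa]
    field_simp
    ring
  have h1 : B' (Fin.last k) (Fin.last k) = a := by
    simp [B', c, ← haa]
  simp only [h0, h1, mul_zero, zero_mul, Finset.sum_const_zero, zero_add]
  have e : B'.submatrix (Fin.last k).succAbove (Fin.last k).succAbove = sch B := by
    ext i j
    simp only [submatrix_apply, Fin.succAbove_last, B', c, of_apply, Fin.lastCases_castSucc, sch, ← haa]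
    ring
  rw [e, ← two_mul, pow_mul]
  simp

def extl {k n : ℕ} (r : Fin k → Fin n) : Fin (k+1) → Fin (n+1) :=
  Fin.lastCases (Fin.last n) (fun i => (r i).castSucc)

theorem extl_sm {k n : ℕ} {r : Fin k → Fin n} (hr : StrictMono r) : StrictMono (extl r) := by
  intro i j hij
  induction j using Fin.lastCases with
  | last =>
    induction i using Fin.lastCases with
    | last => exact absurd hij (lt_irrefl _)
    | cast i => simpa [extl] using Fin.castSucc_lt_last _
  | cast j =>
    induction i using Fin.lastCases with
    | last => exact absurd hij (not_lt.mpr (Fin.le_last _))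
    | cast i =>
      simp only [extl, Fin.lastCases_castSucc]
      exact Fin.castSucc_lt_castSucc_iff.mpr (hr (Fin.castSucc_lt_castSucc_iff.mp hij))

theorem sch_tp {n : ℕ} {A : Matrix (Fin (n+1)) (Fin (n+1)) ℝ} (hA : IsTPMat A) : IsTPMat (sch A) := by
  intro k r c hr hc
  have h := hA (k+1) (extl r) (extl c) (extl_sm hr) (extl_sm hc)
  have ha := entry_pos hA (Fin.last n) (Fin.last n)
  rw [schur_det _ (by simpa [extl] using ha.ne')] at h
  have e : sch (A.submatrix (extl r) (extl c)) = (sch A).submatrix r c := by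
    ext i j
    simp [sch, extl]
  rw [e] at h
  exact pos_of_mul_pos_right h (by simpa [extl] using ha.le)

theorem sch_symm {n : ℕ} {A : Matrix (Fin (n+1)) (Fin (n+1)) ℝ} (hA : A.IsSymm) : (sch A).IsSymm := by
  ext i j
  simp only [sch, transpose_apply, of_apply]
  rw [hA.apply i.castSucc j.castSucc, hA.apply i.castSucc (Fin.last n), hA.apply (Fin.last n) j.castSucc,
    mul_comm (A (Fin.last n) j.castSucc)]

theorem rank_sum {n : ℕ} (y v : Fin n → ℝ) :
    ∑ i, ∑ j, y i * y j * (v i * v j) = (∑ i, y i * v i) ^ 2 := by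
  rw [sq, Finset.sum_mul_sum]
  exact Finset.sum_congr rfl fun i _ => Finset.sum_congr rfl fun j _ => by ring

theorem Qf_sch {n : ℕ} {A : Matrix (Fin (n+1)) (Fin (n+1)) ℝ} (hA : A.IsSymm)
    (ha : A (Fin.last n) (Fin.last n) ≠ 0) (x : Fin (n+1) → ℝ) :
    Qf A x = Qf (sch A) (fun i => x i.castSucc) + A (Fin.last n) (Fin.last n) *
      (x (Fin.last n) + (∑ i : Fin n, x i.castSucc * A i.castSucc (Fin.last n)) / A (Fin.last n) (Fin.last n))^2 := by
  unfold Qf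
  have hs : ∀ i : Fin n, A (Fin.last n) i.castSucc = A i.castSucc (Fin.last n) := fun i => hA.apply _ _
  simp only [Fin.sum_univ_castSucc, sch, of_apply, hs, Finset.sum_add_distrib]
  have e1 : ∑ i : Fin n, ∑ j : Fin n, x i.castSucc * x j.castSucc * (A i.castSucc j.castSucc -
      A i.castSucc (Fin.last n) * A j.castSucc (Fin.last n) / A (Fin.last n) (Fin.last n)) =
      ∑ i : Fin n, ∑ j : Fin n, x i.castSucc * x j.castSucc * A i.castSucc j.castSucc -
      (∑ i : Fin n, x i.castSucc * A i.castSucc (Fin.last n)) ^ 2 / A (Fin.last n) (Fin.last n) := by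
    rw [← rank_sum, Finset.sum_div, ← Finset.sum_sub_distrib]
    refine Finset.sum_congr rfl fun i _ => ?_
    rw [Finset.sum_div, ← Finset.sum_sub_distrib]
    refine Finset.sum_congr rfl fun j _ => ?_
    ring
  have e2 : ∑ i : Fin n, x i.castSucc * x (Fin.last n) * A i.castSucc (Fin.last n) =
      x (Fin.last n) * ∑ i : Fin n, x i.castSucc * A i.castSucc (Fin.last n) := by
    rw [Finset.mul_sum]; exact Finset.sum_congr rfl fun i _ => by ring
  have e3 : ∑ i : Fin n, x (Fin.last n) * x i.castSucc * A i.castSucc (Fin.last n) =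
      x (Fin.last n) * ∑ i : Fin n, x i.castSucc * A i.castSucc (Fin.last n) := by
    rw [Finset.mul_sum]; exact Finset.sum_congr rfl fun i _ => by ring
  rw [e1, e2, e3]
  field_simp
  ring

theorem tp_pd : ∀ {n : ℕ} {A : Matrix (Fin n) (Fin n) ℝ}, A.IsSymm → IsTPMat A → PD A := by
  intro n
  induction n with
  | zero => intro A hs _; exact ⟨hs, fun x hx => absurd (Subsingleton.elim x 0) hx⟩
  | succ n ih =>
    intro A hs hA
    have hC := ih (sch_symm hs) (sch_tp hA)
    have ha := entry_pos hA (Fin.last n) (Fin.last n)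
    refine ⟨hs, fun x hx => ?_⟩
    rw [Qf_sch hs ha.ne']
    by_cases hy : (fun i : Fin n => x i.castSucc) = 0
    · have hy' : ∀ i : Fin n, x i.castSucc = 0 := fun i => congrFun hy i
      have hz : x (Fin.last n) ≠ 0 := by
        intro hz; apply hx; ext i
        induction i using Fin.lastCases with
        | last => simpa using hz
        | cast i => simpa using hy' i
      simp only [Qf, hy']
      simp
      positivity
    · have := hC.2 _ hy
      positivity

theorem sch_pd {n : ℕ} {A : Matrix (Fin (n+1)) (Fin (n+1)) ℝ} (hA : PD A)
    (ha : A (Fin.last n) (Fin.last n) ≠ 0) : PD (sch A) := by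
  refine ⟨sch_symm hA.1, fun y hy => ?_⟩
  let x : Fin (n+1) → ℝ := Fin.lastCases (-(∑ i : Fin n, y i * A i.castSucc (Fin.last n)) / A (Fin.last n) (Fin.last n)) y
  have h := hA.2 x (by
    intro hx; apply hy; ext i
    have := congrFun hx i.castSucc
    simpa [x] using this)
  rw [Qf_sch hA.1 ha] at h
  simpa [x, neg_div] using h

def QP (n : ℕ) (α : ℝ) : Prop := ∀ M : Matrix (Fin n) (Fin n) ℝ, PD M → (∀ i j, 0 < M i j) →
  PD (M.map (fun x => x ^ α))

theorem QP_one (α : ℝ) : QP 1 α := by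
  intro M hM hp
  refine ⟨hM.1.map _, fun x hx => ?_⟩
  have h0 : x 0 ≠ 0 := by
    intro h; apply hx; ext i; fin_cases i; simpa using h
  simp only [Qf, Finset.univ_unique, Fin.default_eq_zero, Finset.sum_singleton, map_apply]
  have := Real.rpow_pos_of_pos (hp 0 0) α
  have : 0 < x 0 * x 0 := mul_self_pos.mpr h0
  positivity

theorem QP_step {n : ℕ} {α : ℝ} (hα : 0 < α) (h : QP n (α - 1)) : QP (n+1) α := by
  intro A hA hp
  refine ⟨hA.1.map _, fun x hx => ?_⟩
  set a := A (Fin.last n) (Fin.last n) with ha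
  have hap : 0 < a := hp _ _
  let v : Fin (n+1) → ℝ := fun i => A i (Fin.last n)
  have hv : ∀ i, 0 < v i := fun i => hp _ _
  by_cases hy : (fun i : Fin n => x i.castSucc) = 0
  · have hy' : ∀ i : Fin n, x i.castSucc = 0 := fun i => congrFun hy i
    have hz : x (Fin.last n) ≠ 0 := by
      intro hz; apply hx; ext i
      induction i using Fin.lastCases with
      | last => simpa using hz
      | cast i => simpa using hy' i
    simp only [Qf, Fin.sum_univ_castSucc, hy']
    simp
    have : 0 < x (Fin.last n) * x (Fin.last n) := mul_self_pos.mpr hz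
    have := Real.rpow_pos_of_pos hap α
    positivity
  · have hC := sch_pd hA hap.ne'
    let D : Fin (n+1) → Fin (n+1) → ℝ := fun i j => A i j - v i * v j / a
    have hDl : ∀ i, D i (Fin.last n) = 0 := by
      intro i; simp only [D, v, ← ha]; field_simp; ring
    have hDl' : ∀ i, D (Fin.last n) i = 0 := by
      intro i; simp only [D, v, ← ha, hA.1.apply i (Fin.last n)]; field_simp; ring
    have hDc : ∀ i j : Fin n, D i.castSucc j.castSucc = sch A i j := by
      intro i j; simp only [D, v, sch, of_apply, ← ha, hA.1.apply j.castSucc (Fin.last n)]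
    have hN : ∀ t : ℝ, 0 ≤ t → t ≤ 1 → ∀ i j, 0 < v i * v j / a + t * D i j := by
      intro t h0 h1 i j
      have e : v i * v j / a + t * D i j = (1 - t) * (v i * v j / a) + t * A i j := by
        simp only [D]; ring
      rw [e]
      have := hv i; have := hv j; have := hp i j
      have h3 : 0 < v i * v j / a := by positivity
      rcases eq_or_lt_of_le h0 with h | h
      · rw [← h]; simpa using h3
      · have : 0 ≤ (1 - t) * (v i * v j / a) := mul_nonneg (by linarith) h3.le
        have : 0 < t * A i j := by positivity
        linarith
    let g : ℝ → ℝ := fun t => ∑ i, ∑ j, x i * x j * (v i * v j / a + t * D i j) ^ α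
    have hg : ∀ t : ℝ, 0 ≤ t → t ≤ 1 → HasDerivAt g
        (∑ i, ∑ j, x i * x j * (D i j * α * (v i * v j / a + t * D i j) ^ (α - 1))) t := by
      intro t h0 h1
      refine HasDerivAt.fun_sum fun i _ => HasDerivAt.fun_sum fun j _ => ?_
      have h2 : HasDerivAt (fun t : ℝ => v i * v j / a + t * D i j) (D i j) t := by
        simpa using ((hasDerivAt_id t).mul_const (D i j)).const_add (v i * v j / a)
      exact (h2.rpow_const (Or.inl (hN t h0 h1 i j).ne')).const_mul _
    have hpos : ∀ t : ℝ, 0 < t → t < 1 →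
        0 < ∑ i, ∑ j, x i * x j * (D i j * α * (v i * v j / a + t * D i j) ^ (α - 1)) := by
      intro t h0 h1
      let N : Matrix (Fin n) (Fin n) ℝ := of fun i j => v i.castSucc * v j.castSucc / a + t * sch A i j
      have hNp : PD N := by
        refine ⟨?_, fun y hy => ?_⟩
        · ext i j
          simp only [N, transpose_apply, of_apply, hC.1.apply i j, mul_comm (v i.castSucc)]
        · have e : Qf N y = (∑ i : Fin n, y i * v i.castSucc)^2 / a + t * Qf (sch A) y := by
            unfold Qf
            rw [← rank_sum, Finset.sum_div, Finset.mul_sum, ← Finset.sum_add_distrib]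
            refine Finset.sum_congr rfl fun i _ => ?_
            rw [Finset.sum_div, Finset.mul_sum, ← Finset.sum_add_distrib]
            refine Finset.sum_congr rfl fun j _ => ?_
            simp only [N, of_apply]; ring
          rw [e]
          have := hC.2 y hy
          positivity
      have hN2 := h N hNp (by
        intro i j
        have := hN t h0.le h1.le i.castSucc j.castSucc
        rw [hDc] at this
        exact this)
      have hH := pd_iff.mpr ((pd_iff.mp hC).hadamard (pd_iff.mp hN2))
      have := hH.2 _ hy
      have e : ∑ i, ∑ j, x i * x j * (D i j * α * (v i * v j / a + t * D i j) ^ (α - 1)) =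
        α * Qf (sch A ⊙ N.map (fun x => x ^ (α - 1))) (fun i : Fin n => x i.castSucc) := by
        simp only [Fin.sum_univ_castSucc, hDl, hDl', hDc, zero_mul, mul_zero, add_zero,
          Finset.sum_const_zero, Qf, Finset.mul_sum]
        refine Finset.sum_congr rfl fun i _ => Finset.sum_congr rfl fun j _ => ?_
        simp only [N, hadamard_apply, map_apply, of_apply]; ring
      rw [e]
      positivity
    have hmono : StrictMonoOn g (Set.Icc 0 1) := by
      apply strictMonoOn_of_deriv_pos (convex_Icc 0 1)
      · intro t ht; exact (hg t ht.1 ht.2).continuousAt.continuousWithinAt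
      · intro t ht
        rw [interior_Icc] at ht
        rw [(hg t ht.1.le ht.2.le).deriv]
        exact hpos t ht.1 ht.2
    have hlt := hmono (Set.left_mem_Icc.mpr zero_le_one) (Set.right_mem_Icc.mpr zero_le_one) one_pos
    have g0 : 0 ≤ g 0 := by
      have e : g 0 = (∑ i, x i * v i ^ α)^2 / a ^ α := by
        simp only [g]
        rw [← rank_sum, Finset.sum_div]
        refine Finset.sum_congr rfl fun i _ => ?_
        rw [Finset.sum_div]
        refine Finset.sum_congr rfl fun j _ => ?_
        rw [zero_mul, add_zero, Real.div_rpow (mul_pos (hv i) (hv j)).le hap.le,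
          Real.mul_rpow (hv i).le (hv j).le]
        ring
      rw [e]; positivity
    have g1 : g 1 = Qf (A.map (fun x => x ^ α)) x := by
      simp only [g, Qf]
      refine Finset.sum_congr rfl fun i _ => Finset.sum_congr rfl fun j _ => ?_
      simp only [map_apply, D]
      congr 2
      ring
    rw [← g1]
    linarith

theorem pow_det_four {α : ℝ} (hα : 2 ≤ α) {A : Matrix (Fin 4) (Fin 4) ℝ} (hs : A.IsSymm)
    (hA : IsTPMat A) : 0 < (A.map (fun x => x ^ α)).det := by
  have hpd := tp_pd hs hA
  rcases eq_or_lt_of_le hα with h | h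
  · have := ((pd_iff.mp hpd).hadamard (pd_iff.mp hpd)).det_pos
    have e : A.map (fun x => x ^ α) = A ⊙ A := by
      ext i j
      simp only [map_apply, hadamard_apply, ← h]
      rw [Real.rpow_two, sq]
    rw [e]; exact this
  · have q2 : QP 2 (α - 1 - 1) := QP_step (by linarith) (QP_one _)
    have q3 : QP 3 (α - 1) := QP_step (by linarith) q2
    have q4 : QP 4 α := QP_step (by linarith) q3
    exact (pd_iff.mp (q4 A hpd (fun i j => entry_pos hA i j))).det_pos

end TPaux

namespace TPaux
open Matrix Filter Topology
set_option linter.unusedSimpArgs false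

theorem pres_of_pow {F : ℝ → ℝ} {d : ℕ} {c α : ℝ} (hc : 0 < c) (hF : ∀ x, 0 < x → F x = c * x ^ α)
    (h : Pres (fun x => x ^ α) d) : Pres F d := by
  intro A hs hA k r s hr hs'
  have h1 := h A hs hA k r s hr hs'
  have e : (A.map F).submatrix r s = c • (A.map (fun x => x ^ α)).submatrix r s := by
    ext i j
    simp [hF _ (entry_pos hA _ _)]
  rw [e, det_smul]
  exact mul_pos (by positivity) h1

theorem pres_pow_one (d : ℕ) : Pres (fun x => x ^ (1:ℝ)) d := by
  intro A hs hA
  have : A.map (fun x => x ^ (1:ℝ)) = A := by ext i j; simp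
  rw [this]; exact hA

theorem minor_le_three {α : ℝ} (hα : 1 ≤ α) {d k : ℕ} {A : Matrix (Fin d) (Fin d) ℝ} (hA : IsTPMat A)
    {r s : Fin k → Fin d} (hr : StrictMono r) (hs : StrictMono s) (hk : k ≤ 3) :
    0 < ((A.map (fun x => x ^ α)).submatrix r s).det := by
  have hB := tp_submatrix hA hr hs
  rw [submatrix_map]
  have hp := fun i j => entry_pos hB i j
  interval_cases k
  · simp
  · simpa using Real.rpow_pos_of_pos (hp 0 0) α
  · exact pow_det_two (by linarith) hB
  · exact pow_det_three hα hB

theorem pres_pow_three {α : ℝ} (hα : 1 ≤ α) : Pres (fun x => x ^ α) 3 := by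
  intro A hs hA k r s hr hs'
  exact minor_le_three hα hA hr hs' (card_le_of_sm hr)

theorem pres_pow_four {α : ℝ} (hα : 2 ≤ α) : Pres (fun x => x ^ α) 4 := by
  intro A hs hA k r s hr hs'
  have hk := card_le_of_sm hr
  rcases Nat.lt_or_ge 3 k with h | h
  · obtain rfl : k = 4 := by omega
    rw [sm_id hr, sm_id hs', submatrix_id_id]
    exact pow_det_four hα hs hA
  · exact minor_le_three (by linarith) hA hr hs' h

theorem pres_one {F : ℝ → ℝ} (h : ∀ x : ℝ, 0 < x → 0 < F x) : Pres F 1 := by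
  intro A hs hA k r s hr hs'
  have hk := card_le_of_sm hr
  interval_cases k
  · simp
  · simpa using h _ (entry_pos hA _ _)

theorem pres_two_rev {F : ℝ → ℝ} (h : ∀ x : ℝ, 0 < x → 0 < F x) (hm : StrictMonoOn F (Set.Ioi 0))
    (hc : ∀ x y : ℝ, 0 < x → 0 < y → F (Real.sqrt (x * y)) ^ 2 ≤ F x * F y) : Pres F 2 := by
  intro A hs hA
  have p := fun i j => entry_pos hA i j
  refine tp_two (fun i j => h _ (p i j)) ?_
  have hd := hA 2 id id strictMono_id strictMono_id
  rw [submatrix_id_id, det_fin_two, hs.apply 0 1] at hd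
  simp only [map_apply]
  rw [hs.apply 0 1]
  have h2 : A 0 1 < Real.sqrt (A 0 0 * A 1 1) := by
    apply Real.lt_sqrt_of_sq_lt
    nlinarith
  have h3 := hm (p 0 1) (show (0:ℝ) < Real.sqrt (A 0 0 * A 1 1) from (p 0 1).trans h2) h2
  have h4 := hc _ _ (p 0 0) (p 1 1)
  have h5 := h _ (p 0 1)
  nlinarith

end TPaux

theorem stmt_8 (F : ℝ → ℝ) (d : ℕ) (hd : 0 < d) :
    (∀ A : Matrix (Fin d) (Fin d) ℝ, A.IsSymm → IsTPMat A → IsTPMat (A.map F)) ↔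
      ((d = 1 ∧ ∀ x : ℝ, 0 < x → 0 < F x) ∨
       (d = 2 ∧ (∀ x : ℝ, 0 < x → 0 < F x) ∧ StrictMonoOn F (Set.Ioi 0) ∧
         ∀ x y : ℝ, 0 < x → 0 < y → F (Real.sqrt (x * y)) ^ 2 ≤ F x * F y) ∨
       (d = 3 ∧ ∃ c : ℝ, 0 < c ∧ ∃ α : ℝ, 1 ≤ α ∧ ∀ x : ℝ, 0 < x → F x = c * x ^ α) ∨
       (d = 4 ∧ ∃ c : ℝ, 0 < c ∧ ∃ α : ℝ, (α = 1 ∨ 2 ≤ α) ∧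
         ∀ x : ℝ, 0 < x → F x = c * x ^ α) ∨
       (5 ≤ d ∧ ∃ c : ℝ, 0 < c ∧ ∀ x : ℝ, 0 < x → F x = c * x)) := by
  constructor
  · intro h
    have h : TPaux.Pres F d := h
    rcases Nat.lt_or_ge d 3 with h3 | h3
    · interval_cases d
      · exact Or.inl ⟨rfl, fun x hx => TPaux.pres_pos le_rfl h hx⟩
      · exact Or.inr (Or.inl ⟨rfl, fun x hx => TPaux.pres_pos (by norm_num) h hx,
          TPaux.pres_strictMono le_rfl h, fun x y hx hy => TPaux.pres_mid le_rfl h hx hy⟩)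
    · right; right
      obtain ⟨c, hc, α, hα, hF⟩ := TPaux.pres_power h3 h
      have hp := TPaux.pres_pow_of h hc hF
      have h1 := TPaux.pow_three (TPaux.pres_le h3 hp) hα
      rcases Nat.lt_or_ge d 4 with h4 | h4
      · exact Or.inl ⟨by omega, c, hc, α, h1, hF⟩
      · right
        rcases Nat.lt_or_ge d 5 with h5 | h5
        · refine Or.inl ⟨by omega, c, hc, α, ?_, hF⟩
          by_contra hcon
          rw [not_or, not_le] at hcon
          exact TPaux.pow_four (TPaux.pres_le h4 hp) (lt_of_le_of_ne h1 (Ne.symm hcon.1)) hcon.2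
        · refine Or.inr ⟨h5, c, hc, ?_⟩
          have : α = 1 := by
            by_contra hcon
            exact TPaux.pow_five (TPaux.pres_le h5 hp) (lt_of_le_of_ne h1 (Ne.symm hcon))
          intro x hx
          rw [hF x hx, this, Real.rpow_one]
  · rintro (⟨rfl, h⟩ | ⟨rfl, h, hm, hc⟩ | ⟨rfl, c, hc, α, h1, hF⟩ | ⟨rfl, c, hc, α, h1, hF⟩ | ⟨h5, c, hc, hF⟩)
    · exact TPaux.pres_one h
    · exact TPaux.pres_two_rev h hm hc
    · exact TPaux.pres_of_pow hc hF (TPaux.pres_pow_three h1)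
    · rcases h1 with rfl | h1
      · exact TPaux.pres_of_pow hc hF (TPaux.pres_pow_one 4)
      · exact TPaux.pres_of_pow hc hF (TPaux.pres_pow_four h1)
    · refine TPaux.pres_of_pow (α := 1) hc (fun x hx => ?_) (TPaux.pres_pow_one d)
      rw [hF x hx, Real.rpow_one]
end

section
/- The function M : ℝ → ℝ defined by M(x) = 2·e^{−|x|} − e^{−2|x|} is a Pólya frequency function that is even, continuous, and nowhere zero, is increasing on (−∞,0] and decreasing on [0,∞), and has the property that for every integer n ≥ 2 the n-th power x ↦ M(x)^n is NOT a Pólya frequency function. -/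
set_option linter.unusedSimpArgs false

/-- A kernel on linearly ordered sets is totally non-negative if all matrices
obtained by evaluating it on increasing tuples have non-negative determinant. -/
def IsTNKernel {X Y : Type*} [LinearOrder X] [LinearOrder Y] (K : X → Y → ℝ) : Prop :=
  ∀ (n : ℕ) (x : Fin n → X) (y : Fin n → Y), StrictMono x → StrictMono y →
    0 ≤ (Matrix.of fun i j : Fin n => K (x i) (y j)).det

/-- A Pólya frequency function: a Lebesgue-integrable function `ℝ → [0,∞)`,
non-zero at two or more points, whose associated Toeplitz kernel is totally
non-negative. -/
def IsPolyaFrequencyFunction (Λ : ℝ → ℝ) : Prop :=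
  MeasureTheory.Integrable Λ ∧ (∀ x, 0 ≤ Λ x) ∧
  (∃ a b : ℝ, a ≠ b ∧ Λ a ≠ 0 ∧ Λ b ≠ 0) ∧
  IsTNKernel fun x y : ℝ => Λ (x - y)

open MeasureTheory

lemma tn_step : ∀ (n : ℕ) (x y : Fin n → ℝ), Monotone x → Monotone y →
    0 ≤ (Matrix.of fun i j : Fin n => if y j ≤ x i then (1:ℝ) else 0).det := by
  intro n
  induction n with
  | zero => intro x y _ _; simp
  | succ n ih =>
    intro x y hx hy
    by_cases h0 : y 0 ≤ x 0
    · have hcol : ∀ i, y 0 ≤ x i := fun i => h0.trans (hx (Fin.zero_le i))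
      by_cases h1 : ∃ j : Fin n, y j.succ ≤ x 0
      · obtain ⟨j, hj⟩ := h1
        refine le_of_eq (Eq.symm ?_)
        refine Matrix.det_zero_of_column_eq (i := 0) (j := j.succ) (Fin.succ_ne_zero j).symm ?_
        intro i
        have : y j.succ ≤ x i := hj.trans (hx (Fin.zero_le i))
        simp [hcol i, this]
      · push Not at h1
        rw [Matrix.det_succ_row_zero, Fin.sum_univ_succ]
        have hz : ∀ j : Fin n, ¬ (y j.succ ≤ x 0) := fun j => not_le.2 (h1 j)
        simp only [Matrix.of_apply, hz, h0, if_true, if_false]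
        simp only [mul_zero, zero_mul, Finset.sum_const_zero, add_zero, Fin.val_zero, pow_zero, one_mul]
        have := ih (fun i => x i.succ) (fun i => y i.succ)
          (fun a b hab => hx (Fin.succ_le_succ_iff.2 hab)) (fun a b hab => hy (Fin.succ_le_succ_iff.2 hab))
        convert this using 2
        ext i j
        simp
    · refine le_of_eq (Eq.symm ?_)
      refine Matrix.det_eq_zero_of_row_eq_zero 0 ?_
      intro j
      have : ¬ (y j ≤ x 0) := fun h => h0 ((hy (Fin.zero_le j)).trans h)
      simp [this]

lemma det_mul_nonneg {n : ℕ} (f g : Fin n → ℝ → ℝ)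
    (hf : ∀ t : Fin n → ℝ, StrictMono t → 0 ≤ (Matrix.of fun i k => f i (t k)).det)
    (hg : ∀ t : Fin n → ℝ, StrictMono t → 0 ≤ (Matrix.of fun i k => g i (t k)).det)
    (t : Fin n → ℝ) :
    0 ≤ (Matrix.of fun i k => f i (t k)).det * (Matrix.of fun i k => g i (t k)).det := by
  by_cases ht : Function.Injective t
  · have hs : StrictMono (t ∘ Tuple.sort t) :=
      (Tuple.monotone_sort t).strictMono_of_injective (ht.comp (Tuple.sort t).injective)
    have key : ∀ f : Fin n → ℝ → ℝ, (Matrix.of fun i k => f i ((t ∘ Tuple.sort t) k)).det =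
        (Equiv.Perm.sign (Tuple.sort t) : ℤ) * (Matrix.of fun i k => f i (t k)).det := by
      intro f
      rw [← Matrix.det_permute']
      rfl
    have h1 := hf _ hs
    have h2 := hg _ hs
    have h3 := mul_nonneg h1 h2
    rw [key, key] at h3
    rcases Int.units_eq_one_or (Equiv.Perm.sign (Tuple.sort t)) with h | h <;> rw [h] at h3 <;>
      simpa using h3
  · simp only [Function.Injective] at ht
    push Not at ht
    obtain ⟨a, b, hab, hne⟩ := ht
    rw [Matrix.det_zero_of_column_eq hne, zero_mul]
    intro k
    simp [hab]

lemma andreief_nonneg {n : ℕ} (f g : Fin n → ℝ → ℝ)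
    (hint : ∀ i j, Integrable (fun t => f i t * g j t))
    (hf : ∀ t : Fin n → ℝ, StrictMono t → 0 ≤ (Matrix.of fun i k => f i (t k)).det)
    (hg : ∀ t : Fin n → ℝ, StrictMono t → 0 ≤ (Matrix.of fun i k => g i (t k)).det) :
    0 ≤ (Matrix.of fun i j => ∫ t, f i t * g j t).det := by
  have hI : ∀ σ : Equiv.Perm (Fin n), Integrable (fun T : Fin n → ℝ => ∏ i, (f (σ i) (T i) * g i (T i))) :=
    fun σ => Integrable.fintype_prod (fun i => hint (σ i) i)
  have hexp : ∀ T : Fin n → ℝ, (Matrix.of fun i k => f i (T k)).det * ∏ k, g k (T k)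
      = ∑ σ : Equiv.Perm (Fin n), ((Equiv.Perm.sign σ : ℤ) : ℝ) * ∏ i, (f (σ i) (T i) * g i (T i)) := by
    intro T
    rw [Matrix.det_apply', Finset.sum_mul]
    refine Finset.sum_congr rfl fun σ _ => ?_
    rw [Finset.prod_mul_distrib, mul_assoc]; rfl
  have hInt : Integrable (fun T : Fin n → ℝ => (Matrix.of fun i k => f i (T k)).det * ∏ k, g k (T k)) := by
    simp_rw [hexp]
    exact integrable_finsetSum _ fun σ _ => (hI σ).const_mul _
  have h1 : (Matrix.of fun i j => ∫ t, f i t * g j t).det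
      = ∫ T : Fin n → ℝ, (Matrix.of fun i k => f i (T k)).det * ∏ k, g k (T k) := by
    simp_rw [hexp]
    rw [integral_finsetSum _ fun σ _ => (hI σ).const_mul _, Matrix.det_apply']
    refine Finset.sum_congr rfl fun σ _ => ?_
    rw [integral_const_mul, integral_fintype_prod_volume_eq_prod (fun i t => f (σ i) t * g i t)]
    rfl
  have hmp : ∀ τ : Equiv.Perm (Fin n), MeasurePreserving
      (MeasurableEquiv.piCongrLeft (fun _ : Fin n => ℝ) τ.symm) volume volume :=
    fun τ => volume_measurePreserving_piCongrLeft (fun _ : Fin n => ℝ) τ.symm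
  have happ : ∀ (τ : Equiv.Perm (Fin n)) (T : Fin n → ℝ) k,
      MeasurableEquiv.piCongrLeft (fun _ : Fin n => ℝ) τ.symm T k = T (τ k) := by
    intro τ T k
    have := Equiv.piCongrLeft_apply_apply (P := fun _ : Fin n => ℝ) (e := τ.symm) T (τ k)
    simp only [Equiv.symm_apply_apply] at this
    exact this
  have hdet : ∀ (τ : Equiv.Perm (Fin n)) (T : Fin n → ℝ), (Matrix.of fun i k => f i (T (τ k))).det =
      ((Equiv.Perm.sign τ : ℤ) : ℝ) * (Matrix.of fun i k => f i (T k)).det := by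
    intro τ T
    rw [← Matrix.det_permute']
    rfl
  have h2 : ∀ τ : Equiv.Perm (Fin n), 
      Integrable (fun T : Fin n → ℝ => ((Equiv.Perm.sign τ : ℤ) : ℝ) * (Matrix.of fun i k => f i (T k)).det * ∏ k, g k (T (τ k))) ∧
      ∫ T : Fin n → ℝ, (Matrix.of fun i k => f i (T k)).det * ∏ k, g k (T k)
      = ∫ T : Fin n → ℝ, ((Equiv.Perm.sign τ : ℤ) : ℝ) * (Matrix.of fun i k => f i (T k)).det * ∏ k, g k (T (τ k)) := by
    intro τ
    constructor
    · have := (hmp τ).integrable_comp_of_integrable hInt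
      simpa [Function.comp_def, happ, hdet] using this
    · rw [← (hmp τ).integral_comp']
      simp only [happ, hdet]
  have h3 : (Fintype.card (Equiv.Perm (Fin n)) : ℝ) * (Matrix.of fun i j => ∫ t, f i t * g j t).det
     = ∫ T : Fin n → ℝ, (Matrix.of fun i k => f i (T k)).det * (Matrix.of fun i k => g i (T k)).det := by
    have : ∀ T : Fin n → ℝ, (Matrix.of fun i k => f i (T k)).det * (Matrix.of fun i k => g i (T k)).det
      = ∑ τ : Equiv.Perm (Fin n), ((Equiv.Perm.sign τ : ℤ) : ℝ) * (Matrix.of fun i k => f i (T k)).det * ∏ k, g k (T (τ k)) := by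
      intro T
      rw [← Matrix.det_transpose (Matrix.of fun i k => g i (T k)), Matrix.det_apply' (Matrix.transpose _), Finset.mul_sum]
      refine Finset.sum_congr rfl fun σ _ => ?_
      simp only [Matrix.transpose_apply, Matrix.of_apply]
      ring
    simp_rw [this]
    rw [integral_finsetSum _ fun τ _ => (h2 τ).1]
    simp_rw [← fun τ => (h2 τ).2]
    rw [h1, Finset.sum_const, Finset.card_univ, nsmul_eq_mul]
  have h4 : 0 ≤ (Fintype.card (Equiv.Perm (Fin n)) : ℝ) * (Matrix.of fun i j => ∫ t, f i t * g j t).det := by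
    rw [h3]
    exact integral_nonneg fun T => det_mul_nonneg f g hf hg T
  exact nonneg_of_mul_nonneg_right h4 (by exact_mod_cast Fintype.card_pos)

lemma rot_pow_val (N k : ℕ) (i : Fin (N+1)) :
    ((((finRotate (N+1))^k) i : Fin (N+1)) : ℕ) = (i + k) % (N+1) := by
  induction k with
  | zero => simp [Nat.mod_eq_of_lt i.2]
  | succ k ih =>
    rw [pow_succ', Equiv.Perm.mul_apply, finRotate_apply, Fin.val_add, ih, Fin.val_one', ← Nat.add_mod, add_assoc]

/-- determinant of block structure -/
lemma det_blocks {m r : ℕ} (E : Matrix (Fin m) (Fin m) ℝ) (U1 : Matrix (Fin m) (Fin r) ℝ)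
    (U2 : Matrix (Fin r) (Fin r) ℝ) (V1 : Matrix (Fin r) (Fin m) ℝ) (V2 : Matrix (Fin r) (Fin r) ℝ) :
    (Matrix.fromBlocks (U1 * V1 + E) (U1 * V2) (U2 * V1) (U2 * V2)).det = E.det * (U2 * V2).det := by
  have : Matrix.fromBlocks (U1 * V1 + E) (U1 * V2) (U2 * V1) (U2 * V2)
      = Matrix.fromBlocks E U1 0 U2 * Matrix.fromBlocks 1 0 V1 V2 := by
    rw [Matrix.fromBlocks_multiply]; simp [add_comm]
  rw [this, Matrix.det_mul, Matrix.det_fromBlocks_zero₂₁, Matrix.det_fromBlocks_zero₁₂,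
    Matrix.det_mul]
  simp [mul_assoc]

lemma corner_sign {m n : ℕ} (K : ℝ → ℝ → ℝ)
    (hK : ∀ (n : ℕ) (x : Fin n → ℝ) (y : Fin n → ℝ), StrictMono x → StrictMono y →
    0 ≤ (Matrix.of fun i j : Fin n => K (x i) (y j)).det)
    (u : ℝ → Fin (n+1) → ℝ) (v : Fin (n+1) → ℝ → ℝ)
    (hF : ∀ x y, y ≤ x → K x y = ∑ k, u x k * v k y)
    (xs ys : Fin m → ℝ) (X Y : Fin (n+1) → ℝ) (hxs : StrictMono xs) (hys : StrictMono ys)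
    (hX : StrictMono X) (hY : StrictMono Y)
    (h1 : ∀ i j, Y i < xs j) (h2 : ∀ i j, xs i < ys j) (h3 : ∀ i j, ys i < X j)
    (h4 : ∀ i j, Y i < X j)
    (hu : (Matrix.of fun i k => u (X i) k).det ≠ 0) (hv : (Matrix.of fun k j => v k (Y j)).det ≠ 0) :
    0 ≤ (-1:ℝ)^((m+n)*(n+1)) *
      (Matrix.of fun i j => K (xs i) (ys j) - ∑ k, u (xs i) k * v k (ys j)).det := by
  set U2 := (Matrix.of fun i k => u (X i) k) with hU2
  set V2 := (Matrix.of fun k j => v k (Y j)) with hV2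
  set U1 := (Matrix.of fun i k => u (xs i) k) with hU1
  set V1 := (Matrix.of fun k j => v k (ys j)) with hV1
  set E := (Matrix.of fun i j => K (xs i) (ys j) - ∑ k, u (xs i) k * v k (ys j)) with hE
  have hD : 0 < (U2 * V2).det := by
    refine lt_of_le_of_ne ?_ (by rw [Matrix.det_mul]; exact (mul_ne_zero hu hv).symm)
    have := hK (n+1) X Y hX hY
    have hh : U2 * V2 = Matrix.of fun i j => K (X i) (Y j) := ?_
    · rw [hh]; exact this
    refine Matrix.ext fun i j => ?_
    simp [Matrix.mul_apply, hU2, hV2, ← hF _ _ (h4 j i).le]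
  have hx : StrictMono (fun i : Fin (m+n+1) => if h : (i:ℕ) < m then xs ⟨i, h⟩ else X ⟨i - m, by omega⟩) := by
    intro a b hab
    have hab' : (a:ℕ) < b := hab
    by_cases ha : (a:ℕ) < m <;> by_cases hb : (b:ℕ) < m
    · simp only [ha, hb, dif_pos]; exact hxs hab
    · simp only [ha, hb, dif_pos, dif_neg, not_false_eq_true]
      exact (h2 _ ⟨a, ha⟩).trans (h3 _ _)
    · omega
    · simp only [ha, hb, dif_neg, not_false_eq_true]
      apply hX
      simp only [Fin.mk_lt_mk]; omega
  have hy : StrictMono (fun i : Fin (m+n+1) => if h : (i:ℕ) < n+1 then Y ⟨i, h⟩ else ys ⟨i - (n+1), by omega⟩) := by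
    intro a b hab
    have hab' : (a:ℕ) < b := hab
    by_cases ha : (a:ℕ) < n+1 <;> by_cases hb : (b:ℕ) < n+1
    · simp only [ha, hb, dif_pos]; exact hY hab
    · simp only [ha, hb, dif_pos, dif_neg, not_false_eq_true]
      exact (h1 _ ⟨b - (n+1), by omega⟩).trans (h2 _ _)
    · omega
    · simp only [ha, hb, dif_neg, not_false_eq_true]
      apply hys
      simp only [Fin.mk_lt_mk]; omega
  have hdet := hK _ _ _ hx hy
  set A := (Matrix.of fun i j : Fin (m+n+1) => K ((fun i : Fin (m+n+1) => if h : (i:ℕ) < m then xs ⟨i, h⟩ else X ⟨i - m, by omega⟩) i) ((fun i : Fin (m+n+1) => if h : (i:ℕ) < n+1 then Y ⟨i, h⟩ else ys ⟨i - (n+1), by omega⟩) j)) with hA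
  have hperm := Matrix.det_permute' ((finRotate (m+n+1))^(n+1)) A
  have hsign : (((Equiv.Perm.sign ((finRotate (m+n+1))^(n+1)) : ℤˣ) : ℤ) : ℝ) = (-1:ℝ)^((m+n)*(n+1)) := by
    rw [map_pow, sign_finRotate]
    push_cast
    rw [← pow_mul]; try simp
  rw [hsign] at hperm
  let e : Fin m ⊕ Fin (n+1) ≃ Fin (m+n+1) := finSumFinEquiv
  have hblk : (A.submatrix id ((finRotate (m+n+1))^(n+1))).submatrix e e =
      Matrix.fromBlocks (U1 * V1 + E) (U1 * V2) (U2 * V1) (U2 * V2) := by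
    have el : ∀ i : Fin m, ((e (Sum.inl i) : Fin (m+n+1)) : ℕ) = i := fun i => by
      show ((finSumFinEquiv (Sum.inl i) : Fin (m+(n+1))) : ℕ) = i
      simp
    have er : ∀ i : Fin (n+1), ((e (Sum.inr i) : Fin (m+n+1)) : ℕ) = m + i := fun i => by
      show ((finSumFinEquiv (Sum.inr i) : Fin (m+(n+1))) : ℕ) = m + i
      simp
    have rl : ∀ i : Fin m, ((((finRotate (m+n+1))^(n+1)) (e (Sum.inl i)) : Fin (m+n+1)) : ℕ) = i + (n+1) := by
      intro i
      rw [rot_pow_val, el, Nat.mod_eq_of_lt (by omega)]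
    have rr : ∀ i : Fin (n+1), ((((finRotate (m+n+1))^(n+1)) (e (Sum.inr i)) : Fin (m+n+1)) : ℕ) = i := by
      intro i
      rw [rot_pow_val, er, show m + (i:ℕ) + (n+1) = i + (m+n+1) by ring, Nat.add_mod_right, Nat.mod_eq_of_lt (by omega)]
    have nn : ∀ j : Fin m, ¬ ((j:ℕ) + (n+1) ≤ n) := fun j => by omega
    have nm : ∀ j : Fin (n+1), (j:ℕ) ≤ n := fun j => by omega
    refine Matrix.ext fun i j => ?_
    rcases i with i | i <;> rcases j with j | j
    · simp [hA, Matrix.mul_apply, el, er, rl, rr, hU1, hU2, hV1, hV2, hE, nn, nm]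
    · simp [hA, Matrix.mul_apply, el, er, rl, rr, hU1, hU2, hV1, hV2, nn, nm, ← hF _ _ (h1 j i).le]
    · simp [hA, Matrix.mul_apply, el, er, rl, rr, hU1, hU2, hV1, hV2, nn, nm, ← hF _ _ (h3 j i).le]
    · simp [hA, Matrix.mul_apply, el, er, rl, rr, hU1, hU2, hV1, hV2, nn, nm, ← hF _ _ (h4 j i).le]
  have h5 : (A.submatrix id ((finRotate (m+n+1))^(n+1))).det = E.det * (U2 * V2).det := by
    rw [← det_blocks, ← hblk, Matrix.det_submatrix_equiv_self]
  have hs : (-1:ℝ)^((m+n)*(n+1)) * (-1:ℝ)^((m+n)*(n+1)) = 1 := by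
    rw [← mul_pow]; simp
  have h6 : 0 ≤ ((-1:ℝ)^((m+n)*(n+1)) * E.det) * (U2 * V2).det := by
    rw [mul_assoc, ← h5, hperm, ← mul_assoc, hs, one_mul]; exact hdet
  exact nonneg_of_mul_nonneg_left h6 hD

noncomputable def auxU (n : ℕ) (x : ℝ) (k : Fin (n+1)) : ℝ := (Real.exp (-x))^(2*n-(k:ℕ))
noncomputable def auxV (n : ℕ) (k : Fin (n+1)) (y : ℝ) : ℝ :=
  ((n.choose k : ℝ) * 2^(k:ℕ) * (-1)^(n-(k:ℕ))) * (Real.exp y)^(2*n-(k:ℕ))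

lemma aux_sum (n : ℕ) (x y : ℝ) : ∑ k, auxU n x k * auxV n k y =
    (2 * Real.exp (y - x) - Real.exp (2 * (y - x)))^n := by
  rw [sub_eq_add_neg (2 * Real.exp (y-x)), add_pow,
    ← Fin.sum_univ_eq_sum_range (fun k => (2 * Real.exp (y - x))^k * (-Real.exp (2*(y-x)))^(n-k) * (n.choose k : ℝ))]
  refine Finset.sum_congr rfl fun k _ => ?_
  have hk : (k:ℕ) ≤ n := by omega
  have e1 : Real.exp (2*(y-x)) = Real.exp (y-x)^2 := by rw [← Real.exp_nat_mul]; norm_num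
  have e2 : Real.exp (y-x) = Real.exp (-x) * Real.exp y := by rw [← Real.exp_add]; ring_nf
  have e3 : 2*n-(k:ℕ) = k + 2*(n-k) := by omega
  rw [e1, e2, auxU, auxV, e3, neg_pow (_ ^ 2)]
  ring

lemma auxU_det (n : ℕ) : (Matrix.of fun i k : Fin (n+1) => auxU n (10 + (i:ℕ)) k).det ≠ 0 := by
  have h : (Matrix.of fun i k : Fin (n+1) => auxU n (10 + (i:ℕ)) k)
     = Matrix.of fun i k : Fin (n+1) => (Real.exp (-10))^(2*n-(k:ℕ)) *
       (Matrix.vandermonde (fun k : Fin (n+1) => Real.exp (-1)^(2*n-(k:ℕ)))).transpose i k := by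
    refine Matrix.ext fun i k => ?_
    simp only [Matrix.of_apply, auxU, Matrix.transpose_apply, Matrix.vandermonde_apply]
    rw [← pow_mul, mul_comm (2*n-(k:ℕ)) (i:ℕ), pow_mul, ← mul_pow, ← Real.exp_nat_mul (-1), ← Real.exp_add]
    congr 2
    ring
  rw [h, Matrix.det_mul_row, Matrix.det_transpose]
  refine mul_ne_zero (Finset.prod_ne_zero_iff.2 fun k _ => by positivity) ?_
  rw [Matrix.det_vandermonde_ne_zero_iff]
  intro a b hab
  simp only [← Real.exp_nat_mul, Real.exp_eq_exp] at hab
  have h2 : ((2*n-(a:ℕ) : ℕ) : ℝ) = ((2*n-(b:ℕ) : ℕ) : ℝ) := by linarith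
  have h3 : 2*n-(a:ℕ) = 2*n-(b:ℕ) := by exact_mod_cast h2
  ext; omega

lemma auxV_det (n : ℕ) : (Matrix.of fun k j : Fin (n+1) => auxV n k ((j:ℕ) - (n+1:ℝ))).det ≠ 0 := by
  have h : (Matrix.of fun k j : Fin (n+1) => auxV n k ((j:ℕ) - (n+1:ℝ)))
     = Matrix.of fun k j : Fin (n+1) => (((n.choose k : ℝ) * 2^(k:ℕ) * (-1)^(n-(k:ℕ))) * (Real.exp (-(n+1)))^(2*n-(k:ℕ))) *
       (Matrix.vandermonde (fun k : Fin (n+1) => Real.exp 1^(2*n-(k:ℕ)))) k j := by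
    refine Matrix.ext fun k i => ?_
    simp only [Matrix.of_apply, auxV, Matrix.vandermonde_apply]
    rw [← pow_mul, mul_comm (2*n-(k:ℕ)) (i:ℕ), pow_mul, mul_assoc _ (Real.exp _ ^ _) (_ ^ _), ← mul_pow, ← Real.exp_nat_mul 1, ← Real.exp_add]
    congr 3
    ring
  rw [h, Matrix.det_mul_column]
  refine mul_ne_zero (Finset.prod_ne_zero_iff.2 fun k _ => ?_) ?_
  · have hk : (k:ℕ) ≤ n := by omega
    have : (n.choose k : ℝ) ≠ 0 := by exact_mod_cast (Nat.choose_pos hk).ne'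
    have h2 : ((-1:ℝ))^(n-(k:ℕ)) ≠ 0 := pow_ne_zero _ (by norm_num)
    have h3 : (Real.exp (-(n+1)))^(2*n-(k:ℕ)) ≠ 0 := by positivity
    exact mul_ne_zero (mul_ne_zero (mul_ne_zero this (by positivity)) h2) h3
  rw [Matrix.det_vandermonde_ne_zero_iff]
  intro a b hab
  simp only [← Real.exp_nat_mul, Real.exp_eq_exp] at hab
  have h2 : ((2*n-(a:ℕ) : ℕ) : ℝ) = ((2*n-(b:ℕ) : ℕ) : ℝ) := by linarith
  have h3 : 2*n-(a:ℕ) = 2*n-(b:ℕ) := by exact_mod_cast h2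
  ext; omega

lemma not_tn (n : ℕ) (hn : 2 ≤ n)
    (hK : ∀ (N : ℕ) (x : Fin N → ℝ) (y : Fin N → ℝ), StrictMono x → StrictMono y →
    0 ≤ (Matrix.of fun i j : Fin N => (2 * Real.exp (-|x i - y j|) - Real.exp (-(2 * |x i - y j|)))^n).det) :
    False := by
  have hF : ∀ x y : ℝ, y ≤ x → (2 * Real.exp (-|x - y|) - Real.exp (-(2 * |x - y|)))^n
      = ∑ k, auxU n x k * auxV n k y := by
    intro x y h
    rw [aux_sum, abs_of_nonneg (sub_nonneg.2 h)]
    congr 4 <;> ring_nf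
  have hX : StrictMono (fun i : Fin (n+1) => (10:ℝ) + (i:ℕ)) := by
    intro a b hab
    have : ((a:ℕ):ℝ) < (b:ℕ) := by exact_mod_cast hab
    simpa using this
  have hY : StrictMono (fun i : Fin (n+1) => ((i:ℕ):ℝ) - (n+1:ℝ)) := by
    intro a b hab
    have : ((a:ℕ):ℝ) < (b:ℕ) := by exact_mod_cast hab
    simpa using this
  have hY0 : ∀ i : Fin (n+1), ((i:ℕ):ℝ) - (n+1:ℝ) < 0 := by
    intro i
    have : ((i:ℕ):ℝ) < ((n+1 : ℕ) : ℝ) := by exact_mod_cast i.2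
    push_cast at this; linarith
  have hX0 : ∀ i : Fin (n+1), (10:ℝ) ≤ 10 + (i:ℕ) := by
    intro i
    have : (0:ℝ) ≤ (i:ℕ) := by positivity
    linarith
  have key := fun (m : ℕ) (xs ys : Fin m → ℝ) hxs hys h1 h2 h3 =>
    corner_sign (m := m) (n := n) (fun x y => (2 * Real.exp (-|x - y|) - Real.exp (-(2 * |x - y|)))^n)
      hK (auxU n) (auxV n) hF xs ys _ _ hxs hys hX hY h1 h2 h3
      (fun i j => (hY0 i).trans_le (le_trans (by norm_num) (hX0 j))) (auxU_det n) (auxV_det n)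
  have hE : ∀ (x y w : ℝ), x < y → 0 < w → y - x = Real.log w →
      (2 * Real.exp (-|x - y|) - Real.exp (-(2 * |x - y|)))^n - ∑ k, auxU n x k * auxV n k y
      = (2 * w⁻¹ - (w⁻¹)^2)^n - (2 * w - w^2)^n := by
    intro x y w hxy hw h
    rw [aux_sum, abs_of_neg (sub_neg.2 hxy), neg_neg, mul_neg, neg_neg]
    have e1 : Real.exp (y - x) = w := by rw [h, Real.exp_log hw]
    have e2 : Real.exp (x - y) = w⁻¹ := by rw [← e1, ← Real.exp_neg]; congr 1; ring
    have e3 : Real.exp (2*(y - x)) = w^2 := by rw [← e1, ← Real.exp_nat_mul]; norm_num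
    have e4 : Real.exp (2*(x - y)) = (w⁻¹)^2 := by rw [← e2, ← Real.exp_nat_mul]; norm_num
    rw [e1, e2, e3, e4]
  have l2 : 0 < Real.log 2 := Real.log_pos (by norm_num)
  have l98 : 0 < Real.log (9/8) := Real.log_pos (by norm_num)
  have l2' : Real.log 2 < 1 := (Real.log_lt_sub_one_of_pos (by norm_num) (by norm_num)).trans_le (by norm_num)
  have l98' : Real.log (9/8) < 1 := (Real.log_lt_sub_one_of_pos (by norm_num) (by norm_num)).trans_le (by norm_num)
  rcases Nat.even_or_odd n with he | ho
  · have := key 1 (fun _ => 0) (fun _ => Real.log 2) (Subsingleton.strictMono _)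
      (Subsingleton.strictMono _) (fun i _ => hY0 i) (fun _ _ => l2) (fun _ j => by have := hX0 j; linarith)
    have hodd : Odd ((1+n)*(n+1)) := by
      have : Odd (n+1) := he.add_one
      rw [add_comm 1 n]; exact this.mul this
    rw [hodd.neg_one_pow, Matrix.det_unique, Matrix.of_apply, hE 0 (Real.log 2) 2 l2 (by norm_num) (by ring)] at this
    norm_num at this
    rw [zero_pow (by omega)] at this
    have h3 : (0:ℝ) < (3/4)^n := by positivity
    linarith
  · have hn3 : 3 ≤ n := by
      rcases ho with ⟨k, hk⟩; omega
    have l94 : Real.log (9/4) = Real.log 2 + Real.log (9/8) := by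
      rw [← Real.log_mul (by norm_num) (by norm_num)]; norm_num
    have l8132 : Real.log (81/32) = Real.log 2 + Real.log (9/8) + Real.log (9/8) := by
      rw [← l94, ← Real.log_mul (by norm_num) (by norm_num)]; norm_num
    have := key 2 ![0, Real.log (9/8)] ![Real.log 2 + Real.log (9/8), Real.log 2 + Real.log (9/8) + Real.log (9/8)]
      (by intro a b hab; fin_cases a <;> fin_cases b <;> simp_all)
      (by intro a b hab; fin_cases a <;> fin_cases b <;> simp_all)
      (by intro i b; have := hY0 i; fin_cases b <;> simp <;> linarith)
      (by intro a b; fin_cases a <;> fin_cases b <;> simp <;> linarith)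
      (by intro a j; have := hX0 j; fin_cases a <;> simp only [Fin.zero_eta, Fin.mk_one, Matrix.cons_val_zero, Matrix.cons_val_one] <;> linarith)
    have hev : Even ((2+n)*(n+1)) := (ho.add_one).mul_left _
    rw [hev.neg_one_pow, one_mul, Matrix.det_fin_two] at this
    simp only [Matrix.of_apply, Matrix.cons_val_zero, Matrix.cons_val_one] at this
    rw [hE 0 (Real.log 2 + Real.log (9/8)) (9/4) (by linarith) (by norm_num) (by linarith),
      hE (Real.log (9/8)) (Real.log 2 + Real.log (9/8) + Real.log (9/8)) (9/4) (by linarith) (by norm_num) (by linarith),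
      hE 0 (Real.log 2 + Real.log (9/8) + Real.log (9/8)) (81/32) (by linarith) (by norm_num) (by linarith),
      hE (Real.log (9/8)) (Real.log 2 + Real.log (9/8)) 2 (by linarith) (by norm_num) (by linarith)] at this
    norm_num at this
    rw [zero_pow (by omega), ho.neg_pow, ho.neg_pow] at this
    have a1 : (9/16:ℝ)^n ≤ (56/81)^n := pow_le_pow_left₀ (by norm_num) (by norm_num) n
    have a0 : (0:ℝ) < (9/16)^n := by positivity
    have a2 : ((56/81:ℝ)^n) * ((56/81:ℝ)^n) ≤ (1/2)^n := by
      rw [← mul_pow]; exact pow_le_pow_left₀ (by norm_num) (by norm_num) n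
    have a3 : (1/2:ℝ)^n ≤ (1/2)^3 := pow_le_pow_of_le_one (by norm_num) (by norm_num) hn3
    have a4 : (1:ℝ) ≤ (1377/1024)^n * (3/4)^n := by
      rw [← mul_pow]; exact one_le_pow₀ (by norm_num)
    have a5 : (0:ℝ) < (3/4)^n := by positivity
    have a6 : (0:ℝ) < (4160/6561)^n := by positivity
    have a7 : (0:ℝ) < (56/81)^n := by positivity
    nlinarith [mul_pos a6 a5, mul_le_mul a1 a1 a0.le a7.le, mul_le_mul_of_nonneg_left a1 a7.le]

noncomputable def kA (a x t : ℝ) : ℝ := if t ≤ x then Real.exp (-(a*(x-t))) else 0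
noncomputable def kB (x t : ℝ) : ℝ :=
  if t ≤ x then Real.exp (-(x-t)) - Real.exp (-(2*(x-t))) else 0

lemma kA_tn (a : ℝ) (n : ℕ) (x y : Fin n → ℝ) (hx : StrictMono x) (hy : StrictMono y) :
    0 ≤ (Matrix.of fun i j : Fin n => kA a (x i) (y j)).det := by
  have h : (Matrix.of fun i j : Fin n => kA a (x i) (y j)) =
      Matrix.of fun i j : Fin n => Real.exp (-(a * x i)) *
        (Matrix.of fun i j : Fin n => Real.exp (a * y j) *
          (Matrix.of fun i j : Fin n => if y j ≤ x i then (1:ℝ) else 0) i j) i j := by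
    refine Matrix.ext fun i j => ?_
    simp only [Matrix.of_apply, kA]
    split_ifs
    · rw [mul_one, ← Real.exp_add]; congr 1; ring
    · simp
  rw [h, Matrix.det_mul_column, Matrix.det_mul_row]
  have := tn_step n x y hx.monotone hy.monotone
  have h1 : 0 ≤ ∏ i, Real.exp (-(a * x i)) := Finset.prod_nonneg fun i _ => (Real.exp_pos _).le
  have h2 : 0 ≤ ∏ i, Real.exp (a * y i) := Finset.prod_nonneg fun i _ => (Real.exp_pos _).le
  positivity

lemma kAA (x y : ℝ) : Integrable (fun t => kA 1 x t * kA 2 t y) ∧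
    ∫ t, kA 1 x t * kA 2 t y = kB x y := by
  have h : (fun t => kA 1 x t * kA 2 t y) =
      (Set.Icc y x).indicator (fun t => Real.exp (2*y-x) * Real.exp (-t)) := by
    funext t
    by_cases h1 : t ≤ x <;> by_cases h2 : y ≤ t <;> simp [kA, h1, h2, Set.indicator, ← Real.exp_add]
    ring
  have hi : IntegrableOn (fun t => Real.exp (2*y-x) * Real.exp (-t)) (Set.Icc y x) :=
    (by fun_prop : Continuous (fun t => Real.exp (2*y-x) * Real.exp (-t))).integrableOn_Icc
  rw [h]
  refine ⟨(integrable_indicator_iff measurableSet_Icc).2 hi, ?_⟩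
  rw [integral_indicator measurableSet_Icc, integral_const_mul, kB]
  split_ifs with hxy
  · rw [integral_Icc_eq_integral_Ioc, ← intervalIntegral.integral_of_le hxy]
    have : ∫ t in y..x, Real.exp (-t) = Real.exp (-y) - Real.exp (-x) := by
      rw [intervalIntegral.integral_comp_neg (fun t => Real.exp t), integral_exp]
    rw [this, mul_sub, ← Real.exp_add, ← Real.exp_add]
    congr 2 <;> ring
  · rw [Set.Icc_eq_empty hxy]; simp

lemma kB_tn (n : ℕ) (x y : Fin n → ℝ) (hx : StrictMono x) (hy : StrictMono y) :
    0 ≤ (Matrix.of fun i j : Fin n => kB (x i) (y j)).det := by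
  have := andreief_nonneg (fun i t => kA 1 (x i) t) (fun j t => kA 2 t (y j))
    (fun i j => (kAA _ _).1) (fun t ht => kA_tn 1 n x t hx ht)
    (fun t ht => by
      rw [← Matrix.det_transpose]
      exact kA_tn 2 n t y ht hy)
  simp_rw [fun a b => (kAA a b).2] at this
  exact this

lemma kBB_le (x y : ℝ) (hxy : x ≤ y) : Integrable (fun t => kB x t * kB y t) ∧
    ∫ t, kB x t * kB y t = (2 * Real.exp (-(y-x)) - Real.exp (-(2*(y-x)))) * (1/12) := by
  have h : (fun t => kB x t * kB y t) =
      (Set.Iic x).indicator (fun t => Real.exp (-x-y) * Real.exp (2*t)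
        - (Real.exp (-x-2*y) + Real.exp (-2*x-y)) * Real.exp (3*t) 
        + Real.exp (-2*x-2*y) * Real.exp (4*t)) := by
    funext t
    by_cases h1 : t ≤ x
    · have h2 := h1.trans hxy
      simp only [kB, h1, h2, Set.indicator, Set.mem_Iic, if_true, sub_mul, mul_sub, add_mul, ← Real.exp_add]
      ring_nf
    · simp [kB, h1]
  have i2 := integrableOn_exp_mul_Iic (a := 2) (by norm_num) x
  have i3 := integrableOn_exp_mul_Iic (a := 3) (by norm_num) x
  have i4 := integrableOn_exp_mul_Iic (a := 4) (by norm_num) x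
  have j2 := i2.const_mul (Real.exp (-x-y))
  have j3 := i3.const_mul (Real.exp (-x-2*y) + Real.exp (-2*x-y))
  have j4 := i4.const_mul (Real.exp (-2*x-2*y))
  rw [h]
  refine ⟨(integrable_indicator_iff measurableSet_Iic).2 ((j2.sub j3).add j4), ?_⟩
  rw [integral_indicator measurableSet_Iic]
  rw [integral_add (by exact j2.sub j3) j4, integral_sub j2 j3]
  simp only [integral_const_mul]
  rw [integral_exp_mul_Iic (by norm_num), integral_exp_mul_Iic (by norm_num),
    integral_exp_mul_Iic (by norm_num)]
  have e1 : Real.exp (-x-y) * Real.exp (2*x) = Real.exp (-(y-x)) := by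
    rw [← Real.exp_add]; ring_nf
  have e2 : Real.exp (-x-2*y) * Real.exp (3*x) = Real.exp (-(2*(y-x))) := by
    rw [← Real.exp_add]; ring_nf
  have e3 : Real.exp (-2*x-y) * Real.exp (3*x) = Real.exp (-(y-x)) := by
    rw [← Real.exp_add]; ring_nf
  have e4 : Real.exp (-2*x-2*y) * Real.exp (4*x) = Real.exp (-(2*(y-x))) := by
    rw [← Real.exp_add]; ring_nf
  linear_combination (1/2) * e1 - (1/3) * e2 - (1/3) * e3 + (1/4) * e4

lemma kBB (x y : ℝ) : Integrable (fun t => kB x t * kB y t) ∧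
    ∫ t, kB x t * kB y t = (1/12) * (2 * Real.exp (-|x-y|) - Real.exp (-(2*|x-y|))) := by
  rcases le_total x y with h | h
  · have := kBB_le x y h
    rw [abs_of_nonpos (sub_nonpos.2 h), neg_sub, mul_comm (1/12:ℝ)]
    exact this
  · have := kBB_le y x h
    rw [abs_of_nonneg (sub_nonneg.2 h), mul_comm (1/12:ℝ)]
    simp_rw [mul_comm (kB x _)]
    exact this

lemma M_tn (n : ℕ) (x y : Fin n → ℝ) (hx : StrictMono x) (hy : StrictMono y) :
    0 ≤ (Matrix.of fun i j : Fin n => 2 * Real.exp (-|x i - y j|) - Real.exp (-(2 * |x i - y j|))).det := by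
  have := andreief_nonneg (fun i t => kB (x i) t) (fun j t => kB (y j) t)
    (fun i j => (kBB _ _).1) (fun t ht => kB_tn n x t hx ht) (fun t ht => kB_tn n y t hy ht)
  simp_rw [fun a b => (kBB a b).2] at this
  have h := Matrix.det_mul_column (fun _ : Fin n => (1/12:ℝ))
    (Matrix.of fun i j : Fin n => 2 * Real.exp (-|x i - y j|) - Real.exp (-(2 * |x i - y j|)))
  simp only [Matrix.of_apply] at h
  rw [h] at this
  exact nonneg_of_mul_nonneg_right this (Finset.prod_pos fun _ _ => by norm_num)

lemma M_anti : StrictAntiOn (fun x : ℝ => 2 * Real.exp (-|x|) - Real.exp (-(2 * |x|))) (Set.Ici 0) := by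
  intro a ha b hb hab
  simp only [Set.mem_Ici] at ha hb
  simp only [abs_of_nonneg ha, abs_of_nonneg hb]
  have e : ∀ x : ℝ, Real.exp (-(2*x)) = Real.exp (-x)^2 := fun x => by
    rw [← Real.exp_nat_mul]; congr 1; push_cast; ring
  rw [e, e]
  have h1 : Real.exp (-b) < Real.exp (-a) := Real.exp_lt_exp.2 (by linarith)
  have h2 : Real.exp (-a) ≤ 1 := Real.exp_le_one_iff.2 (by linarith)
  nlinarith

lemma M_pos (x : ℝ) : 0 < 2 * Real.exp (-|x|) - Real.exp (-(2 * |x|)) := by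
  have h1 : Real.exp (-(2 * |x|)) ≤ Real.exp (-|x|) := Real.exp_le_exp.2 (by linarith [abs_nonneg x])
  linarith [Real.exp_pos (-|x|)]

lemma exp_abs_int (a : ℝ) (ha : 0 < a) : Integrable (fun x : ℝ => Real.exp (-(a * |x|))) := by
  rw [← integrableOn_univ, ← Set.Iic_union_Ioi (a := (0:ℝ)), integrableOn_union]
  constructor
  · refine (integrableOn_exp_mul_Iic ha 0).congr_fun (fun x hx => ?_) measurableSet_Iic
    simp only [Set.mem_Iic] at hx
    simp [abs_of_nonpos hx]
  · refine (integrableOn_exp_mul_Ioi (a := -a) (by linarith) 0).congr_fun (fun x hx => ?_) measurableSet_Ioi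
    simp only [Set.mem_Ioi] at hx
    simp [abs_of_pos hx]


theorem stmt_13 :
    IsPolyaFrequencyFunction (fun x => 2 * Real.exp (-|x|) - Real.exp (-(2 * |x|))) ∧
    (∀ x : ℝ, 2 * Real.exp (-|(-x)|) - Real.exp (-(2 * |(-x)|)) =
      2 * Real.exp (-|x|) - Real.exp (-(2 * |x|))) ∧
    Continuous (fun x : ℝ => 2 * Real.exp (-|x|) - Real.exp (-(2 * |x|))) ∧
    (∀ x : ℝ, 2 * Real.exp (-|x|) - Real.exp (-(2 * |x|)) ≠ 0) ∧
    StrictMonoOn (fun x : ℝ => 2 * Real.exp (-|x|) - Real.exp (-(2 * |x|)))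
      (Set.Iic 0) ∧
    StrictAntiOn (fun x : ℝ => 2 * Real.exp (-|x|) - Real.exp (-(2 * |x|)))
      (Set.Ici 0) ∧
    (∀ n : ℕ, 2 ≤ n →
      ¬ IsPolyaFrequencyFunction
          fun x => (2 * Real.exp (-|x|) - Real.exp (-(2 * |x|))) ^ n) := by
  refine ⟨⟨?_, fun x => (M_pos x).le, ⟨0, 1, by norm_num, (M_pos 0).ne', (M_pos 1).ne'⟩, ?_⟩,
    fun x => by rw [abs_neg], by fun_prop, fun x => (M_pos x).ne', ?_, M_anti, ?_⟩
  · have h1 := (exp_abs_int 1 one_pos).const_mul 2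
    have h2 := exp_abs_int 2 two_pos
    simp only [one_mul] at h1
    exact h1.sub h2
  · intro n x y hx hy
    exact M_tn n x y hx hy
  · intro a ha b hb hab
    simp only [Set.mem_Iic] at ha hb
    have := M_anti (a := -b) (by simpa using hb) (b := -a) (by simpa using ha) (by linarith)
    simpa only [abs_neg] using this
  · intro n hn h
    exact not_tn n hn fun N x y hx hy => h.2.2.2 N x y hx hy
end
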